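/- Let (M,J) be an almost complex manifold with hermitian metric ω, Ω ⊂ M open, and let u be J-plurisubharmonic on Ω with u ∈ W^{1,2}_loc(Ω). If a sequence (u_j) of J-plurisubharmonic functions on Ω decreases pointwise to u, then u_j converges to u in W^{1,2}_loc(Ω). -/

import Mathlib

/-!
The convergence rests on a Caccioppoli inequality for `W = u_j - u ≥ 0`. For constant `J`, if `X`
is a constant real direction, the complex line spanned by `X` and `JX` carries a Laplacian `Δ`, and
`∫ ψ² W ΔU ≥ 0` for `U = u_j` psh; summation by parts together with `U = W + u` bounds
`∫ |X(ψW)|²` by `‖W‖²_{L²}` plus a term involving `u` only. As `u ∈ W^{1,2}`, it is smooth up to a small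
error `τ` in `W^{1,2}`, and for the smooth part the term is at most `C ∫ ψ² W`. All this tends to zero
since `W` decreases to zero. Everything is done with translation differences, so that no a priori
regularity of `u_j` is used: `energy_translate` is the inequality for one translation, `average_nonneg`
the positivity coming from the sub-mean value property, `core_bound` the resulting dual estimate
`|∫ ψ W ∂_v φ| ≤ θ ‖φ‖_{L²}`, and `core_rate` the statement that `θ → 0` along the sequence.

For a general `J` constant complex lines are replaced by the discs of an adapted chart: near each point
`p` and for each `v ≠ 0` there is a chart `Φ` mapping the affine planes parallel to `span (v, J_p v)` to
`J`-holomorphic curves (`exists_chart`), so that `u ∘ Φ` satisfies the sub-mean value inequality on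
ellipses in these planes (`submean_chart`). To construct it, let `J₀ = J p`, `T` the Cauchy operator,
which inverts `∂/∂x + J₀ ∂/∂y` up to a constant `c` and a smoothing term, and `R = T ∂/∂y`, bounded on
`C^{1/2}`. A disc `p + δ (z v + s + μ)` with `μ = T ν / c` is holomorphic where the density solves
`ν = (J₀ - J)(J₀ v + R ν / c)`; for small `δ` this equation is solved in the Hölder space `Hol` by the
inverse function theorem, because superposition operators are smooth there (`contDiff_nem`). Including
a translation of `z` among the parameters makes the solution smooth in `z` and in the parameters at the
same time (`exists_density`, `exists_corr`).

The fields `X_i = Φ_* e_i` of `2n` such charts form a frame near `p`, whence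
`|∫ (u_j - u) ∂_a φ| ≤ θ_j ‖φ‖_{L²}` with `θ_j → 0` for all test functions `φ` supported near `p`
(`DecData.local_est`). By Riesz representation (`riesz_test`) and a partition of unity (`glue`) the weak
derivatives of `u_j - u` exist and tend to zero in `L²_loc`; convergence of the functions themselves is
dominated convergence.
-/

open MeasureTheory Metric Filter Topology Set
open scoped Classical

noncomputable section

/-- `ℝ^{2n}`, the model space of an almost complex manifold of complex dimension `n`. -/
abbrev ESp (n : ℕ) : Type := EuclideanSpace ℝ (Fin (2 * n))

/-- The standard basis vectors of `ℝ^{2n}`. -/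
def sb (n : ℕ) (i : Fin (2 * n)) : ESp n := EuclideanSpace.single i (1 : ℝ)

/-- An almost complex structure on a set `M ⊆ ℝ^{2n}`:
a smooth field of endomorphisms of the tangent bundle squaring to `-id`. -/
structure ACStruct (n : ℕ) (M : Set (ESp n)) : Type where
  J : ESp n → ESp n →L[ℝ] ESp n
  smooth : ContDiffOn ℝ (⊤ : ℕ∞) J M
  sq : ∀ x ∈ M, ∀ v : ESp n, J x (J x v) = -v

/-- The open unit disc in `ℂ`. -/
def unitDisc : Set ℂ := Metric.ball 0 1

/-- Average of `f` over the circle of radius `r` centred at `c`. -/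
def circAvg (f : ℂ → ℝ) (c : ℂ) (r : ℝ) : ℝ :=
  (2 * Real.pi)⁻¹ * ∫ t in (0:ℝ)..(2 * Real.pi), f (c + r * Complex.exp (t * Complex.I))

/-- Subharmonicity on a set `U ⊆ ℂ`: upper semicontinuity together with
the sub-mean value inequality on discs contained in `U`. -/
structure SubhOn (f : ℂ → ℝ) (U : Set ℂ) : Prop where
  usc : UpperSemicontinuousOn f U
  submean : ∀ c r, 0 < r → Metric.closedBall c r ⊆ U → f c ≤ circAvg f c r

/-- A `J`-holomorphic disc in `M`: smooth on the unit disc, mapping the unit disc into `M`,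
and satisfying `λ'(∂/∂z̄) ∈ T^{0,1}M`, i.e. `∂λ/∂y = J(λ)(∂λ/∂x)`. -/
structure IsJHoloDisc {n : ℕ} {M : Set (ESp n)} (S : ACStruct n M) (lam : ℂ → ESp n) : Prop where
  smooth : ∀ z ∈ unitDisc, ContDiffAt ℝ (⊤ : ℕ∞) lam z
  maps : Set.MapsTo lam unitDisc M
  CR : ∀ z ∈ unitDisc, fderiv ℝ lam z Complex.I = S.J (lam z) (fderiv ℝ lam z 1)

/-- `J`-plurisubharmonicity on `Ω`: upper semicontinuous on `Ω`, and subharmonic along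
every `J`-holomorphic disc with image in `Ω`. -/
def JPsh {n : ℕ} {M : Set (ESp n)} (S : ACStruct n M) (Ω : Set (ESp n)) (u : ESp n → ℝ) : Prop :=
  UpperSemicontinuousOn u Ω ∧
  ∀ lam : ℂ → ESp n, IsJHoloDisc S lam → Set.MapsTo lam unitDisc Ω →
    SubhOn (fun z => u (lam z)) unitDisc

/-- Strict `J`-plurisubharmonicity on `Ω`: `u` is `J`-plurisubharmonic, and for every
`D ⋐ Ω` and every `C²` function `φ` on a neighbourhood of `D̄` there is `ε > 0` with
`u + εφ` `J`-plurisubharmonic on `D`. -/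
def StrictJPsh {n : ℕ} {M : Set (ESp n)} (S : ACStruct n M) (Ω : Set (ESp n))
    (u : ESp n → ℝ) : Prop :=
  JPsh S Ω u ∧
  ∀ D : Set (ESp n), IsOpen D → closure D ⊆ Ω → IsCompact (closure D) →
    ∀ φ : ESp n → ℝ,
      (∃ V : Set (ESp n), IsOpen V ∧ closure D ⊆ V ∧ ContDiffOn ℝ 2 φ V) →
      ∃ ε : ℝ, 0 < ε ∧ JPsh S D (fun x => u x + ε * φ x)

/-- `g` is a weak (distributional) gradient of `u` on the open set `Ω ⊆ ℝ^{2n}`. -/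
def HasWeakGradOn {n : ℕ} (u : ESp n → ℝ) (g : ESp n → ESp n) (Ω : Set (ESp n)) : Prop :=
  LocallyIntegrableOn u Ω volume ∧ LocallyIntegrableOn g Ω volume ∧
  ∀ φ : ESp n → ℝ, ContDiff ℝ (⊤ : ℕ∞) φ → HasCompactSupport φ → tsupport φ ⊆ Ω →
    ∀ i : Fin (2 * n),
      (∫ x in Ω, u x * fderiv ℝ φ x (sb n i)) = -∫ x in Ω, φ x * g x i

/-- `u` belongs to the local Sobolev space `W^{1,2}_loc(Ω)`. -/
def MemW12loc {n : ℕ} (u : ESp n → ℝ) (Ω : Set (ESp n)) : Prop :=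
  ∃ g : ESp n → ESp n, HasWeakGradOn u g Ω ∧
    ∀ K : Set (ESp n), K ⊆ Ω → IsCompact K →
      IntegrableOn (fun x => (u x) ^ 2 + ‖g x‖ ^ 2) K volume

/-- The square of the `W^{1,2}` norm of `u` (with weak gradient `g`) on `A`. -/
def W12normSq {n : ℕ} (u : ESp n → ℝ) (g : ESp n → ESp n) (A : Set (ESp n)) : ℝ :=
  ∫ x in A, ((u x) ^ 2 + ‖g x‖ ^ 2)

set_option linter.unusedSectionVars false

/-! ### Hölder spaces -/

/-- The closed subspace of `ℓ^∞(V ⊕ V × V, E)` formed by the pairs (values, Hölder quotients) of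
bounded `1/2`-Hölder maps `V → E`.  The norm is the maximum of the sup norm and of the Hölder
constant; the quotient is set to `0` on the diagonal. -/
def holSub (V E : Type) [NormedAddCommGroup V] [NormedAddCommGroup E] [NormedSpace ℝ E] :
    Submodule ℝ (lp (fun _ : V ⊕ V × V => E) ⊤) where
  carrier := {F | (∀ x y, Real.sqrt ‖x - y‖ • F (Sum.inr (x, y)) = F (Sum.inl x) - F (Sum.inl y)) ∧
    ∀ x, F (Sum.inr (x, x)) = 0}
  add_mem' := by
    rintro F G ⟨h1, h2⟩ ⟨h3, h4⟩
    refine ⟨fun x y => ?_, fun x => ?_⟩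
    · simp only [lp.coeFn_add, Pi.add_apply, smul_add, h1, h3]; abel
    · simp [h2, h4]
  zero_mem' := by constructor <;> intros <;> simp
  smul_mem' := by
    rintro c F ⟨h1, h2⟩
    refine ⟨fun x y => ?_, fun x => ?_⟩
    · simp only [lp.coeFn_smul, Pi.smul_apply]; rw [smul_comm, h1, smul_sub]
    · simp [h2]

/-- Bounded `1/2`-Hölder maps `V → E`, as a Banach space. -/
def Hol (V E : Type) [NormedAddCommGroup V] [NormedAddCommGroup E] [NormedSpace ℝ E] : Type :=
  ↥(holSub V E)

instance {V E : Type} [NormedAddCommGroup V] [NormedAddCommGroup E] [NormedSpace ℝ E] :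
    NormedAddCommGroup (Hol V E) := inferInstanceAs (NormedAddCommGroup ↥(holSub V E))

instance {V E : Type} [NormedAddCommGroup V] [NormedAddCommGroup E] [NormedSpace ℝ E] :
    NormedSpace ℝ (Hol V E) := inferInstanceAs (NormedSpace ℝ ↥(holSub V E))

section Hol

variable {V E F : Type} [NormedAddCommGroup V] [NormedAddCommGroup E] [NormedSpace ℝ E]
  [NormedAddCommGroup F] [NormedSpace ℝ F]

theorem holSub_isClosed : IsClosed ((holSub V E : Submodule ℝ _) : Set (lp (fun _ : V ⊕ V × V => E) ⊤)) := by
  have hc : ∀ i, Continuous fun F : lp (fun _ : V ⊕ V × V => E) ⊤ => F i := fun i =>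
    (lp.lipschitzWith_one_eval ⊤ i).continuous
  have : ((holSub V E : Submodule ℝ _) : Set (lp (fun _ : V ⊕ V × V => E) ⊤)) =
      (⋂ x, ⋂ y, {F | Real.sqrt ‖x - y‖ • F (Sum.inr (x, y)) = F (Sum.inl x) - F (Sum.inl y)}) ∩
      ⋂ x, {F | F (Sum.inr (x, x)) = 0} := by
    ext F; simp [holSub]
  rw [this]
  refine IsClosed.inter (isClosed_iInter fun x => isClosed_iInter fun y => ?_)
    (isClosed_iInter fun x => ?_)
  · exact isClosed_eq ((hc _).const_smul _) ((hc _).sub (hc _))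
  · exact isClosed_eq (hc _) continuous_const

instance [CompleteSpace E] : CompleteSpace (Hol V E) :=
  (holSub_isClosed (V := V) (E := E)).completeSpace_coe

/-- Evaluation of a Hölder map, packaged as a continuous linear map. -/
def Hol.ev (x : V) : Hol V E →L[ℝ] E :=
  LinearMap.mkContinuous
    { toFun := fun f => f.1 (Sum.inl x)
      map_add' := fun _ _ => rfl
      map_smul' := fun _ _ => rfl } 1
    (fun f => by rw [one_mul]; exact lp.norm_apply_le_norm (by simp) f.1 _)

theorem Hol.ev_def (x : V) (f : Hol V E) : Hol.ev x f = f.1 (Sum.inl x) := rfl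

theorem Hol.norm_ev_le (f : Hol V E) (x : V) : ‖Hol.ev x f‖ ≤ ‖f‖ :=
  lp.norm_apply_le_norm (by simp) f.1 _

theorem Hol.norm_ev_sub_le (f : Hol V E) (x y : V) :
    ‖Hol.ev x f - Hol.ev y f‖ ≤ ‖f‖ * Real.sqrt ‖x - y‖ := by
  rw [Hol.ev_def, Hol.ev_def, ← f.2.1 x y, norm_smul, mul_comm,
    Real.norm_of_nonneg (Real.sqrt_nonneg _)]
  gcongr
  exact lp.norm_apply_le_norm (by simp) f.1 _

theorem Hol.norm_le {f : Hol V E} {C : ℝ} (h1 : ∀ x, ‖Hol.ev x f‖ ≤ C)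
    (h2 : ∀ x y, ‖Hol.ev x f - Hol.ev y f‖ ≤ C * Real.sqrt ‖x - y‖) : ‖f‖ ≤ C := by
  have hC : 0 ≤ C := (norm_nonneg _).trans (h1 0)
  refine lp.norm_le_of_forall_le hC ?_
  rintro (x | ⟨x, y⟩)
  · exact h1 x
  · by_cases h : x = y
    · subst h
      change ‖f.1 (Sum.inr (x, x))‖ ≤ C
      rw [f.2.2 x]; simpa using hC
    · have hp : 0 < Real.sqrt ‖x - y‖ := Real.sqrt_pos.2 (norm_pos_iff.2 (sub_ne_zero.2 h))
      have := h2 x y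
      rw [Hol.ev_def, Hol.ev_def, ← f.2.1 x y, norm_smul, mul_comm,
        Real.norm_of_nonneg (Real.sqrt_nonneg _)] at this
      exact le_of_mul_le_mul_right this hp

/-- It suffices to control the Hölder quotients at distance at most one. -/
theorem Hol.norm_le' {f : Hol V E} {C : ℝ} (h1 : ∀ x, ‖Hol.ev x f‖ ≤ C)
    (h2 : ∀ x y, ‖x - y‖ ≤ 1 → ‖Hol.ev x f - Hol.ev y f‖ ≤ C * Real.sqrt ‖x - y‖) :
    ‖f‖ ≤ 2 * C := by
  have hC : 0 ≤ C := (norm_nonneg _).trans (h1 0)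
  refine Hol.norm_le (fun x => (h1 x).trans (by linarith)) fun x y => ?_
  by_cases h : ‖x - y‖ ≤ 1
  · refine (h2 x y h).trans ?_
    have := Real.sqrt_nonneg ‖x - y‖
    gcongr; linarith
  · have h3 : 1 ≤ Real.sqrt ‖x - y‖ := by
      rw [Real.one_le_sqrt]; exact (not_le.1 h).le
    calc _ ≤ ‖Hol.ev x f‖ + ‖Hol.ev y f‖ := norm_sub_le _ _
      _ ≤ 2 * C * 1 := by linarith [h1 x, h1 y]
      _ ≤ _ := by gcongr

theorem Hol.ext {f g : Hol V E} (h : ∀ x, Hol.ev x f = Hol.ev x g) : f = g := by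
  rw [← sub_eq_zero, ← norm_le_zero_iff]
  refine Hol.norm_le (fun x => ?_) fun x y => ?_ <;> simp [map_sub, h]

/-- The element of `Hol V E` given by a function with a sup bound and a Hölder bound at small
scales. -/
def Hol.mk (f : V → E) (h : ∃ C, (∀ x, ‖f x‖ ≤ C) ∧
    ∀ x y, ‖x - y‖ ≤ 1 → ‖f x - f y‖ ≤ C * Real.sqrt ‖x - y‖) : Hol V E :=
  ⟨⟨fun i => Sum.elim f (fun p => (Real.sqrt ‖p.1 - p.2‖)⁻¹ • (f p.1 - f p.2)) i, by
    obtain ⟨C, h1, h2⟩ := h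
    have hC : 0 ≤ C := (norm_nonneg _).trans (h1 0)
    refine memℓp_infty ⟨2 * C, ?_⟩
    rintro _ ⟨(x | ⟨x, y⟩), rfl⟩
    · simp only [Sum.elim_inl]; linarith [h1 x]
    · simp only [Sum.elim_inr, norm_smul, norm_inv, Real.norm_of_nonneg (Real.sqrt_nonneg _)]
      by_cases hxy : x = y
      · subst hxy; simp [hC]
      have hp : 0 < Real.sqrt ‖x - y‖ := Real.sqrt_pos.2 (norm_pos_iff.2 (sub_ne_zero.2 hxy))
      rw [inv_mul_le_iff₀ hp]
      by_cases h : ‖x - y‖ ≤ 1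
      · refine (h2 x y h).trans ?_
        rw [mul_comm]
        gcongr; linarith
      · have h3 : 1 ≤ Real.sqrt ‖x - y‖ := by
          rw [Real.one_le_sqrt]; exact (not_le.1 h).le
        calc _ ≤ ‖f x‖ + ‖f y‖ := norm_sub_le _ _
          _ ≤ 1 * (2 * C) := by linarith [h1 x, h1 y]
          _ ≤ _ := by gcongr⟩, by
    refine ⟨fun x y => ?_, fun x => ?_⟩
    · simp only [Sum.elim_inr, Sum.elim_inl]
      by_cases hxy : x = y
      · subst hxy; simp
      have hp : 0 < Real.sqrt ‖x - y‖ := Real.sqrt_pos.2 (norm_pos_iff.2 (sub_ne_zero.2 hxy))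
      rw [smul_inv_smul₀ hp.ne']
    · simp⟩

@[simp] theorem Hol.ev_mk (f : V → E) (h) (x : V) : Hol.ev x (Hol.mk f h) = f x := rfl

theorem Hol.continuous_ev (f : Hol V E) : Continuous fun x => Hol.ev x f := by
  rw [continuous_iff_continuousAt]
  intro x
  rw [ContinuousAt, tendsto_iff_norm_sub_tendsto_zero]
  refine squeeze_zero (fun _ => norm_nonneg _) (fun y => Hol.norm_ev_sub_le f y x) ?_
  have : Tendsto (fun y => ‖f‖ * Real.sqrt ‖y - x‖) (𝓝 x) (𝓝 (‖f‖ * Real.sqrt ‖x - x‖)) := by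
    apply Continuous.tendsto (f := fun y => ‖f‖ * Real.sqrt ‖y - x‖)
    fun_prop
  simpa using this

/-- A linear operator between Hölder spaces, from pointwise data and pointwise bounds. -/
def Hol.mkOp {V' : Type} [NormedAddCommGroup V'] (A : Hol V E → V' → F)
    (hadd : ∀ f g x, A (f + g) x = A f x + A g x) (hsmul : ∀ (c : ℝ) f x, A (c • f) x = c • A f x)
    (C : ℝ) (h1 : ∀ f x, ‖A f x‖ ≤ C * ‖f‖)
    (h2 : ∀ f x y, ‖x - y‖ ≤ 1 → ‖A f x - A f y‖ ≤ C * ‖f‖ * Real.sqrt ‖x - y‖) :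
    Hol V E →L[ℝ] Hol V' F :=
  LinearMap.mkContinuous
    { toFun := fun f => Hol.mk (A f) ⟨C * ‖f‖, h1 f, h2 f⟩
      map_add' := fun f g => Hol.ext fun x => by simp [hadd]
      map_smul' := fun c f => Hol.ext fun x => by simp [hsmul] } (2 * C)
    (fun f => by
      rw [mul_assoc]
      exact Hol.norm_le' (fun x => by simpa using h1 f x) (fun x y h => by simpa using h2 f x y h))

@[simp] theorem Hol.ev_mkOp {V' : Type} [NormedAddCommGroup V'] (A : Hol V E → V' → F)
    (hadd hsmul C h1 h2) (f : Hol V E) (x : V') :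
    Hol.ev x (Hol.mkOp A hadd hsmul C h1 h2 f) = A f x := rfl

/-- Constant maps. -/
def Hol.const (V : Type) [NormedAddCommGroup V] : E →L[ℝ] Hol V E :=
  LinearMap.mkContinuous
    { toFun := fun e => Hol.mk (fun _ => e) ⟨‖e‖, fun _ => le_rfl, fun x y _ => by
        simp only [sub_self, norm_zero]; positivity⟩
      map_add' := fun f g => Hol.ext fun x => by simp
      map_smul' := fun c f => Hol.ext fun x => by simp } 1
    (fun e => by
      rw [one_mul]
      refine Hol.norm_le (fun x => ?_) (fun x y => ?_)
      · exact le_of_eq rfl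
      · simp only [LinearMap.coe_mk, AddHom.coe_mk, Hol.ev_mk, sub_self, norm_zero]; positivity)

@[simp] theorem Hol.ev_const (e : E) (x : V) : Hol.ev x (Hol.const V e) = e := rfl

/-- Translation `f ↦ f (· + h)`, as a linear map. -/
def Hol.shift (h : V) : Hol V E →L[ℝ] Hol V E :=
  Hol.mkOp (fun f x => Hol.ev (x + h) f) (fun f g x => by simp) (fun c f x => by simp) 1
    (fun f x => by rw [one_mul]; exact Hol.norm_ev_le f _)
    (fun f x y _ => by
      rw [one_mul]
      simpa using Hol.norm_ev_sub_le f (x + h) (y + h))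

@[simp] theorem Hol.ev_shift (h : V) (f : Hol V E) (x : V) :
    Hol.ev x (Hol.shift h f) = Hol.ev (x + h) f := rfl

theorem Hol.norm_shift_le (h : V) (f : Hol V E) : ‖Hol.shift h f‖ ≤ ‖f‖ :=
  Hol.norm_le (fun x => by simpa using Hol.norm_ev_le f _)
    (fun x y => by simpa using Hol.norm_ev_sub_le f (x + h) (y + h))

/-- Post-composition with a continuous linear map. -/
def Hol.post (L : E →L[ℝ] F) : Hol V E →L[ℝ] Hol V F :=
  Hol.mkOp (fun f x => L (Hol.ev x f)) (fun f g x => by simp) (fun c f x => by simp) ‖L‖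
    (fun f x => (L.le_opNorm _).trans (by gcongr; exact Hol.norm_ev_le f _))
    (fun f x y _ => by
      rw [← map_sub, mul_assoc]
      exact (L.le_opNorm _).trans (by gcongr; exact Hol.norm_ev_sub_le f _ _))

@[simp] theorem Hol.ev_post (L : E →L[ℝ] F) (f : Hol V E) (x : V) :
    Hol.ev x (Hol.post L f) = L (Hol.ev x f) := rfl

/-- Pointwise application of an operator-valued Hölder map to a vector-valued one. -/
def Hol.app : Hol V (E →L[ℝ] F) →L[ℝ] Hol V E →L[ℝ] Hol V F :=
  have key : ∀ (a : Hol V (E →L[ℝ] F)) (f : Hol V E) (x y : V),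
      ‖Hol.ev x a (Hol.ev x f) - Hol.ev y a (Hol.ev y f)‖ ≤
        2 * ‖a‖ * ‖f‖ * Real.sqrt ‖x - y‖ := fun a f x y => by
    have : Hol.ev x a (Hol.ev x f) - Hol.ev y a (Hol.ev y f) =
      Hol.ev x a (Hol.ev x f - Hol.ev y f) + (Hol.ev x a - Hol.ev y a) (Hol.ev y f) := by
      simp
    rw [this]
    refine (norm_add_le _ _).trans ?_
    have h1 : ‖Hol.ev x a (Hol.ev x f - Hol.ev y f)‖ ≤ ‖a‖ * (‖f‖ * Real.sqrt ‖x - y‖) :=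
      (ContinuousLinearMap.le_opNorm _ _).trans (by
        gcongr
        · exact Hol.norm_ev_le a x
        · exact Hol.norm_ev_sub_le f x y)
    have h2 : ‖(Hol.ev x a - Hol.ev y a) (Hol.ev y f)‖ ≤ (‖a‖ * Real.sqrt ‖x - y‖) * ‖f‖ :=
      (ContinuousLinearMap.le_opNorm _ _).trans (by
        gcongr
        · exact Hol.norm_ev_sub_le a x y
        · exact Hol.norm_ev_le f y)
    calc _ ≤ _ := add_le_add h1 h2
      _ = _ := by ring
  have key1 : ∀ (a : Hol V (E →L[ℝ] F)) (f : Hol V E) (x : V),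
      ‖Hol.ev x a (Hol.ev x f)‖ ≤ 2 * ‖a‖ * ‖f‖ := fun a f x => by
    have := (Hol.ev x a).le_opNorm (Hol.ev x f)
    have h2 := Hol.norm_ev_le a x
    have h3 := Hol.norm_ev_le f x
    calc _ ≤ ‖Hol.ev x a‖ * ‖Hol.ev x f‖ := this
      _ ≤ ‖a‖ * ‖f‖ := by gcongr
      _ ≤ 2 * (‖a‖ * ‖f‖) := by nlinarith [mul_nonneg (norm_nonneg a) (norm_nonneg f)]
      _ = _ := by ring
  LinearMap.mkContinuous₂
    (LinearMap.mk₂ ℝ (fun (a : Hol V (E →L[ℝ] F)) (f : Hol V E) =>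
        (Hol.mk (fun x => Hol.ev x a (Hol.ev x f)) ⟨2 * ‖a‖ * ‖f‖, key1 a f,
          fun x y _ => key a f x y⟩ : Hol V F))
      (fun a b f => Hol.ext fun x => by simp) (fun c a f => Hol.ext fun x => by simp)
      (fun a f g => Hol.ext fun x => by simp) (fun c a f => Hol.ext fun x => by simp)) 2
    (fun a f => Hol.norm_le (key1 a f) (key a f))

@[simp] theorem Hol.ev_app (a : Hol V (E →L[ℝ] F)) (f : Hol V E) (x : V) :
    Hol.ev x (Hol.app a f) = Hol.ev x a (Hol.ev x f) := rfl

end Hol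

/-! ### Superposition operators -/

section Nemytskii

variable {V Y E : Type} [NormedAddCommGroup V] [NormedAddCommGroup Y] [NormedSpace ℝ Y]
  [NormedAddCommGroup E] [NormedSpace ℝ E]

/-- The superposition (Nemytskii) operator `φ ↦ G (ι · + φ ·)` on Hölder maps; the junk value `0`
is never met for smooth compactly supported `G` and Lipschitz `ι`. -/
def nem (G : Y → E) (ι : V → Y) (φ : Hol V Y) : Hol V E :=
  if h : ∃ C, (∀ x, ‖G (ι x + Hol.ev x φ)‖ ≤ C) ∧ ∀ x y, ‖x - y‖ ≤ 1 →
    ‖G (ι x + Hol.ev x φ) - G (ι y + Hol.ev y φ)‖ ≤ C * Real.sqrt ‖x - y‖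
  then Hol.mk (fun x => G (ι x + Hol.ev x φ)) h else 0

theorem exists_bound_of_cs {G : Y → E} (hG : ContDiff ℝ (⊤ : ℕ∞) G) (hc : HasCompactSupport G) :
    ∃ C, 0 ≤ C ∧ ∀ x, ‖G x‖ ≤ C := by
  obtain ⟨C, hC⟩ := hG.continuous.bounded_above_of_compact_support hc
  exact ⟨max C 0, le_max_right _ _, fun x => (hC x).trans (le_max_left _ _)⟩

theorem exists_lip_of_cs {G : Y → E} (hG : ContDiff ℝ (⊤ : ℕ∞) G) (hc : HasCompactSupport G) :
    ∃ C, 0 ≤ C ∧ ∀ x y, ‖G x - G y‖ ≤ C * ‖x - y‖ := by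
  obtain ⟨C, hC0, hC⟩ := exists_bound_of_cs (hG.fderiv_right (m := (⊤ : ℕ∞)) (by simp))
    (hc.fderiv (𝕜 := ℝ))
  exact ⟨C, hC0, fun x y => convex_univ.norm_image_sub_le_of_norm_fderiv_le
    (fun x _ => hG.differentiable (by simp) x) (fun x _ => hC x) (mem_univ _) (mem_univ _)⟩

theorem sqrt_ge_self_of_le_one {t : ℝ} (h0 : 0 ≤ t) (h : t ≤ 1) : t ≤ Real.sqrt t :=
  Real.le_sqrt_of_sq_le (by nlinarith)

variable {G : Y → E} {ι : V → Y} {K : ℝ}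

theorem ev_nem (hG : ContDiff ℝ (⊤ : ℕ∞) G) (hc : HasCompactSupport G)
    (hι : ∀ x y, ‖ι x - ι y‖ ≤ K * ‖x - y‖) (hK : 0 ≤ K) (φ : Hol V Y) (x : V) :
    Hol.ev x (nem G ι φ) = G (ι x + Hol.ev x φ) := by
  obtain ⟨C0, hC0, h0⟩ := exists_bound_of_cs hG hc
  obtain ⟨C1, hC1, h1⟩ := exists_lip_of_cs hG hc
  rw [nem, dif_pos, Hol.ev_mk]
  refine ⟨C0 + C1 * (K + ‖φ‖), fun x => (h0 _).trans (by
    have : 0 ≤ C1 * (K + ‖φ‖) := by positivity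
    linarith), fun x y hxy => (h1 _ _).trans ?_⟩
  have e : ‖ι x + Hol.ev x φ - (ι y + Hol.ev y φ)‖ ≤ (K + ‖φ‖) * Real.sqrt ‖x - y‖ := by
    rw [add_sub_add_comm]
    refine (norm_add_le _ _).trans ?_
    have := hι x y
    have h2 := Hol.norm_ev_sub_le φ x y
    have h3 := mul_le_mul_of_nonneg_left (sqrt_ge_self_of_le_one (norm_nonneg (x - y)) hxy) hK
    linarith
  calc _ ≤ C1 * ((K + ‖φ‖) * Real.sqrt ‖x - y‖) := by gcongr
    _ ≤ _ := by
      have : 0 ≤ C0 * Real.sqrt ‖x - y‖ := by positivity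
      linarith

/-- The second order Taylor remainder of a test function, and how it varies. -/
theorem taylor_remainder (hG : ContDiff ℝ (⊤ : ℕ∞) G) (hc : HasCompactSupport G) :
    ∃ C, 0 ≤ C ∧ ∀ (y y' η η' : Y) (R : ℝ), ‖η‖ ≤ R → ‖η'‖ ≤ R →
      ‖(G (y + η) - G y - fderiv ℝ G y η) - (G (y' + η') - G y' - fderiv ℝ G y' η')‖ ≤
        C * R * ‖η - η'‖ + C * R ^ 2 * ‖y - y'‖ := by
  have hG1 : ContDiff ℝ (⊤ : ℕ∞) (fderiv ℝ G) := hG.fderiv_right (m := (⊤ : ℕ∞)) (by simp)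
  have hc1 : HasCompactSupport (fderiv ℝ G) := hc.fderiv (𝕜 := ℝ)
  obtain ⟨C2, hC2, h2⟩ := exists_lip_of_cs hG1 hc1
  obtain ⟨C3, hC3, h3⟩ := exists_lip_of_cs (hG1.fderiv_right (m := (⊤ : ℕ∞)) (by simp))
    (hc1.fderiv (𝕜 := ℝ))
  have dG : ∀ y η, HasFDerivAt (fun η => G (y + η) - G y - fderiv ℝ G y η)
      (fderiv ℝ G (y + η) - fderiv ℝ G y) η := fun y η => by
    have a : HasFDerivAt (fun η => G (y + η)) (fderiv ℝ G (y + η)) η := by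
      have := ((hG.differentiable (by simp) (y + η)).hasFDerivAt).comp η
        ((hasFDerivAt_id η).const_add y)
      rw [ContinuousLinearMap.comp_id] at this
      exact this
    exact (a.sub_const _).sub (fderiv ℝ G y).hasFDerivAt
  -- double differences of the derivative
  have dd : ∀ y y' k, ‖(fderiv ℝ G (y + k) - fderiv ℝ G y) - (fderiv ℝ G (y' + k) - fderiv ℝ G y')‖
      ≤ C3 * ‖k‖ * ‖y - y'‖ := fun y y' k => by
    have hd : ∀ y, HasFDerivAt (fun y => fderiv ℝ G (y + k) - fderiv ℝ G y)
        (fderiv ℝ (fderiv ℝ G) (y + k) - fderiv ℝ (fderiv ℝ G) y) y := fun y => by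
      have a : HasFDerivAt (fun y => fderiv ℝ G (y + k)) (fderiv ℝ (fderiv ℝ G) (y + k)) y := by
        have := ((hG1.differentiable (by simp) (y + k)).hasFDerivAt).comp y
          ((hasFDerivAt_id y).add_const k)
        rw [ContinuousLinearMap.comp_id] at this
        exact this
      exact a.sub (hG1.differentiable (by simp) y).hasFDerivAt
    refine convex_univ.norm_image_sub_le_of_norm_hasFDerivWithin_le
      (f := fun y => fderiv ℝ G (y + k) - fderiv ℝ G y)
      (fun y _ => (hd y).hasFDerivWithinAt) (fun y _ => ?_) (mem_univ _) (mem_univ _)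
    simpa using h3 (y + k) y
  refine ⟨C2 + C3, by positivity, fun y y' η η' R hη hη' => ?_⟩
  have hR : 0 ≤ R := (norm_nonneg _).trans hη
  have A : ‖(G (y + η) - G y - fderiv ℝ G y η) - (G (y + η') - G y - fderiv ℝ G y η')‖ ≤
      C2 * R * ‖η - η'‖ := by
    refine (convex_closedBall (0 : Y) R).norm_image_sub_le_of_norm_hasFDerivWithin_le
      (f := fun η => G (y + η) - G y - fderiv ℝ G y η)
      (fun k _ => (dG y k).hasFDerivWithinAt) (fun k hk => ?_) (by simpa) (by simpa)
    have := h2 (y + k) y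
    rw [add_sub_cancel_left] at this
    refine this.trans ?_
    gcongr; simpa using hk
  have B : ‖((G (y + η') - G y - fderiv ℝ G y η') - (G (y' + η') - G y' - fderiv ℝ G y' η')) -
      ((G (y + 0) - G y - fderiv ℝ G y 0) - (G (y' + 0) - G y' - fderiv ℝ G y' 0))‖ ≤
      C3 * R * ‖y - y'‖ * ‖η' - 0‖ := by
    refine (convex_closedBall (0 : Y) R).norm_image_sub_le_of_norm_hasFDerivWithin_le
      (f := fun η' => (G (y + η') - G y - fderiv ℝ G y η') - (G (y' + η') - G y' - fderiv ℝ G y' η'))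
      (fun k _ => ((dG y k).sub (dG y' k)).hasFDerivWithinAt) (fun k hk => ?_) (by simpa)
      (by simpa)
    refine (dd y y' k).trans ?_
    gcongr; simpa using hk
  simp only [add_zero, sub_self, map_zero, sub_zero] at B
  have B' : C3 * R * ‖y - y'‖ * ‖η'‖ ≤ C3 * R * ‖y - y'‖ * R := by gcongr
  calc _ ≤ _ := norm_sub_le_norm_sub_add_norm_sub _ (G (y + η') - G y - fderiv ℝ G y η') _
    _ ≤ C2 * R * ‖η - η'‖ + C3 * R ^ 2 * ‖y - y'‖ := by linarith
    _ ≤ _ := by gcongr <;> linarith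

theorem hasFDerivAt_nem (hG : ContDiff ℝ (⊤ : ℕ∞) G) (hc : HasCompactSupport G)
    (hι : ∀ x y, ‖ι x - ι y‖ ≤ K * ‖x - y‖) (hK : 0 ≤ K) (φ : Hol V Y) :
    HasFDerivAt (nem G ι) (Hol.app (nem (fderiv ℝ G) ι φ)) φ := by
  obtain ⟨C, hC, h⟩ := taylor_remainder hG hc
  have hG1 : ContDiff ℝ (⊤ : ℕ∞) (fderiv ℝ G) := hG.fderiv_right (m := (⊤ : ℕ∞)) (by simp)
  have hc1 : HasCompactSupport (fderiv ℝ G) := hc.fderiv (𝕜 := ℝ)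
  rw [hasFDerivAt_iff_isLittleO_nhds_zero]
  have key : ∀ η : Hol V Y, ‖nem G ι (φ + η) - nem G ι φ - Hol.app (nem (fderiv ℝ G) ι φ) η‖ ≤
      2 * (C * (1 + K + ‖φ‖)) * ‖η‖ ^ 2 := fun η => by
    have e : ∀ x, Hol.ev x (nem G ι (φ + η) - nem G ι φ - Hol.app (nem (fderiv ℝ G) ι φ) η) =
        G (ι x + Hol.ev x φ + Hol.ev x η) - G (ι x + Hol.ev x φ)
          - fderiv ℝ G (ι x + Hol.ev x φ) (Hol.ev x η) := fun x => by
      simp only [map_sub, Hol.ev_app, ev_nem hG hc hι hK, ev_nem hG1 hc1 hι hK, map_add, add_assoc]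
    rw [mul_assoc]
    refine Hol.norm_le' (fun x => ?_) (fun x y hxy => ?_)
    · rw [e]
      have := h (ι x + Hol.ev x φ) (ι x + Hol.ev x φ) (Hol.ev x η) 0 ‖η‖ (Hol.norm_ev_le η x)
        (by simp)
      simp only [add_zero, sub_self, map_zero, sub_zero, norm_zero, mul_zero] at this
      refine this.trans ?_
      have h2 := Hol.norm_ev_le η x
      calc C * ‖η‖ * ‖Hol.ev x η‖ ≤ C * ‖η‖ * ‖η‖ := by gcongr
        _ = (C * 1) * ‖η‖ ^ 2 := by ring
        _ ≤ _ := by gcongr; linarith [norm_nonneg φ]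
    · rw [e, e]
      refine (h _ _ _ _ ‖η‖ (Hol.norm_ev_le η x) (Hol.norm_ev_le η y)).trans ?_
      have e : ‖ι x + Hol.ev x φ - (ι y + Hol.ev y φ)‖ ≤ (K + ‖φ‖) * Real.sqrt ‖x - y‖ := by
        rw [add_sub_add_comm]
        refine (norm_add_le _ _).trans ?_
        have := hι x y
        have h2 := Hol.norm_ev_sub_le φ x y
        have h3 := mul_le_mul_of_nonneg_left (sqrt_ge_self_of_le_one (norm_nonneg (x - y)) hxy) hK
        linarith
      calc _ ≤ C * ‖η‖ * (‖η‖ * Real.sqrt ‖x - y‖) +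
            C * ‖η‖ ^ 2 * ((K + ‖φ‖) * Real.sqrt ‖x - y‖) := by
              gcongr; exact Hol.norm_ev_sub_le η x y
        _ = _ := by ring
  rw [Asymptotics.isLittleO_iff]
  intro c hcpos
  set D := 2 * (C * (1 + K + ‖φ‖)) with hD
  have hD0 : 0 ≤ D := by positivity
  have : ∀ᶠ η : Hol V Y in 𝓝 0, ‖η‖ < c / (D + 1) := by
    have := (continuous_norm (E := Hol V Y)).tendsto 0
    rw [norm_zero] at this
    exact this.eventually_lt_const (by positivity)
  filter_upwards [this] with η hη
  refine (key η).trans ?_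
  rw [lt_div_iff₀ (by positivity)] at hη
  have := norm_nonneg η
  rw [pow_two, ← mul_assoc]
  gcongr
  nlinarith

/-- Superposition operators by test functions are smooth maps between Hölder spaces. -/
theorem contDiff_nem (hG : ContDiff ℝ (⊤ : ℕ∞) G) (hc : HasCompactSupport G)
    (hι : ∀ x y, ‖ι x - ι y‖ ≤ K * ‖x - y‖) (hK : 0 ≤ K) :
    ContDiff ℝ (⊤ : ℕ∞) (nem G ι) := by
  have main : ∀ m : ℕ, ∀ {E : Type} [NormedAddCommGroup E] [NormedSpace ℝ E] {G : Y → E},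
      ContDiff ℝ (⊤ : ℕ∞) G → HasCompactSupport G → ContDiff ℝ m (nem G ι) := by
    intro m
    induction m with
    | zero =>
      intro E _ _ G hG hc
      rw [Nat.cast_zero, contDiff_zero]
      exact continuous_iff_continuousAt.2 fun φ => (hasFDerivAt_nem hG hc hι hK φ).continuousAt
    | succ m ih =>
      intro E _ _ G hG hc
      rw [Nat.cast_succ, contDiff_succ_iff_fderiv]
      refine ⟨fun φ => (hasFDerivAt_nem hG hc hι hK φ).differentiableAt, by simp, ?_⟩
      have : fderiv ℝ (nem G ι) = fun φ => Hol.app (nem (fderiv ℝ G) ι φ) :=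
        funext fun φ => (hasFDerivAt_nem hG hc hι hK φ).fderiv
      rw [this]
      exact (Hol.app (V := V) (E := Y) (F := E)).contDiff.comp
        (ih (hG.fderiv_right (m := (⊤ : ℕ∞)) (by simp)) (hc.fderiv (𝕜 := ℝ)))
  rw [contDiff_infty]
  exact fun m => main m hG hc

end Nemytskii

/-! ### Weakly singular and singular integral operators -/

section Operators

variable {V : Type} [NormedAddCommGroup V] [NormedSpace ℝ V] [CompleteSpace V]

/-- The average of `f` around `z` at scale `t` against an operator-valued kernel `k`. -/
def kavg (k : ℂ → V →L[ℝ] V) (f : ℂ → V) (t : ℝ) (z : ℂ) : V := ∫ ζ, k ζ (f (z - t • ζ))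

theorem kavg_integrable {k : ℂ → V →L[ℝ] V} (hk : Continuous k) (hc : HasCompactSupport k)
    {f : ℂ → V} (hf : Continuous f) : Integrable fun ζ => k ζ (f ζ) :=
  (hk.clm_apply hf).integrable_of_hasCompactSupport
    (hc.mono' (fun ζ hζ => subset_closure (by
      intro h0; apply hζ; simp [h0])))

theorem kavg_continuous {k : ℂ → V →L[ℝ] V} (hk : Continuous k) (hc : HasCompactSupport k)
    {f : ℂ → V} (hf : Continuous f) (z : ℂ) : Continuous fun t => kavg k f t z := by
  rw [← continuousOn_univ]
  refine continuousOn_integral_of_compact_support hc ?_ (fun p x _ hx => ?_)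
  · apply Continuous.continuousOn
    change Continuous fun p : ℝ × ℂ => k p.2 (f (z - p.1 • p.2))
    fun_prop
  · rw [image_eq_zero_of_notMem_tsupport hx]; simp

theorem kavg_bound {k : ℂ → V →L[ℝ] V} (hk : Continuous k) (hc : HasCompactSupport k)
    {f : ℂ → V} {B : ℝ} (hB : ∀ ζ ∈ tsupport k, ‖f ζ‖ ≤ B) :
    ‖∫ ζ, k ζ (f ζ)‖ ≤ (∫ ζ, ‖k ζ‖) * B := by
  rw [← integral_mul_const]
  refine norm_integral_le_of_norm_le ((hk.integrable_of_hasCompactSupport hc).norm.mul_const B)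
    (ae_of_all _ fun ζ => ?_)
  by_cases h : ζ ∈ tsupport k
  · exact ((k ζ).le_opNorm _).trans (by gcongr; exact hB ζ h)
  · rw [image_eq_zero_of_notMem_tsupport h]; simp

theorem exists_radius {k : ℂ → V →L[ℝ] V} (hc : HasCompactSupport k) :
    ∃ R, 1 ≤ R ∧ ∀ ζ ∈ tsupport k, ‖ζ‖ ≤ R := by
  obtain ⟨R, hR⟩ := hc.isBounded.exists_norm_le
  exact ⟨max R 1, le_max_right _ _, fun ζ h => (hR ζ h).trans (le_max_left _ _)⟩

/-- A mean-zero kernel gains half a derivative on Hölder maps. -/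
theorem kavg_bound_sqrt {k : ℂ → V →L[ℝ] V} (hk : Continuous k) (hc : HasCompactSupport k)
    (h0 : ∫ ζ, k ζ = 0) :
    ∃ C, 0 ≤ C ∧ ∀ (f : Hol ℂ V) (t : ℝ), 0 ≤ t → ∀ z,
      ‖kavg k (fun ζ => Hol.ev ζ f) t z‖ ≤ C * ‖f‖ * Real.sqrt t := by
  obtain ⟨R, hR1, hR⟩ := exists_radius hc
  refine ⟨(∫ ζ, ‖k ζ‖) * Real.sqrt R, by positivity, fun f t ht z => ?_⟩
  have e : kavg k (fun ζ => Hol.ev ζ f) t z =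
      ∫ ζ, k ζ (Hol.ev (z - t • ζ) f - Hol.ev z f) := by
    simp only [map_sub]
    have c := Hol.continuous_ev f
    rw [integral_sub (kavg_integrable hk hc (by fun_prop)) (kavg_integrable hk hc (by fun_prop)),
      ← ContinuousLinearMap.integral_apply (hk.integrable_of_hasCompactSupport hc), h0]
    simp [kavg]
  rw [e]
  refine (kavg_bound hk hc (B := ‖f‖ * (Real.sqrt R * Real.sqrt t)) fun ζ hζ => ?_).trans
    (le_of_eq (by ring))
  refine (Hol.norm_ev_sub_le f _ _).trans ?_
  rw [← Real.sqrt_mul (by linarith)]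
  gcongr
  simp only [sub_sub_cancel_left, norm_neg, norm_smul, Real.norm_of_nonneg ht]
  rw [mul_comm]; gcongr; exact hR ζ hζ

theorem kavg_diff_bound {k : ℂ → V →L[ℝ] V} (hk : ContDiff ℝ (⊤ : ℕ∞) k)
    (hc : HasCompactSupport k) (h0 : ∫ ζ, k ζ = 0) :
    ∃ C, 0 ≤ C ∧ ∀ (f : Hol ℂ V) (t : ℝ), 0 < t → ∀ z d, ‖d‖ ≤ t →
      ‖kavg k (fun ζ => Hol.ev ζ f) t z - kavg k (fun ζ => Hol.ev ζ f) t (z + d)‖ ≤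
        C * ‖f‖ * (‖d‖ * (Real.sqrt t / t)) := by
  obtain ⟨R, hR1, hR⟩ := exists_radius hc
  obtain ⟨L, hL0, hL⟩ := exists_lip_of_cs hk hc
  have hkc := hk.continuous
  refine ⟨L * Real.sqrt (R + 1) * volume.real (closedBall (0:ℂ) (R + 1)), by positivity,
    fun f t ht z d hd => ?_⟩
  have c := Hol.continuous_ev f
  have hsh : HasCompactSupport fun ζ => k (ζ + t⁻¹ • d) :=
    hc.comp_homeomorph (Homeomorph.addRight (t⁻¹ • d))
  have e2 : kavg k (fun ζ => Hol.ev ζ f) t (z + d) = ∫ ζ, k (ζ + t⁻¹ • d) (Hol.ev (z - t • ζ) f) := by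
    rw [kavg, ← integral_add_right_eq_self _ (t⁻¹ • d)]
    congr 1; ext1 ζ; congr 3
    rw [smul_add, smul_inv_smul₀ ht.ne']; abel
  have h0' : ∫ ζ, k (ζ + t⁻¹ • d) = 0 := by rw [integral_add_right_eq_self k]; exact h0
  have i1 := hkc.integrable_of_hasCompactSupport hc (μ := volume)
  have hkc' : Continuous fun ζ => k (ζ + t⁻¹ • d) := by fun_prop
  have i2 : Integrable fun ζ => k (ζ + t⁻¹ • d) := hkc'.integrable_of_hasCompactSupport hsh
  have e : kavg k (fun ζ => Hol.ev ζ f) t z - kavg k (fun ζ => Hol.ev ζ f) t (z + d) =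
      ∫ ζ, (k ζ - k (ζ + t⁻¹ • d)) (Hol.ev (z - t • ζ) f - Hol.ev z f) := by
    simp only [map_sub]
    have j1 : Integrable fun ζ => k ζ (Hol.ev (z - t • ζ) f) := kavg_integrable hkc hc (by fun_prop)
    have j2 : Integrable fun ζ => k (ζ + t⁻¹ • d) (Hol.ev (z - t • ζ) f) :=
      kavg_integrable (k := fun ζ => k (ζ + t⁻¹ • d)) hkc' hsh (by fun_prop)
    have i12 : Integrable fun ζ => k ζ - k (ζ + t⁻¹ • d) := i1.sub i2
    rw [integral_sub, ← ContinuousLinearMap.integral_apply i12, integral_sub i1 i2, h0, h0']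
    · simp only [sub_apply]
      rw [integral_sub j1 j2, e2, kavg]; simp
    · exact j1.sub j2
    · exact (i1.sub i2).apply_continuousLinearMap _
  rw [e]
  have hdt : ‖t⁻¹ • d‖ ≤ 1 := by
    rw [norm_smul, norm_inv, Real.norm_of_nonneg ht.le, inv_mul_le_iff₀ ht]; simpa
  have hz : ∀ ζ ∉ closedBall (0:ℂ) (R + 1),
      (k ζ - k (ζ + t⁻¹ • d)) (Hol.ev (z - t • ζ) f - Hol.ev z f) = 0 := fun ζ hζ => by
    simp only [mem_closedBall, dist_zero_right, not_le] at hζ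
    rw [image_eq_zero_of_notMem_tsupport (f := k) fun h => by linarith [hR _ h],
      image_eq_zero_of_notMem_tsupport (f := k) fun h => ?_]
    · simp
    · have := hR _ h
      have h3 := norm_sub_le (ζ + t⁻¹ • d) (t⁻¹ • d)
      rw [add_sub_cancel_right] at h3
      linarith
  rw [← setIntegral_eq_integral_of_forall_compl_eq_zero hz]
  refine (norm_setIntegral_le_of_norm_le_const
    (C := L * (‖d‖ / t) * (‖f‖ * (Real.sqrt (R + 1) * Real.sqrt t)))
    (isCompact_closedBall _ _).measure_lt_top (fun ζ hζ => ?_)).trans (le_of_eq (by ring))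
  refine (ContinuousLinearMap.le_opNorm _ _).trans ?_
  gcongr
  · refine (hL _ _).trans ?_
    rw [sub_add_cancel_left, norm_neg, norm_smul, norm_inv, Real.norm_of_nonneg ht.le,
      div_eq_inv_mul]
  · refine (Hol.norm_ev_sub_le f _ _).trans ?_
    rw [← Real.sqrt_mul (by linarith)]
    gcongr
    simp only [sub_sub_cancel_left, norm_neg, norm_smul, Real.norm_of_nonneg ht.le]
    rw [mul_comm]; gcongr; simpa using hζ

theorem kavg_add {k : ℂ → V →L[ℝ] V} (hk : Continuous k) (hc : HasCompactSupport k)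
    (f g : Hol ℂ V) (t : ℝ) (z : ℂ) : kavg k (fun ζ => Hol.ev ζ (f + g)) t z =
      kavg k (fun ζ => Hol.ev ζ f) t z + kavg k (fun ζ => Hol.ev ζ g) t z := by
  have c := Hol.continuous_ev f
  have c' := Hol.continuous_ev g
  simp only [kavg, map_add]
  rw [integral_add (kavg_integrable hk hc (by fun_prop)) (kavg_integrable hk hc (by fun_prop))]

theorem kavg_smul {k : ℂ → V →L[ℝ] V} (a : ℝ)
    (f : Hol ℂ V) (t : ℝ) (z : ℂ) : kavg k (fun ζ => Hol.ev ζ (a • f)) t z =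
      a • kavg k (fun ζ => Hol.ev ζ f) t z := by
  simp only [kavg, map_smul]
  rw [integral_smul]

/-- The weakly singular operator `f ↦ ∫₀¹ ∫ k(ζ) f(z - tζ) dζ dt`. -/
def opT (k : ℂ → V →L[ℝ] V) (hk : Continuous k) (hc : HasCompactSupport k) :
    Hol ℂ V →L[ℝ] Hol ℂ V :=
  have ii : ∀ (f : Hol ℂ V) z, IntervalIntegrable (fun t => kavg k (fun ζ => Hol.ev ζ f) t z)
    volume 0 1 := fun f z => (kavg_continuous hk hc (Hol.continuous_ev f) z).intervalIntegrable _ _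
  Hol.mkOp (fun f z => ∫ t in (0:ℝ)..1, kavg k (fun ζ => Hol.ev ζ f) t z)
    (fun f g z => by
      simp only [kavg_add hk hc]
      exact intervalIntegral.integral_add (ii f z) (ii g z))
    (fun c f z => by simp only [kavg_smul, intervalIntegral.integral_smul])
    (∫ ζ, ‖k ζ‖)
    (fun f z => by
      have := intervalIntegral.norm_integral_le_of_norm_le_const (a := (0:ℝ)) (b := 1)
        (f := fun t => kavg k (fun ζ => Hol.ev ζ f) t z) (C := (∫ ζ, ‖k ζ‖) * ‖f‖)
        (fun t _ => kavg_bound hk hc fun ζ _ => Hol.norm_ev_le f _)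
      simpa using this)
    (fun f z z' _ => by
      rw [← intervalIntegral.integral_sub (ii f z) (ii f z')]
      have := intervalIntegral.norm_integral_le_of_norm_le_const (a := (0:ℝ)) (b := 1)
        (f := fun t => kavg k (fun ζ => Hol.ev ζ f) t z - kavg k (fun ζ => Hol.ev ζ f) t z')
        (C := (∫ ζ, ‖k ζ‖) * (‖f‖ * Real.sqrt ‖z - z'‖))
        (fun t _ => by
          have c := Hol.continuous_ev f
          have : kavg k (fun ζ => Hol.ev ζ f) t z - kavg k (fun ζ => Hol.ev ζ f) t z' =
              ∫ ζ, k ζ (Hol.ev (z - t • ζ) f - Hol.ev (z' - t • ζ) f) := by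
            simp only [map_sub, kavg]
            rw [integral_sub (kavg_integrable hk hc (by fun_prop))
              (kavg_integrable hk hc (by fun_prop))]
          rw [this]
          refine kavg_bound hk hc fun ζ _ => ?_
          simpa using Hol.norm_ev_sub_le f (z - t • ζ) (z' - t • ζ))
      simpa [mul_assoc] using this)

theorem ev_opT (k : ℂ → V →L[ℝ] V) (hk : Continuous k) (hc : HasCompactSupport k)
    (f : Hol ℂ V) (z : ℂ) :
    Hol.ev z (opT k hk hc f) = ∫ t in (0:ℝ)..1, kavg k (fun ζ => Hol.ev ζ f) t z := rfl

theorem sqrt_div_self_eq_rpow {t : ℝ} (ht : 0 < t) : Real.sqrt t / t = t ^ (-(1/2) : ℝ) := by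
  rw [Real.sqrt_eq_rpow, div_eq_iff ht.ne']
  nth_rewrite 3 [← Real.rpow_one t]
  rw [← Real.rpow_add ht]; norm_num

theorem opR_integrable {k : ℂ → V →L[ℝ] V} (hk : Continuous k)
    (hc : HasCompactSupport k) (h0 : ∫ ζ, k ζ = 0) (f : Hol ℂ V) (z : ℂ) :
    IntervalIntegrable (fun t => t⁻¹ • kavg k (fun ζ => Hol.ev ζ f) t z) volume 0 1 := by
  obtain ⟨C, hC, h⟩ := kavg_bound_sqrt hk hc h0
  have hi : IntervalIntegrable (fun t : ℝ => C * ‖f‖ * t ^ (-(1/2) : ℝ)) volume 0 1 :=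
    (intervalIntegral.intervalIntegrable_rpow' (by norm_num)).const_mul _
  refine hi.mono_fun' ?_ ?_
  · have := (kavg_continuous hk hc (Hol.continuous_ev f) z).aestronglyMeasurable
      (μ := volume.restrict (uIoc (0:ℝ) 1))
    exact (measurable_inv.aestronglyMeasurable).smul this
  · refine (ae_restrict_mem measurableSet_uIoc).mono fun t ht => ?_
    rw [uIoc_of_le zero_le_one] at ht
    have := h f t ht.1.le z
    beta_reduce
    rw [← sqrt_div_self_eq_rpow ht.1, norm_smul, norm_inv, Real.norm_of_nonneg ht.1.le,
      inv_mul_le_iff₀ ht.1]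
    refine this.trans (le_of_eq ?_)
    have := ht.1.ne'
    field_simp

/-- The pointwise bounds making the singular integral with mean-zero kernel act on Hölder maps. -/
theorem opR_bound {k : ℂ → V →L[ℝ] V} (hk : ContDiff ℝ (⊤ : ℕ∞) k)
    (hc : HasCompactSupport k) (h0 : ∫ ζ, k ζ = 0) :
    ∃ C, 0 ≤ C ∧ (∀ (f : Hol ℂ V) z,
      ‖∫ t in (0:ℝ)..1, t⁻¹ • kavg k (fun ζ => Hol.ev ζ f) t z‖ ≤ C * ‖f‖) ∧
      ∀ (f : Hol ℂ V) z z', ‖z - z'‖ ≤ 1 →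
      ‖(∫ t in (0:ℝ)..1, t⁻¹ • kavg k (fun ζ => Hol.ev ζ f) t z) -
        ∫ t in (0:ℝ)..1, t⁻¹ • kavg k (fun ζ => Hol.ev ζ f) t z'‖ ≤
          C * ‖f‖ * Real.sqrt ‖z - z'‖ := by
  obtain ⟨C, hC, h⟩ := kavg_bound_sqrt hk.continuous hc h0
  obtain ⟨C', hC', h'⟩ := kavg_diff_bound hk hc h0
  have bd : ∀ (f : Hol ℂ V) z t, 0 < t → ‖t⁻¹ • kavg k (fun ζ => Hol.ev ζ f) t z‖ ≤
      C * ‖f‖ * t ^ (-(1/2) : ℝ) := fun f z t ht => by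
    rw [← sqrt_div_self_eq_rpow ht, norm_smul, norm_inv, Real.norm_of_nonneg ht.le,
      inv_mul_le_iff₀ ht]
    refine (h f t ht.le z).trans (le_of_eq ?_)
    field_simp
  have irp : ∀ b : ℝ, 0 ≤ b → ∫ t in (0:ℝ)..b, t ^ (-(1/2) : ℝ) = 2 * Real.sqrt b := fun b hb => by
    rw [integral_rpow (Or.inl (by norm_num)), Real.sqrt_eq_rpow]
    norm_num; ring
  refine ⟨4 * C + 2 * C', by positivity, fun f z => ?_, fun f z z' hzz => ?_⟩
  · have := intervalIntegral.norm_integral_le_of_norm_le (zero_le_one' ℝ)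
      (ae_of_all _ fun t ht => bd f z t ht.1)
      ((intervalIntegral.intervalIntegrable_rpow' (by norm_num)).const_mul _)
    refine this.trans ?_
    rw [intervalIntegral.integral_const_mul, irp 1 zero_le_one, Real.sqrt_one]
    nlinarith [norm_nonneg f, mul_nonneg hC (norm_nonneg f), mul_nonneg hC' (norm_nonneg f)]
  · have ii := opR_integrable hk.continuous hc h0 f
    rw [← intervalIntegral.integral_sub (ii z) (ii z')]
    set d := ‖z - z'‖ with hd
    have hd0 : 0 ≤ d := norm_nonneg _
    rcases hd0.eq_or_lt with hd00 | hdpos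
    · have : z = z' := by rw [← sub_eq_zero, ← norm_le_zero_iff]; exact hd00.symm.le
      subst this; simp; positivity
    have i12 := (ii z).sub (ii z')
    have s1 : uIcc 0 d ⊆ uIcc 0 1 := by rw [uIcc_of_le hd0, uIcc_of_le zero_le_one]; exact Icc_subset_Icc le_rfl hzz
    have s2 : uIcc d 1 ⊆ uIcc 0 1 := by rw [uIcc_of_le hzz, uIcc_of_le zero_le_one]; exact Icc_subset_Icc hd0 le_rfl
    rw [← intervalIntegral.integral_add_adjacent_intervals (i12.mono_set s1) (i12.mono_set s2)]
    refine (norm_add_le _ _).trans ?_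
    have A : ‖∫ t in (0:ℝ)..d, (t⁻¹ • kavg k (fun ζ => Hol.ev ζ f) t z -
        t⁻¹ • kavg k (fun ζ => Hol.ev ζ f) t z')‖ ≤ 2 * (C * ‖f‖) * (2 * Real.sqrt d) := by
      have := intervalIntegral.norm_integral_le_of_norm_le hd0
        (f := fun t => t⁻¹ • kavg k (fun ζ => Hol.ev ζ f) t z -
          t⁻¹ • kavg k (fun ζ => Hol.ev ζ f) t z')
        (g := fun t => 2 * (C * ‖f‖) * t ^ (-(1/2) : ℝ))
        (μ := volume)
        (ae_of_all _ fun t ht => (norm_sub_le _ _).trans (by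
          have h1 := bd f z t ht.1
          have h2 := bd f z' t ht.1
          linarith))
        ((intervalIntegral.intervalIntegrable_rpow' (by norm_num)).const_mul _)
      rwa [intervalIntegral.integral_const_mul, irp d hd0] at this
    have B : ‖∫ t in d..1, (t⁻¹ • kavg k (fun ζ => Hol.ev ζ f) t z -
        t⁻¹ • kavg k (fun ζ => Hol.ev ζ f) t z')‖ ≤ C' * ‖f‖ * d * (2 * (Real.sqrt d)⁻¹) := by
      have n0 : (0:ℝ) ∉ uIcc d 1 := by
        rw [uIcc_of_le hzz]; exact fun h => absurd h.1 (not_le.2 hdpos)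
      have := intervalIntegral.norm_integral_le_of_norm_le hzz
        (f := fun t => t⁻¹ • kavg k (fun ζ => Hol.ev ζ f) t z -
          t⁻¹ • kavg k (fun ζ => Hol.ev ζ f) t z')
        (g := fun t => C' * ‖f‖ * d * t ^ (-(3/2) : ℝ))
        (μ := volume)
        (ae_of_all _ fun t ht => by
          have t0 : 0 < t := hdpos.trans ht.1
          have h1 := h' f t t0 z (z' - z) (by rw [norm_sub_rev]; exact ht.1.le)
          rw [add_sub_cancel, norm_sub_rev z' z, ← hd] at h1
          rw [← smul_sub, norm_smul, norm_inv, Real.norm_of_nonneg t0.le, inv_mul_le_iff₀ t0]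
          refine h1.trans (le_of_eq ?_)
          have : t ^ (-(3/2) : ℝ) = Real.sqrt t / t / t := by
            rw [sqrt_div_self_eq_rpow t0, eq_div_iff t0.ne']
            nth_rewrite 2 [← Real.rpow_one t]
            rw [← Real.rpow_add t0]; norm_num
          rw [this]; field_simp)
        ((intervalIntegral.intervalIntegrable_rpow (Or.inr n0)).const_mul _)
      refine this.trans ?_
      rw [intervalIntegral.integral_const_mul]
      gcongr
      rw [integral_rpow (Or.inr ⟨by norm_num, n0⟩), Real.sqrt_eq_rpow, ← Real.rpow_neg hd0]
      norm_num
      linarith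
    have e : d * (2 * (Real.sqrt d)⁻¹) = 2 * Real.sqrt d := by
      have hs : 0 < Real.sqrt d := Real.sqrt_pos.2 hdpos
      field_simp
      rw [Real.sq_sqrt hd0]
    calc _ ≤ _ := add_le_add A B
      _ = 2 * (C * ‖f‖) * (2 * Real.sqrt d) + C' * ‖f‖ * (d * (2 * (Real.sqrt d)⁻¹)) := by ring
      _ = _ := by rw [e]; ring

/-- The singular integral operator `f ↦ ∫₀¹ t⁻¹ ∫ k(ζ) f(z - tζ) dζ dt`, for a mean-zero test
kernel `k`. -/
def opR (k : ℂ → V →L[ℝ] V) (hk : ContDiff ℝ (⊤ : ℕ∞) k) (hc : HasCompactSupport k)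
    (h0 : ∫ ζ, k ζ = 0) : Hol ℂ V →L[ℝ] Hol ℂ V :=
  Hol.mkOp (fun f z => ∫ t in (0:ℝ)..1, t⁻¹ • kavg k (fun ζ => Hol.ev ζ f) t z)
    (fun f g z => by
      simp only [kavg_add hk.continuous hc, smul_add]
      exact intervalIntegral.integral_add (opR_integrable hk.continuous hc h0 f z)
        (opR_integrable hk.continuous hc h0 g z))
    (fun c f z => by
      simp only [kavg_smul]
      rw [← intervalIntegral.integral_smul]
      congr 1; ext1 t; rw [smul_comm])
    (opR_bound hk hc h0).choose (opR_bound hk hc h0).choose_spec.2.1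
    (opR_bound hk hc h0).choose_spec.2.2

theorem ev_opR (k : ℂ → V →L[ℝ] V) (hk : ContDiff ℝ (⊤ : ℕ∞) k) (hc : HasCompactSupport k)
    (h0 : ∫ ζ, k ζ = 0) (f : Hol ℂ V) (z : ℂ) :
    Hol.ev z (opR k hk hc h0 f) =
      ∫ t in (0:ℝ)..1, t⁻¹ • kavg k (fun ζ => Hol.ev ζ f) t z := rfl

theorem kavg_shift (k : ℂ → V →L[ℝ] V) (f : Hol ℂ V) (h : ℂ) (t : ℝ) (z : ℂ) :
    kavg k (fun ζ => Hol.ev (ζ + h) f) t z = kavg k (fun ζ => Hol.ev ζ f) t (z + h) := by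
  simp only [kavg]
  congr 1; ext1 ζ; congr 3; ring

theorem opT_shift (k : ℂ → V →L[ℝ] V) (hk : Continuous k) (hc : HasCompactSupport k)
    (f : Hol ℂ V) (h : ℂ) : opT k hk hc (Hol.shift h f) = Hol.shift h (opT k hk hc f) :=
  Hol.ext fun z => by simp only [ev_opT, Hol.ev_shift, kavg_shift]

theorem opR_shift (k : ℂ → V →L[ℝ] V) (hk : ContDiff ℝ (⊤ : ℕ∞) k) (hc : HasCompactSupport k)
    (h0 : ∫ ζ, k ζ = 0) (f : Hol ℂ V) (h : ℂ) :
    opR k hk hc h0 (Hol.shift h f) = Hol.shift h (opR k hk hc h0 f) :=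
  Hol.ext fun z => by simp only [ev_opR, Hol.ev_shift, kavg_shift]

end Operators

/-! ### The Cauchy operator -/

section Cauchy

variable {V : Type} [NormedAddCommGroup V] [NormedSpace ℝ V] [CompleteSpace V]

/-- A smooth radial cut-off on `ℂ`, supported in the annulus `1/2 ≤ |ζ|² ≤ 3/2`. -/
def om (ζ : ℂ) : ℝ := (⟨1/4, 1/2, by norm_num, by norm_num⟩ : ContDiffBump (1:ℝ)) (ζ.re ^ 2 + ζ.im ^ 2)

theorem om_contDiff : ContDiff ℝ (⊤ : ℕ∞) om := by
  have h1 : ContDiff ℝ (⊤ : ℕ∞) fun ζ : ℂ => ζ.re := Complex.reCLM.contDiff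
  have h2 : ContDiff ℝ (⊤ : ℕ∞) fun ζ : ℂ => ζ.im := Complex.imCLM.contDiff
  exact (ContDiffBump.contDiff _).comp ((h1.pow 2).add (h2.pow 2))

theorem om_nonneg (ζ : ℂ) : 0 ≤ om ζ := ContDiffBump.nonneg _

theorem sq_norm_complex (ζ : ℂ) : ‖ζ‖ ^ 2 = ζ.re ^ 2 + ζ.im ^ 2 := by
  rw [Complex.sq_norm, Complex.normSq_apply]; ring

theorem om_eq_zero_of_small {ζ : ℂ} (h : ‖ζ‖ ≤ 1/2) : om ζ = 0 := by
  apply ContDiffBump.zero_of_le_dist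
  rw [Real.dist_eq, ← sq_norm_complex, abs_of_nonpos]
  · change (1/2:ℝ) ≤ _; nlinarith [norm_nonneg ζ]
  · nlinarith [norm_nonneg ζ]

theorem om_hasCompactSupport : HasCompactSupport om := by
  refine HasCompactSupport.of_support_subset_isCompact (isCompact_closedBall (0:ℂ) 2) fun ζ hζ => ?_
  rw [mem_closedBall, dist_zero_right]
  by_contra h
  apply hζ
  apply ContDiffBump.zero_of_le_dist
  rw [Real.dist_eq, ← sq_norm_complex, abs_of_nonneg]
  · change (1/2:ℝ) ≤ _; nlinarith [norm_nonneg ζ]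
  · nlinarith [norm_nonneg ζ]

/-- The total mass of the cut-off. -/
def omc : ℝ := ∫ ζ, om ζ

theorem omc_pos : 0 < omc := by
  refine om_contDiff.continuous.integral_pos_of_hasCompactSupport_nonneg_nonzero
    om_hasCompactSupport om_nonneg (x := 1) ?_
  have : om 1 = 1 := by
    apply ContDiffBump.one_of_mem_closedBall
    simp
  rw [this]; norm_num

/-- Radial functions are annihilated by the angular derivative. -/
theorem om_rot (ζ : ℂ) : ζ.re * fderiv ℝ om ζ Complex.I = ζ.im * fderiv ℝ om ζ 1 := by
  set b : ContDiffBump (1:ℝ) := ⟨1/4, 1/2, by norm_num, by norm_num⟩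
  have h1 : HasFDerivAt (fun ζ : ℂ => ζ.re) Complex.reCLM ζ := Complex.reCLM.hasFDerivAt
  have h2 : HasFDerivAt (fun ζ : ℂ => ζ.im) Complex.imCLM ζ := Complex.imCLM.hasFDerivAt
  have hb : HasDerivAt b (deriv b (ζ.re ^ 2 + ζ.im ^ 2)) (ζ.re ^ 2 + ζ.im ^ 2) :=
    ((b.contDiff (n := 1)).differentiable (by simp) _).hasDerivAt
  have := (hb.comp_hasFDerivAt ζ ((h1.pow 2).add (h2.pow 2))).fderiv
  have e : fderiv ℝ om ζ = _ := this
  rw [e]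
  simp
  ring

/-- The kernel `ω(ζ) ζ̄`, conjugation being taken with respect to `J₀`. -/
def thk (J0 : V →L[ℝ] V) (ζ : ℂ) : V →L[ℝ] V :=
  om ζ • (ζ.re • ContinuousLinearMap.id ℝ V - ζ.im • J0)

theorem thk_contDiff (J0 : V →L[ℝ] V) : ContDiff ℝ (⊤ : ℕ∞) (thk J0) := by
  have h1 : ContDiff ℝ (⊤ : ℕ∞) fun ζ : ℂ => ζ.re := Complex.reCLM.contDiff
  have h2 : ContDiff ℝ (⊤ : ℕ∞) fun ζ : ℂ => ζ.im := Complex.imCLM.contDiff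
  exact om_contDiff.smul ((h1.smul contDiff_const).sub (h2.smul contDiff_const))

theorem thk_hasCompactSupport (J0 : V →L[ℝ] V) : HasCompactSupport (thk J0) :=
  om_hasCompactSupport.smul_right

/-- The derivative of `thk` in the direction `i`. -/
def kpk (J0 : V →L[ℝ] V) (ζ : ℂ) : V →L[ℝ] V := fderiv ℝ (thk J0) ζ Complex.I

theorem kpk_contDiff (J0 : V →L[ℝ] V) : ContDiff ℝ (⊤ : ℕ∞) (kpk J0) :=
  ((thk_contDiff J0).fderiv_right (m := (⊤ : ℕ∞)) (by simp)).clm_apply contDiff_const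

theorem kpk_hasCompactSupport (J0 : V →L[ℝ] V) : HasCompactSupport (kpk J0) :=
  (thk_hasCompactSupport J0).fderiv_apply (𝕜 := ℝ) _

/-- Integration by parts against an operator-valued test function. -/
theorem ibp_kernel {k : ℂ → V →L[ℝ] V} (hk : ContDiff ℝ (⊤ : ℕ∞) k) (hc : HasCompactSupport k)
    {g : ℂ → V} {D : ℂ → ℂ →L[ℝ] V} (hg : ∀ z, HasFDerivAt g (D z) z) (e : ℂ)
    (hD : Continuous fun z => D z e) :
    ∫ ζ, k ζ (D ζ e) = -∫ ζ, fderiv ℝ k ζ e (g ζ) := by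
  have gc : Continuous g := continuous_iff_continuousAt.2 fun z => (hg z).continuousAt
  have hk' : Continuous fun ζ => fderiv ℝ k ζ e :=
    (hk.continuous_fderiv (by simp)).clm_apply continuous_const
  exact integral_bilinear_hasFDerivAt_right_eq_neg_left_of_integrable
    (B := ContinuousLinearMap.id ℝ (V →L[ℝ] V)) (f' := fderiv ℝ k)
    (kavg_integrable hk' (hc.fderiv_apply (𝕜 := ℝ) _) gc)
    (kavg_integrable hk.continuous hc hD) (kavg_integrable hk.continuous hc gc)
    (fun x _ => (hk.differentiable (by simp) x).hasFDerivAt) (fun x _ => hg x)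

theorem kpk_integral (J0 : V →L[ℝ] V) : ∫ ζ, kpk J0 ζ = 0 := by
  ext v
  rw [ContinuousLinearMap.integral_apply
    ((kpk_contDiff J0).continuous.integrable_of_hasCompactSupport (kpk_hasCompactSupport J0))]
  have := ibp_kernel (thk_contDiff J0) (thk_hasCompactSupport J0) (g := fun _ => v)
    (fun z => hasFDerivAt_const v z) Complex.I (by simpa using continuous_const)
  simp only [zero_apply, map_zero, integral_zero] at this
  simpa [kpk] using this.symm

/-- The Cauchy-type operator `T`: averaging the kernel `ω(ζ) ζ̄` over the scales `t ≤ 1` produces a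
truncation of a multiple of the Cauchy kernel `1/ζ`. -/
def cT (J0 : V →L[ℝ] V) : Hol ℂ V →L[ℝ] Hol ℂ V :=
  opT (thk J0) (thk_contDiff J0).continuous (thk_hasCompactSupport J0)

/-- The singular integral operator `R` obtained by differentiating the kernel of `cT` in the
direction `i`; on differentiable maps it is `T` composed with `∂/∂y`. -/
def cR (J0 : V →L[ℝ] V) : Hol ℂ V →L[ℝ] Hol ℂ V :=
  opR (kpk J0) (kpk_contDiff J0) (kpk_hasCompactSupport J0) (kpk_integral J0)

variable {J0 : V →L[ℝ] V} {f f1 f2 : Hol ℂ V} {D : ℂ → ℂ →L[ℝ] V}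

theorem hasFDerivAt_scaled (hd : ∀ z, HasFDerivAt (fun z => Hol.ev z f) (D z) z) (z : ℂ) (t : ℝ)
    (ζ : ℂ) : HasFDerivAt (fun ζ => Hol.ev (z - t • ζ) f) (-(t • D (z - t • ζ))) ζ := by
  have h1 : HasFDerivAt (fun ζ : ℂ => z - t • ζ) (-(t • ContinuousLinearMap.id ℝ ℂ)) ζ :=
    ((hasFDerivAt_id ζ).const_smul t).const_sub z
  have := (hd (z - t • ζ)).comp ζ h1
  convert! this using 1
  ext v; simp

theorem cR_eq (hd : ∀ z, HasFDerivAt (fun z => Hol.ev z f) (D z) z)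
    (h2 : ∀ z, D z Complex.I = Hol.ev z f2) : cR J0 f = cT J0 f2 := by
  refine Hol.ext fun z => ?_
  rw [cR, cT, ev_opR, ev_opT]
  refine intervalIntegral.integral_congr_ae (ae_of_all _ fun t ht => ?_)
  rw [uIoc_of_le zero_le_one] at ht
  have c2 := Hol.continuous_ev f2
  have := ibp_kernel (thk_contDiff J0) (thk_hasCompactSupport J0)
    (hasFDerivAt_scaled hd z t) Complex.I (by
      simp only [neg_apply, smul_apply, h2]; fun_prop)
  simp only [neg_apply, smul_apply, h2, map_neg, map_smul] at this
  rw [integral_neg, neg_inj, integral_smul] at this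
  simp only [kavg]
  rw [inv_smul_eq_iff₀ ht.1.ne']
  exact this.symm

theorem D_apply (h1 : ∀ z, D z 1 = Hol.ev z f1) (h2 : ∀ z, D z Complex.I = Hol.ev z f2) (z ζ : ℂ) :
    D z ζ = ζ.re • Hol.ev z f1 + ζ.im • Hol.ev z f2 := by
  have : ζ = ζ.re • (1:ℂ) + ζ.im • Complex.I := by
    apply Complex.ext <;> simp
  conv_lhs => rw [this]
  rw [map_add, map_smul, map_smul, h1, h2]

/-- The rotational part of the Cauchy kernel integrates to zero, since `ω` is radial. -/
theorem rot_part (hd : ∀ z, HasFDerivAt (fun z => Hol.ev z f) (D z) z)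
    (h1 : ∀ z, D z 1 = Hol.ev z f1) (h2 : ∀ z, D z Complex.I = Hol.ev z f2) {t : ℝ} (ht : 0 < t)
    (z : ℂ) : ∫ ζ, om ζ • (ζ.re • Hol.ev (z - t • ζ) f2 - ζ.im • Hol.ev (z - t • ζ) f1) = 0 := by
  have c0 := Hol.continuous_ev f
  have c1 := Hol.continuous_ev f1
  have c2 := Hol.continuous_ev f2
  have hre : ContDiff ℝ (⊤ : ℕ∞) fun ζ : ℂ => ζ.re := Complex.reCLM.contDiff
  have him : ContDiff ℝ (⊤ : ℕ∞) fun ζ : ℂ => ζ.im := Complex.imCLM.contDiff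
  set k1 : ℂ → V →L[ℝ] V := fun ζ => (om ζ * ζ.re) • ContinuousLinearMap.id ℝ V with hk1
  set k2 : ℂ → V →L[ℝ] V := fun ζ => (om ζ * ζ.im) • ContinuousLinearMap.id ℝ V with hk2
  have s1 : ContDiff ℝ (⊤ : ℕ∞) k1 := (om_contDiff.mul hre).smul contDiff_const
  have s2 : ContDiff ℝ (⊤ : ℕ∞) k2 := (om_contDiff.mul him).smul contDiff_const
  have cs1 : HasCompactSupport k1 := (om_hasCompactSupport.mul_right).smul_right
  have cs2 : HasCompactSupport k2 := (om_hasCompactSupport.mul_right).smul_right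
  have i1 := ibp_kernel s1 cs1 (hasFDerivAt_scaled hd z t) Complex.I (by
      simp only [neg_apply, smul_apply, h2]; fun_prop)
  have i2 := ibp_kernel s2 cs2 (hasFDerivAt_scaled hd z t) 1 (by
      simp only [neg_apply, smul_apply, h1]; fun_prop)
  have dk : ∀ (a : ℂ →L[ℝ] ℝ) (ζ e : ℂ), fderiv ℝ (fun ζ => (om ζ * a ζ) • ContinuousLinearMap.id ℝ V) ζ e
      = (om ζ * a e + a ζ * fderiv ℝ om ζ e) • ContinuousLinearMap.id ℝ V := fun a ζ e => by
    have := (((om_contDiff.differentiable (by simp) ζ).hasFDerivAt.mul a.hasFDerivAt).smul_const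
      (ContinuousLinearMap.id ℝ V)).fderiv
    have e' : fderiv ℝ (fun ζ => (om ζ * a ζ) • ContinuousLinearMap.id ℝ V) ζ = _ := this
    rw [e']; simp
  have d1 : ∀ ζ, fderiv ℝ k1 ζ Complex.I = (ζ.re * fderiv ℝ om ζ Complex.I) • ContinuousLinearMap.id ℝ V :=
    fun ζ => by simpa using dk Complex.reCLM ζ Complex.I
  have d2 : ∀ ζ, fderiv ℝ k2 ζ 1 = (ζ.im * fderiv ℝ om ζ 1) • ContinuousLinearMap.id ℝ V :=
    fun ζ => by simpa using dk Complex.imCLM ζ 1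
  have e : ∫ ζ, k1 ζ (Hol.ev (z - t • ζ) f2) = ∫ ζ, k2 ζ (Hol.ev (z - t • ζ) f1) := by
    have : ∫ ζ, k1 ζ ((-(t • D (z - t • ζ))) Complex.I) = ∫ ζ, k2 ζ ((-(t • D (z - t • ζ))) 1) := by
      rw [i1, i2]; simp only [d1, d2, om_rot]
    simp only [neg_apply, smul_apply, h1, h2, map_neg, map_smul] at this
    rw [integral_neg, integral_neg, neg_inj, integral_smul, integral_smul] at this
    exact smul_right_injective _ ht.ne' this
  rw [← sub_eq_zero, ← integral_sub (kavg_integrable s1.continuous cs1 (by fun_prop))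
    (kavg_integrable s2.continuous cs2 (by fun_prop))] at e
  rw [← e]
  congr 1; ext1 ζ
  simp [hk1, hk2, smul_sub, mul_smul]

theorem radial_deriv (hd : ∀ z, HasFDerivAt (fun z => Hol.ev z f) (D z) z)
    (h1 : ∀ z, D z 1 = Hol.ev z f1) (h2 : ∀ z, D z Complex.I = Hol.ev z f2) (z : ℂ) (t : ℝ) :
    HasDerivAt (fun t : ℝ => ∫ ζ, om ζ • Hol.ev (z - t • ζ) f)
      (∫ ζ, -(om ζ • (ζ.re • Hol.ev (z - t • ζ) f1 + ζ.im • Hol.ev (z - t • ζ) f2))) t := by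
  have c0 := Hol.continuous_ev f
  have c1 := Hol.continuous_ev f1
  have c2 := Hol.continuous_ev f2
  have co := om_contDiff.continuous
  have cI : ∀ g : ℂ → V, Continuous g → Integrable fun ζ => om ζ • g ζ := fun g hg =>
    (co.smul hg).integrable_of_hasCompactSupport om_hasCompactSupport.smul_right
  refine (hasDerivAt_integral_of_dominated_loc_of_deriv_le (s := univ) univ_mem
    (F := fun t ζ => om ζ • Hol.ev (z - t • ζ) f)
    (F' := fun t ζ => -(om ζ • (ζ.re • Hol.ev (z - t • ζ) f1 + ζ.im • Hol.ev (z - t • ζ) f2)))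
    (bound := fun ζ => om ζ • (‖ζ‖ * (‖f1‖ + ‖f2‖))) ?_ ?_ ?_ ?_ ?_ ?_).2
  · exact Eventually.of_forall fun t => (cI _ (by fun_prop)).aestronglyMeasurable
  · exact cI _ (by fun_prop)
  · exact (cI _ (by fun_prop)).neg.aestronglyMeasurable
  · refine ae_of_all _ fun ζ t _ => ?_
    rw [norm_neg, norm_smul, Real.norm_of_nonneg (om_nonneg ζ), smul_eq_mul]
    refine mul_le_mul_of_nonneg_left ?_ (om_nonneg ζ)
    refine (norm_add_le _ _).trans ?_
    rw [norm_smul, norm_smul, mul_add]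
    gcongr
    · exact Complex.abs_re_le_norm ζ
    · exact Hol.norm_ev_le _ _
    · exact Complex.abs_im_le_norm ζ
    · exact Hol.norm_ev_le _ _
  · exact (co.smul (by fun_prop)).integrable_of_hasCompactSupport om_hasCompactSupport.smul_right
  · refine ae_of_all _ fun ζ t _ => ?_
    rw [← smul_neg]
    refine HasDerivAt.const_smul _ ?_
    have hl : HasDerivAt (fun t : ℝ => z - t • ζ) (-((1:ℝ) • ζ)) t :=
      ((hasDerivAt_id t).smul_const ζ).const_sub z
    have := (hd (z - t • ζ)).comp_hasDerivAt t hl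
    rw [one_smul, map_neg, D_apply h1 h2] at this
    exact this

/-- `T` inverts `∂/∂x + J₀ ∂/∂y` up to the constant `omc` and a smoothing term. -/
theorem cT_dbar (hJ : ∀ v, J0 (J0 v) = -v) (hd : ∀ z, HasFDerivAt (fun z => Hol.ev z f) (D z) z)
    (h1 : ∀ z, D z 1 = Hol.ev z f1) (h2 : ∀ z, D z Complex.I = Hol.ev z f2) (z : ℂ) :
    Hol.ev z (cT J0 (f1 + Hol.post J0 f2)) = omc • Hol.ev z f - ∫ ζ, om ζ • Hol.ev (z - ζ) f := by
  have c0 := Hol.continuous_ev f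
  have c1 := Hol.continuous_ev f1
  have c2 := Hol.continuous_ev f2
  have co := om_contDiff.continuous
  have cI : ∀ g : ℂ → V, Continuous g → Integrable fun ζ => om ζ • g ζ := fun g hg =>
    (co.smul hg).integrable_of_hasCompactSupport om_hasCompactSupport.smul_right
  rw [cT, ev_opT]
  have e : ∀ t ∈ Ioc (0:ℝ) 1, kavg (thk J0) (fun ζ => Hol.ev ζ (f1 + Hol.post J0 f2)) t z =
      - ∫ ζ, -(om ζ • (ζ.re • Hol.ev (z - t • ζ) f1 + ζ.im • Hol.ev (z - t • ζ) f2)) := fun t ht => by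
    have r := congrArg J0 (rot_part hd h1 h2 ht.1 z)
    rw [map_zero, ← ContinuousLinearMap.integral_comp_comm _ (cI _ (by fun_prop))] at r
    rw [integral_neg, neg_neg, ← add_zero (∫ ζ, om ζ • _), ← r, ← integral_add (cI _ (by fun_prop))
      (J0.integrable_comp (cI _ (by fun_prop))), kavg]
    congr 1; ext1 ζ
    simp only [thk, map_add, Hol.ev_post, smul_apply, sub_apply, ContinuousLinearMap.id_apply,
      map_smul, hJ, ← smul_add, map_sub]
    congr 1
    module
  have ii : Continuous fun t : ℝ => ∫ ζ,
      -(om ζ • (ζ.re • Hol.ev (z - t • ζ) f1 + ζ.im • Hol.ev (z - t • ζ) f2)) := by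
    rw [← continuousOn_univ]
    refine continuousOn_integral_of_compact_support om_hasCompactSupport ?_ (fun p x _ hx => ?_)
    · apply Continuous.continuousOn
      change Continuous fun p : ℝ × ℂ => -(om p.2 • (p.2.re • Hol.ev (z - p.1 • p.2) f1 +
        p.2.im • Hol.ev (z - p.1 • p.2) f2))
      fun_prop
    · rw [image_eq_zero_of_notMem_tsupport hx]; simp
  have : ∫ t in (0:ℝ)..1, kavg (thk J0) (fun ζ => Hol.ev ζ (f1 + Hol.post J0 f2)) t z =
    ∫ t in (0:ℝ)..1, - ∫ ζ, -(om ζ • (ζ.re • Hol.ev (z - t • ζ) f1 + ζ.im • Hol.ev (z - t • ζ) f2)) :=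
    intervalIntegral.integral_congr_ae (ae_of_all _ fun t ht => by
      rw [uIoc_of_le zero_le_one] at ht; exact e t ht)
  rw [this, intervalIntegral.integral_neg, intervalIntegral.integral_eq_sub_of_hasDerivAt
    (fun t _ => radial_deriv hd h1 h2 z t) (ii.intervalIntegrable _ _)]
  simp [omc, integral_smul_const]

end Cauchy

/-! ### Families of holomorphic discs and adapted charts -/

section Discs

theorem contDiff_of_tsupport' {E F : Type} [NormedAddCommGroup E] [NormedSpace ℝ E]
    [NormedAddCommGroup F] [NormedSpace ℝ F] {f : E → F} {m : WithTop ℕ∞}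
    (h : ∀ x ∈ tsupport f, ContDiffAt ℝ m f x) : ContDiff ℝ m f := by
  rw [contDiff_iff_contDiffAt]
  intro x
  by_cases hx : x ∈ tsupport f
  · exact h x hx
  · exact contDiffAt_const.congr_of_eventuallyEq (notMem_tsupport_iff_eventuallyEq.1 hx)

/-- Inverse function theorem, with smoothness of the inverse at every point of the target. -/
theorem ift_smooth {E F : Type} [NormedAddCommGroup E] [NormedSpace ℝ E] [CompleteSpace E]
    [NormedAddCommGroup F] [NormedSpace ℝ F] {f : E → F} {a : E} {s : Set E} (hs : IsOpen s)
    (ha : a ∈ s) (hf : ∀ x ∈ s, ContDiffAt ℝ (⊤ : ℕ∞) f x) (f' : E ≃L[ℝ] F)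
    (hf' : HasFDerivAt f (f' : E →L[ℝ] F) a) :
    ∃ e : OpenPartialHomeomorph E F, a ∈ e.source ∧ e.source ⊆ s ∧ (∀ x, e x = f x) ∧
      ∀ y ∈ e.target, ContDiffAt ℝ (⊤ : ℕ∞) e.symm y := by
  have hfa := hf a ha
  set e0 := hfa.toOpenPartialHomeomorph f hf' (by simp)
  have hcont : ContinuousOn (fderiv ℝ f) s := fun x hx =>
    ((hf x hx).fderiv_right (m := 0) (by simp)).continuousAt.continuousWithinAt
  have ho : IsOpen (s ∩ fderiv ℝ f ⁻¹' (range ((↑) : (E ≃L[ℝ] F) → E →L[ℝ] F))) :=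
    hcont.isOpen_inter_preimage hs (ContinuousLinearEquiv.isOpen)
  refine ⟨e0.restrOpen _ ho, ⟨hfa.mem_toOpenPartialHomeomorph_source hf' (by simp), ha, ?_⟩,
    fun x hx => hx.2.1, fun x => rfl, fun y hy => ?_⟩
  · exact ⟨f', hf'.fderiv.symm⟩
  · have hx := (e0.restrOpen _ ho).map_target hy
    obtain ⟨g, hg⟩ := hx.2.2
    have hxs : (e0.restrOpen _ ho).symm y ∈ s := hx.2.1
    have hd : HasFDerivAt f (g : E →L[ℝ] F) ((e0.restrOpen _ ho).symm y) := by
      rw [hg]; exact ((hf _ hxs).differentiableAt (by simp)).hasFDerivAt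
    exact (e0.restrOpen _ ho).contDiffAt_symm hy hd (hf _ hxs)

variable {V : Type} [NormedAddCommGroup V] [NormedSpace ℝ V] [FiniteDimensional ℝ V]
  [CompleteSpace V]

theorem cT_post (J0 : V →L[ℝ] V) (f : Hol ℂ V) :
    cT J0 (Hol.post J0 f) = Hol.post J0 (cT J0 f) := by
  refine Hol.ext fun z => ?_
  have c := Hol.continuous_ev f
  rw [Hol.ev_post, cT, ev_opT, ev_opT, ← ContinuousLinearMap.intervalIntegral_comp_comm _
    ((kavg_continuous (thk_contDiff J0).continuous (thk_hasCompactSupport J0) c z).intervalIntegrable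
      _ _)]
  congr 1; ext1 t
  rw [kavg, kavg, ← ContinuousLinearMap.integral_comp_comm _
    (kavg_integrable (thk_contDiff J0).continuous (thk_hasCompactSupport J0) (by fun_prop))]
  congr 1; ext1 ζ
  simp [thk]

/-- The real-linear map `ℂ → V`, `z ↦ Re z • v + Im z • j`. -/
def zv (v j : V) : ℂ →L[ℝ] V := Complex.reCLM.smulRight v + Complex.imCLM.smulRight j

@[simp] theorem zv_apply (v j : V) (z : ℂ) : zv v j z = z.re • v + z.im • j := rfl

/-- The cut-off coefficient `J₀ - J` of the rescaled disc equation. -/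
theorem exists_coeff {J : V → V →L[ℝ] V} {M : Set V} (hM : IsOpen M)
    (hJs : ContDiffOn ℝ (⊤ : ℕ∞) J M) {p : V} (hp : p ∈ M) (v j : V) :
    ∃ ρ : ℝ, 0 < ρ ∧ ρ ≤ 1/4 ∧ ∃ G : ℝ × ℂ × V × V → V →L[ℝ] V, ContDiff ℝ (⊤ : ℕ∞) G ∧
      HasCompactSupport G ∧ (∀ y, y.1 = 0 → G y = 0) ∧ (∀ y, ρ ≤ ‖y.2.1‖ → G y = 0) ∧
      ∀ y, ‖y‖ ≤ ρ / 2 → p + y.1 • (zv v j y.2.1 + y.2.2.1 + y.2.2.2) ∈ M ∧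
        G y = J p - J (p + y.1 • (zv v j y.2.1 + y.2.2.1 + y.2.2.2)) := by
  set a : ℝ × ℂ × V × V → V := fun y => p + y.1 • (zv v j y.2.1 + y.2.2.1 + y.2.2.2) with ha
  have hac : ContDiff ℝ (⊤ : ℕ∞) a := by fun_prop
  have hn : a ⁻¹' M ∈ 𝓝 (0 : ℝ × ℂ × V × V) := by
    apply hac.continuous.continuousAt.preimage_mem_nhds
    have : a 0 = p := by simp [ha]
    rw [this]; exact hM.mem_nhds hp
  obtain ⟨ρ', hρ', hb⟩ := Metric.nhds_basis_closedBall.mem_iff.1 hn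
  set ρ := min ρ' (1/4) with hρ
  have hρ0 : 0 < ρ := by positivity
  let χ : ContDiffBump (0 : ℝ × ℂ × V × V) := ⟨ρ / 2, ρ, by positivity, by linarith⟩
  have hG0 : ∀ y, ρ ≤ ‖y‖ → χ y = 0 := fun y hy => χ.zero_of_le_dist (by simpa using hy)
  refine ⟨ρ, hρ0, min_le_right _ _, fun y => χ y • (J p - J (a y)), ?_, ?_, ?_, ?_, ?_⟩
  · refine contDiff_of_tsupport' fun y hy => ?_
    have hy' : y ∈ tsupport χ := tsupport_smul_subset_left _ _ hy
    rw [χ.tsupport_eq] at hy'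
    have : a y ∈ M := hb (closedBall_subset_closedBall (min_le_left _ _) hy')
    have h2 : ContDiffAt ℝ (⊤ : ℕ∞) (fun y => J (a y)) y :=
      (hJs.contDiffAt (hM.mem_nhds this)).comp y hac.contDiffAt
    exact χ.contDiff.contDiffAt.smul (contDiffAt_const.sub h2)
  · exact χ.hasCompactSupport.smul_right
  · intro y hy; simp [ha, hy]
  · intro y hy
    have : ‖y.2.1‖ ≤ ‖y‖ := (norm_fst_le y.2).trans (norm_snd_le y)
    simp [hG0 y (hy.trans this)]
  · intro y hy
    refine ⟨hb (closedBall_subset_closedBall (min_le_left ρ' (1 / 4)) ?_), ?_⟩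
    · rw [mem_closedBall, dist_zero_right]; linarith
    · beta_reduce
      rw [χ.one_of_mem_closedBall (by simpa [χ] using hy), one_smul]

end Discs

section Discs

variable {V : Type} [NormedAddCommGroup V] [NormedSpace ℝ V] [FiniteDimensional ℝ V]
  [CompleteSpace V]

/-- The argument `(δ, z + h, s, T ν / c)` of the coefficient, minus its affine part `z`. -/
def argA (J0 : V →L[ℝ] V) : (ℝ × ℂ × V) × Hol ℂ V →L[ℝ] Hol ℂ (ℝ × ℂ × V × V) :=
  ((Hol.const ℂ).comp ((ContinuousLinearMap.fst ℝ ℝ (ℂ × V)).prod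
    (((ContinuousLinearMap.fst ℝ ℂ V).comp (ContinuousLinearMap.snd ℝ ℝ (ℂ × V))).prod
      (((ContinuousLinearMap.snd ℝ ℂ V).comp (ContinuousLinearMap.snd ℝ ℝ (ℂ × V))).prod
        (0 : ℝ × ℂ × V →L[ℝ] V))))).coprod
  ((Hol.post ((0 : V →L[ℝ] ℝ).prod ((0 : V →L[ℝ] ℂ).prod ((0 : V →L[ℝ] V).prod
    (ContinuousLinearMap.id ℝ V))))).comp (omc⁻¹ • cT J0))

theorem ev_argA (J0 : V →L[ℝ] V) (q : ℝ × ℂ × V) (ν : Hol ℂ V) (z : ℂ) :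
    Hol.ev z (argA J0 (q, ν)) = (q.1, q.2.1, q.2.2, omc⁻¹ • Hol.ev z (cT J0 ν)) := by
  simp [argA]

/-- The fixed point equation `F = 0` for the density `ν`. -/
def eqF (J0 : V →L[ℝ] V) (j : V) (G : ℝ × ℂ × V × V → V →L[ℝ] V)
    (x : (ℝ × ℂ × V) × Hol ℂ V) : Hol ℂ V :=
  x.2 - Hol.app (nem G (fun z : ℂ => (0, z, 0, 0)) (argA J0 x))
    (Hol.const ℂ j + omc⁻¹ • cR J0 x.2)

variable {J0 : V →L[ℝ] V} {j : V} {G : ℝ × ℂ × V × V → V →L[ℝ] V}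

theorem iota_lip (x y : ℂ) : ‖((0, x, 0, 0) : ℝ × ℂ × V × V) - (0, y, 0, 0)‖ ≤ 1 * ‖x - y‖ := by
  simp [Prod.norm_def]

theorem ev_eqF (hG : ContDiff ℝ (⊤ : ℕ∞) G) (hc : HasCompactSupport G)
    (q : ℝ × ℂ × V) (ν : Hol ℂ V) (z : ℂ) :
    Hol.ev z (eqF J0 j G (q, ν)) = Hol.ev z ν -
      G (q.1, z + q.2.1, q.2.2, omc⁻¹ • Hol.ev z (cT J0 ν)) (j + omc⁻¹ • Hol.ev z (cR J0 ν)) := by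
  simp only [eqF, map_sub, Hol.ev_app, ev_nem hG hc iota_lip zero_le_one, ev_argA, map_add,
    Hol.ev_const, map_smul]
  simp

theorem contDiff_eqF (hG : ContDiff ℝ (⊤ : ℕ∞) G) (hc : HasCompactSupport G) :
    ContDiff ℝ (⊤ : ℕ∞) (eqF J0 j G) := by
  have h1 : ContDiff ℝ (⊤ : ℕ∞) fun x : (ℝ × ℂ × V) × Hol ℂ V =>
      nem G (fun z : ℂ => (0, z, 0, 0)) (argA J0 x) :=
    (contDiff_nem hG hc iota_lip zero_le_one).comp (argA J0).contDiff
  have h2 : ContDiff ℝ (⊤ : ℕ∞) fun x : (ℝ × ℂ × V) × Hol ℂ V =>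
      Hol.app (nem G (fun z : ℂ => (0, z, 0, 0)) (argA J0 x)) :=
    (Hol.app (V := ℂ) (E := V) (F := V)).contDiff.comp h1
  have h3 : ContDiff ℝ (⊤ : ℕ∞) fun x : (ℝ × ℂ × V) × Hol ℂ V =>
      Hol.const ℂ j + omc⁻¹ • cR J0 x.2 :=
    contDiff_const.add (((cR J0).contDiff.comp contDiff_snd).const_smul _)
  exact contDiff_snd.sub (h2.clm_apply h3)

/-- A block triangular isomorphism with identity diagonal blocks. -/
def shear {E F : Type} [NormedAddCommGroup E] [NormedSpace ℝ E] [NormedAddCommGroup F]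
    [NormedSpace ℝ F] (B : E →L[ℝ] F) : (E × F) ≃L[ℝ] (E × F) :=
  ContinuousLinearEquiv.equivOfInverse
    ((ContinuousLinearMap.fst ℝ E F).prod
      (ContinuousLinearMap.snd ℝ E F + B.comp (ContinuousLinearMap.fst ℝ E F)))
    ((ContinuousLinearMap.fst ℝ E F).prod
      (ContinuousLinearMap.snd ℝ E F - B.comp (ContinuousLinearMap.fst ℝ E F)))
    (fun x => by ext <;> simp) (fun x => by ext <;> simp)

theorem hasFDerivAt_shear {E F : Type} [NormedAddCommGroup E] [NormedSpace ℝ E]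
    [NormedAddCommGroup F] [NormedSpace ℝ F] {f : E × F → F} {L : E × F →L[ℝ] F}
    (hf : HasFDerivAt f L 0) (h0 : ∀ᶠ y in 𝓝 (0:F), f (0, y) = y) :
    HasFDerivAt (fun x : E × F => (x.1, f x))
      (shear (L.comp (ContinuousLinearMap.inl ℝ E F)) : E × F →L[ℝ] E × F) 0 := by
  have h1 : HasFDerivAt (fun x : E × F => (x.1, f x))
      ((ContinuousLinearMap.fst ℝ E F).prod L) 0 := hasFDerivAt_fst.prodMk hf
  convert! h1 using 1
  have h2 : HasFDerivAt (fun y : F => f (0, y)) (L.comp (ContinuousLinearMap.inr ℝ E F)) 0 :=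
    HasFDerivAt.comp (0:F) (f := fun y : F => ((0:E), y)) hf (hasFDerivAt_prodMk_right (0:E) (0:F))
  have h3 : HasFDerivAt (fun y : F => f (0, y)) (ContinuousLinearMap.id ℝ F) 0 :=
    (hasFDerivAt_id (0:F)).congr_of_eventuallyEq h0
  have h4 := h2.unique h3
  refine ContinuousLinearMap.ext fun x => Prod.ext rfl ?_
  have e1 : L (x.1, x.2) = L (x.1, 0) + L (0, x.2) := by rw [← map_add]; simp
  have e2 : L (0, x.2) = x.2 := by simpa using congrArg (fun M => M x.2) h4
  change x.2 + L (x.1, 0) = L (x.1, x.2)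
  rw [e1, e2, add_comm]

/-- Solutions of the fixed point equation, depending smoothly on the parameters `(δ, h, s)` and
equivariant under translations. -/
theorem exists_density (hG : ContDiff ℝ (⊤ : ℕ∞) G) (hc : HasCompactSupport G)
    (hG0 : ∀ y, y.1 = 0 → G y = 0) :
    ∃ r : ℝ, 0 < r ∧ ∃ ν : ℝ × ℂ × V → Hol ℂ V,
      (∀ q, ‖q‖ < r → ContDiffAt ℝ (⊤ : ℕ∞) ν q) ∧
      (∀ q, ‖q‖ < r → q.1 = 0 → ν q = 0) ∧
      (∀ q z, ‖q‖ < r → Hol.ev z (ν q) =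
        G (q.1, z + q.2.1, q.2.2, omc⁻¹ • Hol.ev z (cT J0 (ν q)))
          (j + omc⁻¹ • Hol.ev z (cR J0 (ν q)))) ∧
      ∀ δ h s, ‖((δ, h, s) : ℝ × ℂ × V)‖ < r → ν (δ, h, s) = Hol.shift h (ν (δ, 0, s)) := by
  have hF := contDiff_eqF (J0 := J0) (j := j) hG hc
  have hF0 : ∀ q ν, q.1 = 0 → eqF J0 j G (q, ν) = ν := fun q ν hq =>
    Hol.ext fun z => by rw [ev_eqF hG hc, hG0 _ hq]; simp
  have hd := hasFDerivAt_shear (hF.differentiable (by simp) 0).hasFDerivAt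
    (Eventually.of_forall fun ν => hF0 0 ν rfl)
  obtain ⟨e, he0, -, hef, hes⟩ := ift_smooth isOpen_univ (mem_univ 0)
    (fun x _ => (contDiff_fst.prodMk hF).contDiffAt) _ hd
  have hez : e 0 = 0 := by rw [hef]; exact Prod.ext rfl (hF0 0 0 rfl)
  have hes0 : e.symm 0 = 0 := by
    have := e.left_inv he0
    rwa [hez] at this
  have ht0 : (0 : (ℝ × ℂ × V) × Hol ℂ V) ∈ e.target := by
    have := e.map_source he0
    rwa [hez] at this
  have hi : Continuous fun q : ℝ × ℂ × V => (q, (0 : Hol ℂ V)) := by fun_prop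
  obtain ⟨r1, hr1, hb1⟩ := Metric.mem_nhds_iff.1 (e.open_source.mem_nhds he0)
  set ν : ℝ × ℂ × V → Hol ℂ V := fun q => (e.symm (q, 0)).2 with hν
  have hsm : ∀ q, (q, (0 : Hol ℂ V)) ∈ e.target → ContDiffAt ℝ (⊤ : ℕ∞) ν q := fun q hq =>
    contDiff_snd.contDiffAt.comp q ((hes _ hq).comp q
      ((contDiff_id.prodMk contDiff_const).contDiffAt))
  have hν0 : ν 0 = 0 := by change (e.symm 0).2 = 0; rw [hes0]; rfl
  have ev1 : ∀ᶠ q in 𝓝 (0 : ℝ × ℂ × V), (q, (0 : Hol ℂ V)) ∈ e.target :=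
    hi.continuousAt.preimage_mem_nhds (e.open_target.mem_nhds ht0)
  have ev2 : ∀ᶠ q in 𝓝 (0 : ℝ × ℂ × V), ‖ν q‖ < r1 := by
    have : ContinuousAt ν 0 := (hsm 0 ht0).continuousAt
    have h2 := this.norm.tendsto
    rw [hν0, norm_zero] at h2
    exact h2.eventually_lt_const hr1
  obtain ⟨r2, hr2, hb2⟩ := Metric.mem_nhds_iff.1 (ev1.and ev2)
  have key : ∀ q, (q, (0 : Hol ℂ V)) ∈ e.target → eqF J0 j G (q, ν q) = 0 ∧
      e.symm (q, 0) = (q, ν q) := fun q hq => by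
    have h1 := e.right_inv hq
    rw [hef] at h1
    have h2 : (e.symm (q, 0)).1 = q := congrArg Prod.fst h1
    have h3 : e.symm (q, 0) = (q, ν q) := Prod.ext h2 rfl
    refine ⟨?_, h3⟩
    rw [← h3]; exact congrArg Prod.snd h1
  have uniq : ∀ q μ, (q, (0 : Hol ℂ V)) ∈ e.target → ‖q‖ < r1 → ‖μ‖ < r1 →
      eqF J0 j G (q, μ) = 0 → μ = ν q := fun q μ hq h1 h2 h3 => by
    have hs : (q, μ) ∈ e.source := hb1 (by
      rw [mem_ball, dist_zero_right, Prod.norm_def]; exact max_lt h1 h2)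
    have h4 : e (q, μ) = (q, 0) := by rw [hef]; simp [h3]
    have h5 := e.left_inv hs
    rw [h4, (key q hq).2] at h5
    exact (congrArg Prod.snd h5).symm
  have mem : ∀ q, ‖q‖ < min r1 r2 → ‖q‖ < r1 ∧ (q, (0 : Hol ℂ V)) ∈ e.target ∧ ‖ν q‖ < r1 :=
    fun q hq => ⟨hq.trans_le (min_le_left _ _), hb2 (by
      rw [mem_ball, dist_zero_right]; exact hq.trans_le (min_le_right _ _))⟩
  refine ⟨min r1 r2, lt_min hr1 hr2, ν, fun q hq => hsm q (mem q hq).2.1, fun q hq h => ?_,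
    fun q z hq => ?_, fun δ h s hq => ?_⟩
  · rw [← hF0 q (ν q) h]; exact (key q (mem q hq).2.1).1
  · have := congrArg (Hol.ev z) (key q (mem q hq).2.1).1
    rw [ev_eqF hG hc, map_zero, sub_eq_zero] at this
    exact this
  · have hq0 : ‖((δ, 0, s) : ℝ × ℂ × V)‖ < min r1 r2 := by
      refine lt_of_le_of_lt ?_ hq
      simp only [Prod.norm_def, norm_zero]
      gcongr
      exact norm_nonneg _
    refine (uniq _ _ (mem _ hq).2.1 (mem _ hq).1
      ((Hol.norm_shift_le h _).trans_lt (mem _ hq0).2.2) ?_).symm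
    have h0 := (key _ (mem _ hq0).2.1).1
    refine Hol.ext fun z => ?_
    have h1 := congrArg (Hol.ev (z + h)) h0
    rw [ev_eqF hG hc, map_zero] at h1
    rw [ev_eqF hG hc, map_zero, ← h1, cT, opT_shift, cR, opR_shift]
    simp

end Discs

section Discs

variable {V : Type} [NormedAddCommGroup V] [NormedSpace ℝ V] [FiniteDimensional ℝ V]
  [CompleteSpace V]

/-- The family of correction terms `μ (δ, z, s)` such that
`z ↦ p + δ • (z • v + s + μ (δ, z, s))` is `J`-holomorphic. The holomorphy equation
`∂_y = J ∂_x` is stated after division by `δ`. -/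
theorem exists_corr {J : V → V →L[ℝ] V} {M : Set V} (hM : IsOpen M)
    (hJs : ContDiffOn ℝ (⊤ : ℕ∞) J M) (hsq : ∀ x ∈ M, ∀ v, J x (J x v) = -v)
    {p : V} (hp : p ∈ M) (v : V) :
    ∃ r : ℝ, 0 < r ∧ ∃ μ : ℝ × ℂ × V → V,
      (∀ q, ‖q‖ < r → ContDiffAt ℝ (⊤ : ℕ∞) μ q) ∧
      (∀ q, ‖q‖ < r → q.1 = 0 → μ q = 0) ∧
      ∀ q, ‖q‖ < r → p + q.1 • (zv v (J p v) q.2.1 + q.2.2 + μ q) ∈ M ∧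
        J p v + fderiv ℝ μ q (0, Complex.I, 0) =
          J (p + q.1 • (zv v (J p v) q.2.1 + q.2.2 + μ q)) (v + fderiv ℝ μ q (0, 1, 0)) := by
  set J0 := J p with hJ0
  set j := J0 v with hj
  obtain ⟨ρ, hρ, hρ4, G, hG, hc, hG0, hGρ, hGv⟩ := exists_coeff hM hJs hp v j
  obtain ⟨r0, hr0, ν, hνs, hν0, hνe, hνt⟩ := exists_density (J0 := J0) (j := j) hG hc hG0
  have hJJ : ∀ v, J0 (J0 v) = -v := hsq p hp
  set Λ : Hol ℂ V →L[ℝ] V := omc⁻¹ • (Hol.ev 0).comp (cT J0) with hΛ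
  set μ : ℝ × ℂ × V → V := fun q => Λ (ν q) with hμ
  have hμs : ∀ q, ‖q‖ < r0 → ContDiffAt ℝ (⊤ : ℕ∞) μ q := fun q hq =>
    Λ.contDiff.contDiffAt.comp q (hνs q hq)
  have hμ0 : ∀ q, ‖q‖ < r0 → q.1 = 0 → μ q = 0 := fun q hq h => by
    simp only [hμ, hν0 q hq h, map_zero]
  have hev : ∀ᶠ q in 𝓝 (0 : ℝ × ℂ × V), ‖μ q‖ < ρ / 2 := by
    have h2 := (hμs 0 (by simpa using hr0)).continuousAt.norm.tendsto
    rw [hμ0 0 (by simpa using hr0) rfl, norm_zero] at h2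
    exact h2.eventually_lt_const (by positivity)
  obtain ⟨r1, hr1, hb1⟩ := Metric.mem_nhds_iff.1 hev
  set r := min r0 (min r1 (ρ / 2)) with hr
  have hrp : 0 < r := by positivity
  have hrr0 : r ≤ r0 := min_le_left _ _
  have hrr1 : r ≤ r1 := (min_le_right _ _).trans (min_le_left _ _)
  have hrρ : r ≤ ρ / 2 := (min_le_right _ _).trans (min_le_right _ _)
  refine ⟨r, hrp, μ, fun q hq => hμs q (hq.trans_le hrr0),
    fun q hq => hμ0 q (hq.trans_le hrr0), ?_⟩
  rintro ⟨δ, z, s⟩ hq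
  have hqn : ‖δ‖ < r ∧ ‖z‖ < r ∧ ‖s‖ < r := by
    simpa [Prod.norm_def] using hq
  have hq3 : ∀ h : ℂ, ‖h‖ < r → ‖((δ, h, s) : ℝ × ℂ × V)‖ < r := fun h hh => by
    rw [Prod.norm_def, Prod.norm_def]; exact max_lt hqn.1 (max_lt hh hqn.2.2)
  have hq0 := hq3 0 (by simpa using hrp)
  set f := ν (δ, 0, s) with hf
  have hsh : ∀ h : ℂ, ‖h‖ < r → ν (δ, h, s) = Hol.shift h f := fun h hh =>
    hνt _ _ _ ((hq3 h hh).trans_le hrr0)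
  set ιδ : ℂ →L[ℝ] ℝ × ℂ × V := (ContinuousLinearMap.inr ℝ ℝ (ℂ × V)).comp
    (ContinuousLinearMap.inl ℝ ℂ V) with hι
  have hιd : ∀ h : ℂ, HasFDerivAt (fun h : ℂ => ((δ, h, s) : ℝ × ℂ × V)) ιδ h := fun h =>
    (hasFDerivAt_prodMk_right δ (h, s)).comp h (hasFDerivAt_prodMk_left h s)
  set D0 : ℂ →L[ℝ] Hol ℂ V := (fderiv ℝ ν (δ, 0, s)).comp ιδ with hD0
  have hνd : HasFDerivAt (fun h : ℂ => ν (δ, h, s)) D0 0 :=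
    HasFDerivAt.comp (0:ℂ) (f := fun h : ℂ => ((δ, h, s) : ℝ × ℂ × V))
      ((hνs _ (hq0.trans_le hrr0)).differentiableAt (by simp)).hasFDerivAt (hιd 0)
  have hsub : ∀ w : ℂ, HasFDerivAt (fun x : ℂ => ν (δ, x - w, s)) D0 w := fun w => by
    have h1 : HasFDerivAt (fun x : ℂ => x - w) (ContinuousLinearMap.id ℝ ℂ) w :=
      (hasFDerivAt_id w).sub_const w
    have h2 : HasFDerivAt (fun h : ℂ => ν (δ, h, s)) D0 (w - w) := by rw [sub_self]; exact hνd
    exact HasFDerivAt.comp w (f := fun x : ℂ => x - w) h2 h1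
  have hnear : ∀ w : ℂ, ∀ᶠ x in 𝓝 w, ‖x - w‖ < r := fun w => by
    have : Tendsto (fun x : ℂ => ‖x - w‖) (𝓝 w) (𝓝 0) := by
      have : Continuous fun x : ℂ => ‖x - w‖ := by fun_prop
      simpa using this.tendsto w
    exact this.eventually_lt_const hrp
  -- translating the solution amounts to moving the parameter `h`, so smoothness of `ν` in `h` makes
  -- the Hölder map `f` differentiable in `z`
  have hfd : ∀ w : ℂ, HasFDerivAt (fun x => Hol.ev x f) ((Hol.ev w).comp D0) w := fun w => by
    refine ((Hol.ev w).hasFDerivAt.comp w (hsub w)).congr_of_eventuallyEq ?_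
    filter_upwards [hnear w] with x hx
    simp only [Function.comp]
    rw [hsh _ hx, Hol.ev_shift]
    congr 1; ring_nf
  have hμe : ∀ h : ℂ, ‖h‖ < r → μ (δ, h, s) = omc⁻¹ • Hol.ev h (cT J0 f) := fun h hh => by
    simp only [hμ, hΛ, smul_apply, ContinuousLinearMap.comp_apply]
    rw [hsh h hh, cT, opT_shift]; simp
  have hμd : HasFDerivAt (fun h : ℂ => μ (δ, h, s))
      (omc⁻¹ • (Hol.ev z).comp ((cT J0).comp D0)) z := by
    have h1 := (omc⁻¹ • (Hol.ev z).comp (cT J0) : Hol ℂ V →L[ℝ] V).hasFDerivAt.comp z (hsub z)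
    refine HasFDerivAt.congr_of_eventuallyEq (f := fun x : ℂ =>
      (omc⁻¹ • (Hol.ev z).comp (cT J0) : Hol ℂ V →L[ℝ] V) (ν (δ, x - z, s))) ?_ ?_
    · exact h1
    filter_upwards [hnear z, isOpen_ball.mem_nhds (show z ∈ ball (0:ℂ) r by simpa using hqn.2.1)]
      with x hx hx2
    rw [hμe x (by simpa using hx2), hsh _ hx]
    simp only [smul_apply, ContinuousLinearMap.comp_apply]
    rw [cT, opT_shift, Hol.ev_shift]
    congr 2; ring_nf
  have hμd' := HasFDerivAt.comp z (f := fun h : ℂ => ((δ, h, s) : ℝ × ℂ × V))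
    ((hμs _ (hq.trans_le hrr0)).differentiableAt (by simp)).hasFDerivAt (hιd z)
  have hLe := hμd'.unique hμd
  have hL : ∀ e : ℂ, fderiv ℝ μ (δ, z, s) (0, e, 0) = omc⁻¹ • Hol.ev z (cT J0 (D0 e)) := fun e => by
    simpa [hι] using congrArg (fun A => A e) hLe
  -- the smoothing term of `cT_dbar` vanishes: the density `f` lives on `|z| < ρ ≤ 1/4`, whereas
  -- `om` is zero on `|ζ| ≤ 1/2`
  have hintg : ∫ ζ, om ζ • Hol.ev (z - ζ) f = 0 := by
    rw [← integral_zero ℂ V]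
    congr 1; ext1 ζ
    by_cases hζ : ‖ζ‖ ≤ 1/2
    · rw [om_eq_zero_of_small hζ, zero_smul]
    · rw [hf, hνe _ _ (hq0.trans_le hrr0), hGρ]
      · simp
      · simp only [add_zero]
        push Not at hζ
        have := norm_sub_norm_le ζ z
        rw [norm_sub_rev] at this
        linarith [hqn.2.1]
  have hdb := cT_dbar hJJ hfd (f1 := D0 1) (f2 := D0 Complex.I) (fun _ => rfl) (fun _ => rfl) z
  rw [hintg, sub_zero, map_add, cT_post, map_add, Hol.ev_post] at hdb
  have e1 : fderiv ℝ μ (δ, z, s) (0, 1, 0) + J0 (fderiv ℝ μ (δ, z, s) (0, Complex.I, 0)) =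
      Hol.ev z f := by
    rw [hL, hL, map_smul, ← smul_add, hdb, smul_smul, inv_mul_cancel₀ omc_pos.ne', one_smul]
  have e2 : fderiv ℝ μ (δ, z, s) (0, Complex.I, 0) = omc⁻¹ • Hol.ev z (cR J0 f) := by
    rw [hL, cR_eq (f2 := D0 Complex.I) hfd (fun _ => rfl)]
  have e3 := hνe _ z (hq0.trans_le hrr0)
  simp only [add_zero] at e3
  rw [← hf, ← hμe z hqn.2.1, ← e2] at e3
  have hn : ‖((δ, z, s, μ (δ, z, s)) : ℝ × ℂ × V × V)‖ ≤ ρ / 2 := by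
    simp only [Prod.norm_def]
    have : ‖μ (δ, z, s)‖ < ρ / 2 := hb1 (by rw [mem_ball, dist_zero_right]; exact hq.trans_le hrr1)
    refine max_le ?_ (max_le ?_ (max_le ?_ this.le)) <;> linarith
  obtain ⟨hx, hGx⟩ := hGv _ hn
  refine ⟨hx, ?_⟩
  simp only at hGx hx ⊢
  set x := p + δ • (zv v j z + s + μ (δ, z, s)) with hxd
  rw [hGx] at e3
  have e4 : v + fderiv ℝ μ (δ, z, s) (0, 1, 0) =
      - J x (j + fderiv ℝ μ (δ, z, s) (0, Complex.I, 0)) := by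
    rw [← e1] at e3
    rw [sub_apply, map_add J0, hj, hJJ] at e3
    rw [hj]
    have := congrArg (fun y => y + v - J0 (fderiv ℝ μ (δ, z, s) (0, Complex.I, 0))) e3
    rw [show v + fderiv ℝ μ (δ, z, s) (0, 1, 0) = fderiv ℝ μ (δ, z, s) (0, 1, 0) +
      J0 (fderiv ℝ μ (δ, z, s) (0, Complex.I, 0)) + v -
        J0 (fderiv ℝ μ (δ, z, s) (0, Complex.I, 0)) by abel, this]
    abel
  rw [e4, map_neg, hsq x hx, neg_neg]

end Discs

section Discs

variable {V : Type} [NormedAddCommGroup V] [NormedSpace ℝ V] [FiniteDimensional ℝ V]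
  [CompleteSpace V]

/-- A smooth chart `Φ : U → N ⊆ M` of a neighbourhood `N` of `p` in which the affine planes parallel
to `span (v, j)` are mapped to `J`-holomorphic curves; moreover `∂_v Φ` is `η`-close to `v`. -/
structure HChart (J : V → V →L[ℝ] V) (M : Set V) (p v j : V) (η : ℝ) where
  Φ : V → V
  inv : V → V
  U : Set V
  N : Set V
  hU : IsOpen U
  hN : IsOpen N
  hp : p ∈ N
  hNM : N ⊆ M
  maps : ∀ y ∈ U, Φ y ∈ N
  left_inv : ∀ y ∈ U, inv (Φ y) = y
  smooth : ∀ y ∈ U, ContDiffAt ℝ (⊤ : ℕ∞) Φ y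
  CR : ∀ y ∈ U, fderiv ℝ Φ y j = J (Φ y) (fderiv ℝ Φ y v)
  close : ∀ y ∈ U, ‖fderiv ℝ Φ y v - v‖ ≤ η
  maps_inv : ∀ x ∈ N, inv x ∈ U
  right_inv : ∀ x ∈ N, Φ (inv x) = x
  smooth_inv : ∀ x ∈ N, ContDiffAt ℝ (⊤ : ℕ∞) inv x

/-- A real-linear map `ℓ : V → ℂ` with `ℓ v = 1` and `ℓ (J₀ v) = i`. -/
theorem exists_ell (J0 : V →L[ℝ] V) (hJJ : ∀ v, J0 (J0 v) = -v) {v : V} (hv : v ≠ 0) :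
    ∃ ℓ : V →L[ℝ] ℂ, ℓ v = 1 ∧ ℓ (J0 v) = Complex.I := by
  obtain ⟨g, hg⟩ := SeparatingDual.exists_eq_one (R := ℝ) hv
  set a := g (J0 v) with ha
  -- `f v = 1` and `f (J0 v) = 0`
  set f : V →L[ℝ] ℝ := (1 + a ^ 2)⁻¹ • (g + a • g.comp J0) with hf
  have h1 : (1 + a ^ 2) ≠ 0 := by positivity
  have f1 : f v = 1 := by
    simp only [hf, smul_apply, add_apply, ContinuousLinearMap.comp_apply, hg, ← ha, smul_eq_mul]
    field_simp
  have f2 : f (J0 v) = 0 := by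
    simp only [hf, smul_apply, add_apply, ContinuousLinearMap.comp_apply, hJJ, ← ha, map_neg, hg,
      smul_eq_mul]
    ring
  refine ⟨Complex.ofRealCLM.comp f - (f.comp J0).smulRight Complex.I, ?_, ?_⟩
  · simp [f1, f2]
  · simp [f1, f2, hJJ]

/-- Adapted charts exist for every direction `v ≠ 0` and every precision `η`. With `μ` the correction
of `exists_corr` and `y = ℓ y • v + P y`, the chart is
`Φ y = p + δ (y/δ + μ (δ, ℓ (y/δ), P (y/δ)))`. It is invertible near the origin for a small `δ > 0`
by the inverse function theorem applied to `(δ, y) ↦ (δ, y + μ (δ, ℓ y, P y))`, which is the identity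
on `δ = 0`. -/
theorem exists_chart {J : V → V →L[ℝ] V} {M : Set V} (hM : IsOpen M)
    (hJs : ContDiffOn ℝ (⊤ : ℕ∞) J M) (hsq : ∀ x ∈ M, ∀ v, J x (J x v) = -v)
    {p : V} (hp : p ∈ M) {v : V} (hv : v ≠ 0) {η : ℝ} (hη : 0 < η) :
    Nonempty (HChart J M p v (J p v) η) := by
  obtain ⟨r, hr, μ, hμs, hμ0, hμe⟩ := exists_corr hM hJs hsq hp v
  set j := J p v with hj
  obtain ⟨ℓ, hℓ1, hℓ2⟩ := exists_ell (J p) (hsq p hp) hv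
  set P : V →L[ℝ] V := ContinuousLinearMap.id ℝ V - (zv v j).comp ℓ with hP
  have hPv : P v = 0 := by simp [hP, hℓ1]
  have hPj : P j = 0 := by simp [hP, hj, hℓ2]
  have hPy : ∀ y, zv v j (ℓ y) + P y = y := fun y => by
    simp only [hP, sub_apply, ContinuousLinearMap.comp_apply, ContinuousLinearMap.id_apply]; abel
  have hμd : ∀ q, ‖q‖ < r → HasFDerivAt μ (fderiv ℝ μ q) q := fun q hq =>
    ((hμs q hq).differentiableAt (by simp)).hasFDerivAt
  -- the `z`-derivative of `μ` vanishes at the origin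
  have hL0 : fderiv ℝ μ 0 (0, 1, 0) = 0 := by
    have h1 := (hμd 0 (by simpa using hr)).comp_hasDerivAt_of_eq (0:ℝ)
      (f := fun t : ℝ => t • ((0, 1, 0) : ℝ × ℂ × V))
      ((hasDerivAt_id (0:ℝ)).smul_const ((0, 1, 0) : ℝ × ℂ × V)) (by simp)
    have h2 : HasDerivAt (fun _ : ℝ => (0 : V)) 0 0 := hasDerivAt_const _ _
    have h3 : μ ∘ (fun t : ℝ => t • ((0, 1, 0) : ℝ × ℂ × V)) =ᶠ[𝓝 0] fun _ => (0:V) := by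
      have hc : Continuous fun t : ℝ => ‖t • ((0, 1, 0) : ℝ × ℂ × V)‖ := by fun_prop
      have := hc.tendsto 0
      simp only [zero_smul, norm_zero] at this
      filter_upwards [this.eventually_lt_const hr] with t ht
      exact hμ0 _ ht (by simp)
    simpa using (h2.congr_of_eventuallyEq h3).unique h1 |>.symm
  have hcl : ∀ᶠ q in 𝓝 (0 : ℝ × ℂ × V), ‖fderiv ℝ μ q (0, 1, 0)‖ < η := by
    have h1 : ContinuousAt (fun q => fderiv ℝ μ q (0, 1, 0)) 0 :=
      (((hμs 0 (by simpa using hr)).fderiv_right (m := 0) (by simp)).continuousAt).clm_apply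
        continuousAt_const
    have h2 := h1.norm.tendsto
    rw [hL0, norm_zero] at h2
    exact h2.eventually_lt_const hη
  obtain ⟨r1, hr1, hb1⟩ := Metric.mem_nhds_iff.1 (hcl.and (ball_mem_nhds (0 : ℝ × ℂ × V) hr))
  set Q : ℝ × V →L[ℝ] ℝ × ℂ × V := (ContinuousLinearMap.fst ℝ ℝ V).prod
    ((ℓ.prod P).comp (ContinuousLinearMap.snd ℝ ℝ V)) with hQ
  have hQa : ∀ δ y, Q (δ, y) = (δ, ℓ y, P y) := fun _ _ => rfl
  set s : Set (ℝ × V) := Q ⁻¹' ball 0 r1 with hs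
  have hso : IsOpen s := isOpen_ball.preimage Q.continuous
  have hsr : ∀ x ∈ s, ‖Q x‖ < r ∧ ‖fderiv ℝ μ (Q x) (0, 1, 0)‖ < η := fun x hx => by
    have := hb1 hx
    exact ⟨by simpa using this.2, this.1⟩
  set F : ℝ × V → V := fun x => x.2 + μ (Q x) with hF
  have hFs : ∀ x ∈ s, ContDiffAt ℝ (⊤ : ℕ∞) F x := fun x hx =>
    contDiffAt_snd.add ((hμs _ (hsr x hx).1).comp x Q.contDiff.contDiffAt)
  have h0s : (0 : ℝ × V) ∈ s := by simp [hs, hr1]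
  -- as `F (0, y) = y`, the derivative of `(δ, y) ↦ (δ, F (δ, y))` at the origin is a shear
  have hFd := hasFDerivAt_shear ((hFs 0 h0s).differentiableAt (by simp)).hasFDerivAt (by
    have hc : Continuous fun y : V => ((0:ℝ), y) := by fun_prop
    filter_upwards [hc.continuousAt.preimage_mem_nhds (hso.mem_nhds h0s)] with y hy
    simp only [hF]
    rw [hμ0 _ (hsr _ hy).1 rfl, add_zero])
  obtain ⟨e, he0, hes, hef, hesm⟩ := ift_smooth hso h0s
    (fun x hx => contDiffAt_fst.prodMk (hFs x hx)) _ hFd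
  have he00 : e 0 = 0 := by
    rw [hef]; refine Prod.ext rfl ?_
    simp only [hF, map_zero]; rw [hμ0 0 (by simpa using hr) rfl]; simp
  have ht0 : (0 : ℝ × V) ∈ e.target := by
    have := e.map_source he0
    rwa [he00] at this
  obtain ⟨δ, hδt, hδ⟩ : ∃ δ : ℝ, ((δ, 0) : ℝ × V) ∈ e.target ∧ 0 < δ := by
    have hc : Continuous fun δ : ℝ => (δ, (0:V)) := by fun_prop
    have h1 : ∀ᶠ δ in 𝓝[>] (0:ℝ), ((δ, 0) : ℝ × V) ∈ e.target :=
      nhdsWithin_le_nhds (hc.continuousAt.preimage_mem_nhds (e.open_target.mem_nhds ht0))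
    exact (h1.and self_mem_nhdsWithin).exists
  have hef' : ∀ y, e (δ, y) = (δ, F (δ, y)) := fun y => hef _
  have hsym : ∀ x, ((δ, x) : ℝ × V) ∈ e.target →
      e.symm (δ, x) = (δ, (e.symm (δ, x)).2) := fun x hx => by
    have h1 := e.right_inv hx
    rw [hef] at h1
    have h2 : (e.symm (δ, x)).1 = δ := congrArg Prod.fst h1
    exact Prod.ext h2 rfl
  set Φ : V → V := fun y => p + δ • F (δ, δ⁻¹ • y) with hΦ
  have hδs : ContDiff ℝ (⊤ : ℕ∞) fun y : V => ((δ, δ⁻¹ • y) : ℝ × V) := by fun_prop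
  have hδi : ContDiff ℝ (⊤ : ℕ∞) fun x : V => ((δ, δ⁻¹ • (x - p)) : ℝ × V) := by fun_prop
  have hback : ∀ y, δ⁻¹ • (Φ y - p) = F (δ, δ⁻¹ • y) := fun y => by
    simp only [hΦ, add_sub_cancel_left, smul_smul, inv_mul_cancel₀ hδ.ne', one_smul]
  have hpt : ∀ y, p + δ • (zv v j (ℓ (δ⁻¹ • y)) + P (δ⁻¹ • y) + μ (Q (δ, δ⁻¹ • y))) = Φ y :=
    fun y => by rw [hPy]
  have hder : ∀ y, ((δ, δ⁻¹ • y) : ℝ × V) ∈ e.source → ∀ w, fderiv ℝ Φ y w =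
      w + fderiv ℝ μ (Q (δ, δ⁻¹ • y)) (0, ℓ w, P w) := fun y hy w => by
    have h1 : HasFDerivAt (fun y : V => ((δ, δ⁻¹ • y) : ℝ × V))
        ((ContinuousLinearMap.inr ℝ ℝ V).comp (δ⁻¹ • ContinuousLinearMap.id ℝ V)) y :=
      (hasFDerivAt_prodMk_right δ (δ⁻¹ • y)).comp y
        ((δ⁻¹ • ContinuousLinearMap.id ℝ V).hasFDerivAt)
    have h2 : HasFDerivAt F ((ContinuousLinearMap.snd ℝ ℝ V) +
        (fderiv ℝ μ (Q (δ, δ⁻¹ • y))).comp Q) (δ, δ⁻¹ • y) :=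
      hasFDerivAt_snd.add ((hμd _ (hsr _ (hes hy)).1).comp _ Q.hasFDerivAt)
    have h3 := (((h2.comp y h1).const_smul δ).const_add p).fderiv
    have h4 : fderiv ℝ Φ y = _ := h3
    rw [h4]
    have h5 : Q (0, δ⁻¹ • w) = δ⁻¹ • ((0, ℓ w, P w) : ℝ × ℂ × V) := by
      rw [hQa]; simp
    simp only [smul_apply, ContinuousLinearMap.comp_apply, add_apply,
      ContinuousLinearMap.inr_apply, ContinuousLinearMap.id_apply, ContinuousLinearMap.coe_snd']
    rw [h5, map_smul, ← smul_add, smul_smul, mul_inv_cancel₀ hδ.ne', one_smul]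
  refine ⟨⟨Φ, fun x => δ • (e.symm (δ, δ⁻¹ • (x - p))).2,
    (fun y : V => ((δ, δ⁻¹ • y) : ℝ × V)) ⁻¹' e.source,
    (fun x : V => ((δ, δ⁻¹ • (x - p)) : ℝ × V)) ⁻¹' e.target,
    e.open_source.preimage hδs.continuous, e.open_target.preimage hδi.continuous,
    by simpa using hδt, ?_, ?_, ?_, ?_, ?_, ?_, ?_, ?_, ?_⟩⟩
  · intro x hx
    have hx' : ((δ, δ⁻¹ • (x - p)) : ℝ × V) ∈ e.target := hx
    have h1 := e.map_target hx'
    have h2 := e.right_inv hx'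
    rw [hsym _ hx'] at h1 h2
    set y := (e.symm (δ, δ⁻¹ • (x - p))).2
    rw [hef', Prod.mk.injEq] at h2
    have h3 := (hμe _ (hsr _ (hes h1)).1).1
    rw [hQa] at h3
    simp only [hPy] at h3
    have h4 : p + δ • (y + μ (δ, ℓ y, P y)) = x := by
      change p + δ • F (δ, y) = x
      rw [h2.2, smul_smul, mul_inv_cancel₀ hδ.ne', one_smul]; abel
    rwa [h4] at h3
  · intro y hy
    change (δ, δ⁻¹ • (Φ y - p)) ∈ e.target
    rw [hback, ← hef']; exact e.map_source hy
  · intro y hy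
    simp only [hback]
    rw [← hef', e.left_inv hy]
    simp [smul_smul, hδ.ne']
  · intro y hy
    exact contDiffAt_const.add (((hFs _ (hes hy)).comp y hδs.contDiffAt).const_smul δ)
  · intro y hy
    rw [hder y hy, hder y hy, hPv, hPj, hℓ1, hℓ2]
    have := (hμe _ (hsr _ (hes hy)).1).2
    rw [← hpt y]
    exact this
  · intro y hy
    rw [hder y hy, hPv, hℓ1, add_sub_cancel_left]
    exact (hsr _ (hes hy)).2.le
  · intro x hx
    have hx' : ((δ, δ⁻¹ • (x - p)) : ℝ × V) ∈ e.target := hx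
    change (δ, δ⁻¹ • (δ • (e.symm (δ, δ⁻¹ • (x - p))).2)) ∈ e.source
    rw [smul_smul, inv_mul_cancel₀ hδ.ne', one_smul, ← hsym _ hx']
    exact e.map_target hx'
  · intro x hx
    have hx' : ((δ, δ⁻¹ • (x - p)) : ℝ × V) ∈ e.target := hx
    have h2 := e.right_inv hx'
    rw [hsym _ hx', hef', Prod.mk.injEq] at h2
    simp only [hΦ]
    rw [smul_smul δ⁻¹ δ, inv_mul_cancel₀ hδ.ne', one_smul, h2.2, smul_smul,
      mul_inv_cancel₀ hδ.ne', one_smul]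
    abel
  · intro x hx
    exact (contDiff_snd.contDiffAt.comp x ((hesm _ hx).comp x hδi.contDiffAt)).const_smul δ

end Discs

/-! ### The energy estimate -/

section Core

variable {V : Type} [NormedAddCommGroup V] [NormedSpace ℝ V] [FiniteDimensional ℝ V] [ProperSpace V]
  [MeasurableSpace V] [BorelSpace V] {μ : Measure V} [μ.IsAddHaarMeasure]

theorem Integrable.add_fun {α : Type} [MeasurableSpace α] {μ : Measure α} {f g : α → ℝ}
    (hf : Integrable f μ) (hg : Integrable g μ) : Integrable (fun x => f x + g x) μ := hf.add hg

theorem Integrable.sub_fun {α : Type} [MeasurableSpace α] {μ : Measure α} {f g : α → ℝ}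
    (hf : Integrable f μ) (hg : Integrable g μ) : Integrable (fun x => f x - g x) μ := hf.sub hg

theorem cauchy_schwarz_integral {α : Type} [MeasurableSpace α] {μ : Measure α} {f g : α → ℝ}
    (hf : MemLp f 2 μ) (hg : MemLp g 2 μ) :
    (∫ x, f x * g x ∂μ) ^ 2 ≤ (∫ x, f x ^ 2 ∂μ) * ∫ x, g x ^ 2 ∂μ := by
  have h1 := hf.integrable_sq
  have h2 := hg.integrable_sq
  have h3 : Integrable (fun x => f x * g x) μ := hf.integrable_mul hg
  have key : ∀ s : ℝ, 0 ≤ (∫ x, g x ^ 2 ∂μ) * (s * s) + (2 * ∫ x, f x * g x ∂μ) * s +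
      ∫ x, f x ^ 2 ∂μ := fun s => by
    have : 0 ≤ ∫ x, (f x + s * g x) ^ 2 ∂μ := integral_nonneg fun x => sq_nonneg _
    have e : ∀ x, (f x + s * g x) ^ 2 = f x ^ 2 + (2 * s * (f x * g x) + s ^ 2 * g x ^ 2) :=
      fun x => by ring
    simp only [e] at this
    rw [integral_add h1 (Integrable.add_fun (h3.const_mul _) (h2.const_mul _)),
      integral_add (h3.const_mul _) (h2.const_mul _), integral_const_mul, integral_const_mul] at this
    linarith
  have := discrim_le_zero key
  rw [discrim] at this
  linarith

theorem memLp_translate {f : V → ℝ} (hf : MemLp f 2 μ) (h : V) :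
    MemLp (fun y => f (y + h)) 2 μ :=
  hf.comp_measurePreserving (measurePreserving_add_right μ h)

/-- Joint integrability of `f y * g (y + k t)`. -/
theorem integrable_prod_translate {ν : Measure ℝ} [IsFiniteMeasure ν] {f g : V → ℝ}
    (hf : MemLp f 2 μ) (hg : MemLp g 2 μ) (hfm : Measurable f) (hgm : Measurable g) {k : ℝ → V}
    (hk : Continuous k) :
    Integrable (fun p : ℝ × V => f p.2 * g (p.2 + k p.1)) (ν.prod μ) := by
  have hkm := hk.measurable
  have hm : Measurable (fun p : ℝ × V => f p.2 * g (p.2 + k p.1)) := by fun_prop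
  have hi : ∀ t, Integrable (fun y => f y * g (y + k t)) μ := fun t =>
    hf.integrable_mul (memLp_translate hg (k t))
  rw [integrable_prod_iff hm.aestronglyMeasurable]
  refine ⟨ae_of_all _ hi, ?_⟩
  refine Integrable.mono' (integrable_const ((∫ y, f y ^ 2 ∂μ) + ∫ y, g y ^ 2 ∂μ))
    hm.norm.aestronglyMeasurable.integral_prod_right' (ae_of_all _ fun t => ?_)
  rw [Real.norm_of_nonneg (integral_nonneg fun _ => norm_nonneg _)]
  have h2 : ∫ y, g y ^ 2 ∂μ = ∫ y, g (y + k t) ^ 2 ∂μ :=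
    (integral_add_right_eq_self (fun y => g y ^ 2) (k t)).symm
  rw [h2, ← integral_add hf.integrable_sq (memLp_translate hg (k t)).integrable_sq]
  refine integral_mono (hi t).norm
    (hf.integrable_sq.add (memLp_translate hg (k t)).integrable_sq) fun y => ?_
  simp only [Real.norm_eq_abs, abs_le]
  constructor <;> nlinarith [sq_nonneg (f y + g (y + k t)), sq_nonneg (f y - g (y + k t)),
    sq_nonneg (f y), sq_nonneg (g (y + k t))]

/-- Translation invariance in the form of summation by parts. -/
theorem integral_second_difference {f g : V → ℝ} (hf : MemLp f 2 μ) (hg : MemLp g 2 μ) (h : V) :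
    ∫ y, f y * (g (y + h) + g (y + -h) - 2 * g y) ∂μ =
      -∫ y, (f (y + h) - f y) * (g (y + h) - g y) ∂μ := by
  have hf' := memLp_translate hf h
  have hg' := memLp_translate hg h
  have hg'' := memLp_translate hg (-h)
  have e1 : ∫ y, f y * g (y + -h) ∂μ = ∫ y, f (y + h) * g y ∂μ := by
    rw [← integral_add_right_eq_self _ h]; simp
  have e2 : ∫ y, f y * g y ∂μ = ∫ y, f (y + h) * g (y + h) ∂μ :=
    (integral_add_right_eq_self (fun y => f y * g y) h).symm
  have i1 : Integrable (fun y => f y * g y) μ := hf.integrable_mul hg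
  have i2 : Integrable (fun y => f y * g (y + h)) μ := hf.integrable_mul hg'
  have i3 : Integrable (fun y => f y * g (y + -h)) μ := hf.integrable_mul hg''
  have i4 : Integrable (fun y => f (y + h) * g y) μ := hf'.integrable_mul hg
  have i5 : Integrable (fun y => f (y + h) * g (y + h)) μ := hf'.integrable_mul hg'
  have l : ∀ y, f y * (g (y + h) + g (y + -h) - 2 * g y) =
    f y * g (y + h) + f y * g (y + -h) - 2 * (f y * g y) := fun y => by ring
  have r : ∀ y, (f (y + h) - f y) * (g (y + h) - g y) =
    f (y + h) * g (y + h) - f (y + h) * g y - (f y * g (y + h) - f y * g y) := fun y => by ring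
  simp only [l, r]
  rw [integral_sub (Integrable.add_fun i2 i3) (i1.const_mul 2), integral_add i2 i3, integral_const_mul,
    integral_sub (Integrable.sub_fun i5 i4) (Integrable.sub_fun i2 i1), integral_sub i5 i4, integral_sub i2 i1, e1, ← e2]
  ring

/-- The pointwise algebraic inequality behind the energy estimate. -/
theorem energy_pointwise {p p' w w' z z' l : ℝ} (hp : 0 ≤ p) (hp1 : p ≤ 1) (hp' : 0 ≤ p')
    (hp1' : p' ≤ 1) (hw : 0 ≤ w) (hw' : 0 ≤ w') (hl : |p' - p| ≤ l) :
    (p' * w' - p * w) ^ 2 / 2 - l ^ 2 * (w ^ 2 + w' ^ 2) - (z' - z) ^ 2 ≤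
      (p' ^ 2 * w' - p ^ 2 * w) * ((w' - w) + (z' - z)) := by
  obtain ⟨h1, h2⟩ := abs_le.1 hl
  have hl2 : (p' - p) ^ 2 ≤ l ^ 2 := sq_le_sq' h1 h2
  have e1 : (p' ^ 2 * w' - p ^ 2 * w) * (w' - w) = (p' * w' - p * w) ^ 2 - (p' - p) ^ 2 * (w * w') := by
    ring
  have e2 : (p' ^ 2 * w' - p ^ 2 * w) * (z' - z) =
      (p' * w' - p * w) * ((p' + p) / 2 * (z' - z)) +
        ((p' * w' + p * w) / 2 * (p' - p)) * (z' - z) := by ring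
  have b1 : (p' - p) ^ 2 * (w * w') ≤ l ^ 2 * ((w ^ 2 + w' ^ 2) / 2) := by
    gcongr
    nlinarith [sq_nonneg (w - w')]
  set D := p' * w' - p * w
  set Z := z' - z
  have b2 : ((p' + p) / 2) ^ 2 ≤ 1 := by nlinarith
  have b2' : ((p' + p) / 2 * Z) ^ 2 ≤ Z ^ 2 := by
    rw [mul_pow]; nlinarith [sq_nonneg Z]
  have b3 : -(D ^ 2 / 2 + Z ^ 2 / 2) ≤ D * ((p' + p) / 2 * Z) := by
    nlinarith [sq_nonneg (D + (p' + p) / 2 * Z)]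
  have b4 : ((p' * w' + p * w) / 2) ^ 2 ≤ (w ^ 2 + w' ^ 2) / 2 := by
    have c1 : p' * w' + p * w ≤ w' + w := by nlinarith
    have c0 : 0 ≤ p' * w' + p * w := by positivity
    nlinarith [sq_nonneg (w - w')]
  have b5 : ((p' * w' + p * w) / 2 * (p' - p)) ^ 2 ≤ (w ^ 2 + w' ^ 2) / 2 * l ^ 2 := by
    rw [mul_pow]; gcongr
  have b6 : -((w ^ 2 + w' ^ 2) / 2 * l ^ 2 / 2 + Z ^ 2 / 2) ≤
      ((p' * w' + p * w) / 2 * (p' - p)) * Z := by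
    nlinarith [sq_nonneg (((p' * w' + p * w) / 2 * (p' - p)) + Z)]
  have e3 : (p' ^ 2 * w' - p ^ 2 * w) * ((w' - w) + Z) =
    (p' ^ 2 * w' - p ^ 2 * w) * (w' - w) + (p' ^ 2 * w' - p ^ 2 * w) * Z := by ring
  rw [e3, e1, e2]
  have hS : 0 ≤ l ^ 2 * (w ^ 2 + w' ^ 2) := by positivity
  have b1' : l ^ 2 * ((w ^ 2 + w' ^ 2) / 2) = l ^ 2 * (w ^ 2 + w' ^ 2) / 2 := by ring
  have b6' : (w ^ 2 + w' ^ 2) / 2 * l ^ 2 / 2 = l ^ 2 * (w ^ 2 + w' ^ 2) / 4 := by ring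
  rw [b1'] at b1
  rw [b6'] at b6
  linarith

end Core

section Core

variable {V : Type} [NormedAddCommGroup V] [NormedSpace ℝ V] [FiniteDimensional ℝ V] [ProperSpace V]
  [MeasurableSpace V] [BorelSpace V] {μ : Measure V} [μ.IsAddHaarMeasure]

theorem memLp_cutoff {ψ W : V → ℝ} (hψc : Continuous ψ) (h0 : ∀ y, 0 ≤ ψ y) (h1 : ∀ y, ψ y ≤ 1)
    (hW : MemLp W 2 μ) : MemLp (fun y => ψ y * W y) 2 μ := by
  refine hW.mono (hψc.aestronglyMeasurable.mul hW.1) (ae_of_all _ fun y => ?_)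
  rw [norm_mul, Real.norm_of_nonneg (h0 y)]
  exact mul_le_of_le_one_left (norm_nonneg _) (h1 y)

theorem memLp_cutoff_sq {ψ W : V → ℝ} (hψc : Continuous ψ) (h0 : ∀ y, 0 ≤ ψ y) (h1 : ∀ y, ψ y ≤ 1)
    (hW : MemLp W 2 μ) : MemLp (fun y => ψ y ^ 2 * W y) 2 μ :=
  memLp_cutoff (hψc.pow 2) (fun y => by positivity) (fun y => pow_le_one₀ (h0 y) (h1 y)) hW

/-- The energy estimate for one translation `h`. Here `a` is a smooth approximation of `U - W`. -/
theorem energy_translate {U W ψ a : V → ℝ} {L τ C B m : ℝ} (hU : MemLp U 2 μ) (hW : MemLp W 2 μ)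
    (hW1 : Integrable W μ) (hW0 : ∀ y, 0 ≤ W y) (hψc : Continuous ψ)
    (h0 : ∀ y, 0 ≤ ψ y) (h1 : ∀ y, ψ y ≤ 1)
    (hL : ∀ x y, |ψ x - ψ y| ≤ L * ‖x - y‖) (ha : MemLp a 2 μ) (hC : 0 ≤ C)
    (ha2 : ∀ y h, |a (y + h) + a (y + -h) - 2 * a y| ≤ C * ‖h‖ ^ 2)
    (hτ : ∀ h, ∫ y, ((U (y + h) - W (y + h) - a (y + h)) - (U y - W y - a y)) ^ 2 ∂μ ≤
      τ ^ 2 * ‖h‖ ^ 2)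
    (hB : ∫ y, W y ^ 2 ∂μ ≤ B) (hm : ∫ y, ψ y ^ 2 * W y ∂μ ≤ m) (h : V) :
    (∫ y, (ψ (y + h) * W (y + h) - ψ y * W y) ^ 2 ∂μ) / 2 ≤
      -(∫ y, (ψ y ^ 2 * W y) * (U (y + h) + U (y + -h) - 2 * U y) ∂μ) +
        ‖h‖ ^ 2 * (2 * L ^ 2 * B + τ ^ 2 + C * m) := by
  have hf := memLp_cutoff_sq hψc h0 h1 hW
  have hg := memLp_cutoff hψc h0 h1 hW
  have hf' := memLp_translate hf h
  have hg' := memLp_translate hg h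
  have hU' := memLp_translate hU h
  have hW' := memLp_translate hW h
  have ha' := memLp_translate ha h
  have hf1 : Integrable (fun y => ψ y ^ 2 * W y) μ := by
    refine hW1.mono hf.1 (ae_of_all _ fun y => ?_)
    rw [norm_mul, Real.norm_of_nonneg (by positivity)]
    exact mul_le_of_le_one_left (norm_nonneg _) (pow_le_one₀ (h0 y) (h1 y))
  have ia : Integrable (fun y => (ψ (y + h) ^ 2 * W (y + h) - ψ y ^ 2 * W y) *
      (a (y + h) - a y)) μ := (hf'.sub hf).integrable_mul (ha'.sub ha)
  have iz : MemLp (fun y => (U (y + h) - W (y + h) - a (y + h)) - (U y - W y - a y)) 2 μ :=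
    ((hU'.sub hW').sub ha').sub ((hU.sub hW).sub ha)
  have iw : MemLp (fun y => W (y + h) - W y + ((U (y + h) - W (y + h) - a (y + h)) -
      (U y - W y - a y))) 2 μ := (hW'.sub hW).add iz
  have iwz : Integrable (fun y => (ψ (y + h) ^ 2 * W (y + h) - ψ y ^ 2 * W y) *
      (W (y + h) - W y + ((U (y + h) - W (y + h) - a (y + h)) - (U y - W y - a y)))) μ :=
    (hf'.sub hf).integrable_mul iw
  have iD : Integrable (fun y => (ψ (y + h) * W (y + h) - ψ y * W y) ^ 2) μ :=
    (hg'.sub hg).integrable_sq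
  -- summation by parts, after which `U` is split as `W + (U - W - a) + a`; the second differences
  -- are moved back onto the smooth part `a`
  have e1 := integral_second_difference hf hU h
  have e2 := integral_second_difference hf ha h
  have e3 : ∫ y, (ψ (y + h) ^ 2 * W (y + h) - ψ y ^ 2 * W y) * (U (y + h) - U y) ∂μ =
      (∫ y, (ψ (y + h) ^ 2 * W (y + h) - ψ y ^ 2 * W y) *
        (W (y + h) - W y + ((U (y + h) - W (y + h) - a (y + h)) - (U y - W y - a y))) ∂μ) +
      ∫ y, (ψ (y + h) ^ 2 * W (y + h) - ψ y ^ 2 * W y) * (a (y + h) - a y) ∂μ := by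
    rw [← integral_add iwz ia]; congr 1; ext1 y; ring
  have e4 : ∫ y, (ψ y ^ 2 * W y) * (a (y + h) + a (y + -h) - 2 * a y) ∂μ ≤ C * ‖h‖ ^ 2 * m := by
    have hi : Integrable (fun y => (ψ y ^ 2 * W y) * (a (y + h) + a (y + -h) - 2 * a y)) μ :=
      hf.integrable_mul ((ha'.add (memLp_translate ha (-h))).sub (ha.const_mul 2))
    calc _ ≤ ∫ y, C * ‖h‖ ^ 2 * (ψ y ^ 2 * W y) ∂μ := by
          refine integral_mono hi (hf1.const_mul _) fun y => ?_
          have := (abs_le.1 (ha2 y h)).2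
          have h3 : 0 ≤ ψ y ^ 2 * W y := mul_nonneg (sq_nonneg _) (hW0 y)
          simp only
          nlinarith
      _ ≤ _ := by rw [integral_const_mul]; gcongr
  have iS : Integrable (fun y => W y ^ 2 + W (y + h) ^ 2) μ :=
    Integrable.add_fun hW.integrable_sq hW'.integrable_sq
  have e5 : (∫ y, (ψ (y + h) * W (y + h) - ψ y * W y) ^ 2 ∂μ) / 2 -
      (L * ‖h‖) ^ 2 * ((∫ y, W y ^ 2 ∂μ) + ∫ y, W y ^ 2 ∂μ) -
      ∫ y, ((U (y + h) - W (y + h) - a (y + h)) - (U y - W y - a y)) ^ 2 ∂μ ≤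
      ∫ y, (ψ (y + h) ^ 2 * W (y + h) - ψ y ^ 2 * W y) *
        (W (y + h) - W y + ((U (y + h) - W (y + h) - a (y + h)) - (U y - W y - a y))) ∂μ := by
    have hs : ∫ y, W y ^ 2 ∂μ = ∫ y, W (y + h) ^ 2 ∂μ :=
      (integral_add_right_eq_self (fun y => W y ^ 2) h).symm
    nth_rewrite 2 [hs]
    rw [← integral_add hW.integrable_sq hW'.integrable_sq, ← integral_const_mul,
      ← integral_div, ← integral_sub (iD.div_const 2) (iS.const_mul _),
      ← integral_sub (Integrable.sub_fun (iD.div_const 2) (iS.const_mul _)) iz.integrable_sq]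
    refine integral_mono (Integrable.sub_fun (Integrable.sub_fun (iD.div_const 2) (iS.const_mul _))
      iz.integrable_sq) iwz fun y => ?_
    have := energy_pointwise (z := U y - W y - a y) (z' := U (y + h) - W (y + h) - a (y + h))
      (h0 y) (h1 y) (h0 (y + h)) (h1 (y + h)) (hW0 y) (hW0 (y + h))
      (l := L * ‖h‖) (by simpa using hL (y + h) y)
    exact this
  have e6 := hτ h
  have e7 : (L * ‖h‖) ^ 2 * ((∫ y, W y ^ 2 ∂μ) + ∫ y, W y ^ 2 ∂μ) ≤ (L * ‖h‖) ^ 2 * (B + B) := by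
    gcongr
  rw [e1, neg_neg, e3]
  nlinarith

/-- The point at angle `t` on the ellipse spanned by `v` and `j`. -/
def ell (v j : V) (t : ℝ) : V := Real.cos t • v + Real.sin t • j

theorem continuous_ell (v j : V) : Continuous (ell v j) := by unfold ell; fun_prop

theorem norm_ell_le (v j : V) (t : ℝ) : ‖ell v j t‖ ≤ ‖v‖ + ‖j‖ := by
  refine (norm_add_le _ _).trans (add_le_add ?_ ?_) <;>
    rw [norm_smul, Real.norm_eq_abs] <;>
    refine mul_le_of_le_one_left (norm_nonneg _) ?_
  · exact Real.abs_cos_le_one t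
  · exact Real.abs_sin_le_one t

/-- If `U` satisfies the sub-mean value inequality on the ellipses `± r ell v j` centred at the points
where `f ≠ 0`, then its second differences, integrated against `f ≥ 0` and over the ellipse, give a
nonnegative quantity. -/
theorem average_nonneg {U f : V → ℝ} (hU : MemLp U 2 μ) (hUm : Measurable U)
    (hf : MemLp f 2 μ) (hfm : Measurable f) (hf0 : ∀ y, 0 ≤ f y) (v j : V) (r : ℝ)
    (hsm : ∀ y, f y ≠ 0 → 2 * Real.pi * U y ≤ ∫ t in (0:ℝ)..(2 * Real.pi), U (y + r • ell v j t))
    (hsm' : ∀ y, f y ≠ 0 → 2 * Real.pi * U y ≤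
      ∫ t in (0:ℝ)..(2 * Real.pi), U (y + -(r • ell v j t))) :
    IntervalIntegrable (fun t => ∫ y, f y * (U (y + r • ell v j t) + U (y + -(r • ell v j t))
        - 2 * U y) ∂μ) volume 0 (2 * Real.pi) ∧
    0 ≤ ∫ t in (0:ℝ)..(2 * Real.pi), ∫ y, f y * (U (y + r • ell v j t) + U (y + -(r • ell v j t))
        - 2 * U y) ∂μ := by
  have hpi : (0:ℝ) ≤ 2 * Real.pi := by positivity
  set ν : Measure ℝ := volume.restrict (Ioc 0 (2 * Real.pi)) with hν
  have hk : Continuous fun t => r • ell v j t := (continuous_ell v j).const_smul r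
  have hk' : Continuous fun t => -(r • ell v j t) := hk.neg
  have hk0 : Continuous fun _ : ℝ => (0 : V) := continuous_const
  have I1 := integrable_prod_translate (ν := ν) hf hU hfm hUm hk
  have I2 := integrable_prod_translate (ν := ν) hf hU hfm hUm hk'
  have I3 := integrable_prod_translate (ν := ν) hf hU hfm hUm hk0
  have I : Integrable (fun p : ℝ × V => f p.2 * (U (p.2 + r • ell v j p.1) +
      U (p.2 + -(r • ell v j p.1)) - 2 * U p.2)) (ν.prod μ) := by
    refine ((I1.add I2).sub (I3.const_mul 2)).congr (ae_of_all _ fun p => ?_)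
    simp only [Pi.add_apply, Pi.sub_apply, add_zero]; ring
  have J1 : ∀ k : ℝ → V, Continuous k →
      ∀ᵐ y ∂μ, f y ≠ 0 → Integrable (fun t => U (y + k t)) ν := fun k hk => by
    filter_upwards [(integrable_prod_translate (ν := ν) hf hU hfm hUm hk).prod_left_ae] with y hy hy0
    have := hy.const_mul (f y)⁻¹
    refine this.congr (ae_of_all _ fun t => ?_)
    simp only
    rw [← mul_assoc, inv_mul_cancel₀ hy0, one_mul]
  refine ⟨(intervalIntegrable_iff_integrableOn_Ioc_of_le hpi).2 I.integral_prod_left, ?_⟩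
  rw [intervalIntegral.integral_of_le hpi, ← hν, integral_integral_swap (f := fun t y =>
    f y * (U (y + r • ell v j t) + U (y + -(r • ell v j t)) - 2 * U y)) I]
  refine integral_nonneg_of_ae ?_
  filter_upwards [J1 _ hk, J1 _ hk'] with y h1 h2
  rw [Pi.zero_apply, integral_const_mul]
  by_cases hy : f y = 0
  · rw [hy, zero_mul]
  refine mul_nonneg (hf0 y) ?_
  have i0 : Integrable (fun _ : ℝ => 2 * U y) ν := integrable_const _
  rw [integral_sub (Integrable.add_fun (h1 hy) (h2 hy)) i0, integral_add (h1 hy) (h2 hy)]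
  have a1 := hsm y hy
  have a2 := hsm' y hy
  rw [intervalIntegral.integral_of_le hpi, ← hν] at a1 a2
  have a3 : ∫ _ : ℝ, 2 * U y ∂ν = 2 * Real.pi * (2 * U y) := by
    rw [integral_const, hν]
    simp [measureReal_def, Real.pi_pos.le]
  rw [a3]
  linarith

end Core

section Core

variable {V : Type} [NormedAddCommGroup V] [NormedSpace ℝ V] [FiniteDimensional ℝ V] [ProperSpace V]
  [MeasurableSpace V] [BorelSpace V] {μ : Measure V} [μ.IsAddHaarMeasure]

theorem integral_cos_sin_sq (A B : ℝ) :
    ∫ t in (0:ℝ)..(2 * Real.pi), (Real.cos t * A + Real.sin t * B) ^ 2 =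
      Real.pi * (A ^ 2 + B ^ 2) := by
  have e : ∀ t : ℝ, (Real.cos t * A + Real.sin t * B) ^ 2 =
      A ^ 2 * Real.cos t ^ 2 + B ^ 2 * Real.sin t ^ 2 + 2 * A * B * (Real.sin t * Real.cos t) :=
    fun t => by ring
  simp only [e]
  rw [intervalIntegral.integral_add, intervalIntegral.integral_add,
    intervalIntegral.integral_const_mul, intervalIntegral.integral_const_mul,
    intervalIntegral.integral_const_mul, integral_cos_sq, integral_sin_sq, integral_sin_mul_cos₁]
  · simp; ring
  all_goals exact Continuous.intervalIntegrable (by fun_prop) _ _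

/-- The energy estimate in dual form: `∫ ψ W ∂_v φ` is bounded by the `L²` norm of `φ`, with a
constant which is small when `W` and the approximation error `τ` are small. -/
theorem core_bound {U W ψ a φ : V → ℝ} {L τ C B m r0 : ℝ} (hU : MemLp U 2 μ)
    (hUm : Measurable U) (hW : MemLp W 2 μ) (hWm : Measurable W)
    (hW1 : Integrable W μ) (hW0 : ∀ y, 0 ≤ W y) (hψc : Continuous ψ)
    (h0 : ∀ y, 0 ≤ ψ y) (h1 : ∀ y, ψ y ≤ 1)
    (hL : ∀ x y, |ψ x - ψ y| ≤ L * ‖x - y‖) (ha : MemLp a 2 μ) (hC : 0 ≤ C)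
    (ha2 : ∀ y h, |a (y + h) + a (y + -h) - 2 * a y| ≤ C * ‖h‖ ^ 2)
    (hτ : ∀ h, ∫ y, ((U (y + h) - W (y + h) - a (y + h)) - (U y - W y - a y)) ^ 2 ∂μ ≤
      τ ^ 2 * ‖h‖ ^ 2)
    (hB : ∫ y, W y ^ 2 ∂μ ≤ B) (hm : ∫ y, ψ y ^ 2 * W y ∂μ ≤ m)
    (v j : V) (hr0 : 0 < r0)
    (hsm : ∀ r, |r| < r0 → ∀ y, ψ y ≠ 0 →
      2 * Real.pi * U y ≤ ∫ t in (0:ℝ)..(2 * Real.pi), U (y + r • ell v j t))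
    (hφ : ContDiff ℝ 1 φ) (hφc : HasCompactSupport φ) :
    (∫ y, ψ y * W y * fderiv ℝ φ y v ∂μ) ^ 2 ≤
      4 * (‖v‖ + ‖j‖) ^ 2 * (2 * L ^ 2 * B + τ ^ 2 + C * m) * ∫ y, φ y ^ 2 ∂μ := by
  set E := 2 * L ^ 2 * B + τ ^ 2 + C * m with hE
  have hE0 : 0 ≤ E := by
    have : 0 ≤ B := (integral_nonneg fun _ => sq_nonneg _).trans hB
    have : 0 ≤ m := (integral_nonneg fun y => mul_nonneg (sq_nonneg _) (hW0 y)).trans hm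
    positivity
  set c := ‖v‖ + ‖j‖ with hc
  set k : V → ℝ := fun y => ψ y * W y with hk
  have hk2 : MemLp k 2 μ := memLp_cutoff hψc h0 h1 hW
  have hkm : Measurable k := hψc.measurable.mul hWm
  have hk1 : Integrable k μ := by
    refine hW1.mono hk2.1 (ae_of_all _ fun y => ?_)
    rw [norm_mul, Real.norm_of_nonneg (h0 y)]
    exact mul_le_of_le_one_left (norm_nonneg _) (h1 y)
  obtain ⟨Lφ, hLφ⟩ := hφ.lipschitzWith_of_hasCompactSupport hφc (by simp)
  have hLφ' : ∀ x y, |φ x - φ y| ≤ Lφ * ‖x - y‖ := fun x y => by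
    simpa [Real.dist_eq, dist_eq_norm] using hLφ.dist_le_mul x y
  have hφ2 : MemLp φ 2 μ := hφ.continuous.memLp_of_hasCompactSupport hφc
  obtain ⟨S, hS⟩ := hφ.continuous.bounded_above_of_compact_support hφc
  set Q := ∫ y, φ y ^ 2 ∂μ with hQ
  have hQ0 : 0 ≤ Q := integral_nonneg fun _ => sq_nonneg _
  set F : ℝ → ℝ → ℝ := fun r t => ∫ y, k y * (φ (y + -(r • ell v j t)) - φ y) ∂μ with hF
  have hFi : ∀ h : V, Integrable (fun y => k y * (φ (y + -h) - φ y)) μ := fun h =>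
    hk2.integrable_mul ((memLp_translate hφ2 (-h)).sub hφ2)
  have hFc : ∀ r, Continuous (F r) := fun r => by
    refine continuous_of_dominated (bound := fun y => ‖k y‖ * (2 * S))
      (fun t => (hFi _).1) (fun t => ae_of_all _ fun y => ?_) (hk1.norm.mul_const _)
      (ae_of_all _ fun y => ?_)
    · rw [norm_mul]
      gcongr
      refine (norm_sub_le _ _).trans ?_
      linarith [hS (y + -(r • ell v j t)), hS y]
    · have := continuous_ell v j
      have := hφ.continuous
      fun_prop
  -- the bound for a fixed radius
  have hrad : ∀ r, 0 < r → r < r0 →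
      ∫ t in (0:ℝ)..(2 * Real.pi), (F r t / r) ^ 2 ≤ 4 * Real.pi * c ^ 2 * E * Q := fun r hr hrr => by
    have hf := memLp_cutoff_sq hψc h0 h1 hW
    have hne : ∀ y, ψ y ^ 2 * W y ≠ 0 → ψ y ≠ 0 := fun y hy h => hy (by simp [h])
    obtain ⟨i1, i2⟩ := average_nonneg hU hUm hf ((hψc.measurable.pow_const 2).mul hWm)
      (fun y => mul_nonneg (sq_nonneg _) (hW0 y)) v j r
      (fun y hy => hsm r (by rwa [abs_of_pos hr]) y (hne y hy))
      (fun y hy => by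
        have := hsm (-r) (by rwa [abs_neg, abs_of_pos hr]) y (hne y hy)
        simpa only [neg_smul] using this)
    set I : ℝ → ℝ := fun t => ∫ y, (ψ y ^ 2 * W y) * (U (y + r • ell v j t) +
      U (y + -(r • ell v j t)) - 2 * U y) ∂μ with hI
    -- for a single direction the term `I t` has no sign; only its mean over `t` is nonnegative
    have hpt : ∀ t, (F r t / r) ^ 2 ≤ 2 * Q * ((c ^ 2 * E) - r⁻¹ ^ 2 * I t) := fun t => by
      set h := r • ell v j t with hh
      have hnh : ‖h‖ ^ 2 ≤ r ^ 2 * c ^ 2 := by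
        rw [hh, norm_smul, mul_pow, Real.norm_eq_abs, sq_abs]
        gcongr
        exact norm_ell_le v j t
      have e1 : F r t = ∫ y, (k (y + h) - k y) * φ y ∂μ := by
        have a1 : ∫ y, k y * φ (y + -h) ∂μ = ∫ y, k (y + h) * φ y ∂μ := by
          rw [← integral_add_right_eq_self _ h]; simp
        have b1 : Integrable (fun y => k y * φ (y + -h)) μ :=
          hk2.integrable_mul (memLp_translate hφ2 (-h))
        have b2 : Integrable (fun y => k y * φ y) μ := hk2.integrable_mul hφ2
        have b3 : Integrable (fun y => k (y + h) * φ y) μ :=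
          (memLp_translate hk2 h).integrable_mul hφ2
        simp only [hF, mul_sub, sub_mul]
        rw [integral_sub b1 b2, integral_sub b3 b2, a1]
      have e2 := cauchy_schwarz_integral ((memLp_translate hk2 h).sub hk2) hφ2
      have e3 := energy_translate hU hW hW1 hW0 hψc h0 h1 hL ha hC ha2 hτ hB hm h
      have e4 : F r t ^ 2 ≤ 2 * (-I t + r ^ 2 * c ^ 2 * E) * Q := by
        rw [e1]
        refine e2.trans ?_
        gcongr
        have e5 : ‖h‖ ^ 2 * E ≤ r ^ 2 * c ^ 2 * E := by gcongr
        have e6 : ∫ y, ((fun y => k (y + h)) - k) y ^ 2 ∂μ =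
          ∫ y, (ψ (y + h) * W (y + h) - ψ y * W y) ^ 2 ∂μ := rfl
        rw [e6]
        change _ ≤ -I t + _ at e3
        linarith
      rw [div_pow, div_le_iff₀ (by positivity)]
      refine e4.trans (le_of_eq ?_)
      field_simp
      ring
    have hib : IntervalIntegrable (fun t => 2 * Q * ((c ^ 2 * E) - r⁻¹ ^ 2 * I t)) volume 0
        (2 * Real.pi) :=
      ((intervalIntegrable_const).sub (i1.const_mul _)).const_mul _
    have := intervalIntegral.integral_mono_on (by positivity)
      (Continuous.intervalIntegrable (by have := hFc r; fun_prop) 0 (2 * Real.pi)) hib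
      (fun t _ => hpt t)
    refine this.trans ?_
    have h4 : ∫ t in (0:ℝ)..(2 * Real.pi), r⁻¹ ^ 2 * I t =
        r⁻¹ ^ 2 * ∫ t in (0:ℝ)..(2 * Real.pi), I t := intervalIntegral.integral_const_mul _ _
    rw [intervalIntegral.integral_const_mul, intervalIntegral.integral_sub
      intervalIntegrable_const (i1.const_mul _), h4, intervalIntegral.integral_const]
    have h3 : 0 ≤ r⁻¹ ^ 2 * ∫ t in (0:ℝ)..(2 * Real.pi), I t := by positivity
    simp only [sub_zero, smul_eq_mul]
    nlinarith [mul_nonneg hQ0 h3]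
  -- the limit of small radii
  set A := ∫ y, k y * fderiv ℝ φ y v ∂μ with hA
  set A' := ∫ y, k y * fderiv ℝ φ y j ∂μ with hA'
  have hfdc : Continuous (fderiv ℝ φ) := hφ.continuous_fderiv (by simp)
  have hkd : ∀ w, Integrable (fun y => k y * fderiv ℝ φ y w) μ := fun w => by
    have hd2 : MemLp (fun y => fderiv ℝ φ y w) 2 μ :=
      Continuous.memLp_of_hasCompactSupport (by fun_prop) (hφc.fderiv_apply (𝕜 := ℝ) w)
    exact hk2.integrable_mul hd2
  have hAe : ∀ t, ∫ y, k y * fderiv ℝ φ y (ell v j t) ∂μ = Real.cos t * A + Real.sin t * A' :=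
    fun t => by
    rw [hA, hA', ← integral_const_mul, ← integral_const_mul,
      ← integral_add ((hkd v).const_mul _) ((hkd j).const_mul _)]
    congr 1; ext1 y
    simp only [ell, map_add, map_smul, smul_eq_mul]; ring
  have hlim : ∀ t, Tendsto (fun r => F r t / r) (𝓝[>] 0) (𝓝 (-(Real.cos t * A + Real.sin t * A'))) :=
    fun t => by
    rw [← hAe, ← integral_neg]
    have : ∀ r, F r t / r = ∫ y, k y * (r⁻¹ * (φ (y + -(r • ell v j t)) - φ y)) ∂μ := fun r => by
      rw [div_eq_inv_mul, hF, ← integral_const_mul]; congr 1; ext1 y; ring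
    simp only [this]
    refine tendsto_integral_filter_of_dominated_convergence (fun y => ‖k y‖ * (Lφ * c))
      (Eventually.of_forall fun r => ?_) ?_ (hk1.norm.mul_const _) (ae_of_all _ fun y => ?_)
    · have := ((hFi (r • ell v j t)).const_mul r⁻¹).1
      refine this.congr (ae_of_all _ fun y => ?_)
      simp only; ring
    · filter_upwards [self_mem_nhdsWithin] with r (hr : 0 < r)
      refine ae_of_all _ fun y => ?_
      rw [norm_mul (k y), norm_mul r⁻¹, norm_inv, Real.norm_of_nonneg hr.le]
      refine mul_le_mul_of_nonneg_left ?_ (norm_nonneg _)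
      rw [inv_mul_le_iff₀ hr]
      refine (hLφ' _ _).trans ?_
      rw [add_sub_cancel_left, norm_neg, norm_smul, Real.norm_of_nonneg hr.le]
      have := norm_ell_le v j t
      have h3 : (Lφ : ℝ) * (r * ‖ell v j t‖) ≤ Lφ * (r * c) := by gcongr
      linarith
    · rw [← mul_neg]
      refine Tendsto.const_mul _ ?_
      have hd : HasDerivAt (fun r : ℝ => φ (y + -(r • ell v j t))) (fderiv ℝ φ y (-(ell v j t))) 0 := by
        have hd1 : HasDerivAt (fun r : ℝ => y + -(r • ell v j t)) (-(ell v j t)) 0 := by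
          simpa using (((hasDerivAt_id (0:ℝ)).smul_const (ell v j t)).neg).const_add y
        exact ((hφ.differentiable (by simp) y).hasFDerivAt).comp_hasDerivAt_of_eq _ hd1 (by simp)
      have := hd.tendsto_slope_zero_right
      simpa using this
  have hlim2 : Tendsto (fun r => ∫ t in (0:ℝ)..(2 * Real.pi), (F r t / r) ^ 2) (𝓝[>] 0)
      (𝓝 (∫ t in (0:ℝ)..(2 * Real.pi), (-(Real.cos t * A + Real.sin t * A')) ^ 2)) := by
    refine intervalIntegral.tendsto_integral_filter_of_dominated_convergence
      (fun _ => ((∫ y, ‖k y‖ ∂μ) * (Lφ * c)) ^ 2) (Eventually.of_forall fun r => ?_) ?_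
      intervalIntegrable_const (ae_of_all _ fun t _ => (hlim t).pow 2)
    · exact (Continuous.aestronglyMeasurable (by have := hFc r; fun_prop))
    · filter_upwards [self_mem_nhdsWithin] with r (hr : 0 < r)
      refine ae_of_all _ fun t _ => ?_
      rw [norm_pow]
      gcongr
      rw [norm_div, Real.norm_of_nonneg hr.le, div_le_iff₀ hr, ← integral_mul_const,
        ← integral_mul_const]
      refine norm_integral_le_of_norm_le ((hk1.norm.mul_const _).mul_const _) (ae_of_all _ fun y => ?_)
      rw [norm_mul (k y), mul_assoc]
      gcongr
      refine (hLφ' _ _).trans ?_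
      rw [add_sub_cancel_left, norm_neg, norm_smul, Real.norm_of_nonneg hr.le]
      have := norm_ell_le v j t
      have h3 : (Lφ : ℝ) * (r * ‖ell v j t‖) ≤ Lφ * (r * c) := by gcongr
      linarith
  simp only [neg_sq] at hlim2
  rw [integral_cos_sin_sq] at hlim2
  have hfin := le_of_tendsto hlim2 (by
    have : ∀ᶠ r in 𝓝[>] (0:ℝ), r < r0 := nhdsWithin_le_nhds (eventually_lt_nhds hr0)
    filter_upwards [self_mem_nhdsWithin, this] with r hr hrr
    exact hrad r hr hrr)
  have hpi := Real.pi_pos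
  have h5 : Real.pi * (A ^ 2 + A' ^ 2) ≤ Real.pi * (4 * c ^ 2 * E * Q) := by linarith
  have := le_of_mul_le_mul_left h5 hpi
  nlinarith [sq_nonneg A']

end Core

/-! ### Smooth approximation in `W^{1,2}` -/

section Mollify

variable {V : Type} [NormedAddCommGroup V] [NormedSpace ℝ V] [FiniteDimensional ℝ V] [ProperSpace V]
  [MeasurableSpace V] [BorelSpace V] {μ : Measure V} [μ.IsAddHaarMeasure]

theorem eLpNorm_two_sq {α E : Type} [MeasurableSpace α] [NormedAddCommGroup E] (μ : Measure α)
    (f : α → E) :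
    eLpNorm f 2 μ ^ 2 = ∫⁻ x, ‖f x‖ₑ ^ 2 ∂μ := by
  have := eLpNorm_nnreal_pow_eq_lintegral (p := 2) (f := f) (μ := μ) (by norm_num)
  simpa using this

/-- Translations act continuously on `L²`. -/
theorem translate_small {F : V → ℝ} (hF : MemLp F 2 μ) {ε : ENNReal} (hε : ε ≠ 0) :
    ∃ δ > 0, ∀ t : V, ‖t‖ < δ → eLpNorm (fun x => F (x - t) - F x) 2 μ ≤ ε := by
  have : Fact ((1:ENNReal) ≤ 2) := ⟨by norm_num⟩
  have : Fact ((2:ENNReal) ≠ ⊤) := ⟨by norm_num⟩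
  let G : V → Lp ℝ 2 μ := fun t => DomAddAct.mk (-t) +ᵥ hF.toLp F
  have hG : Continuous G := by
    have h1 : Continuous fun t : V => (DomAddAct.mk (-t) : Vᵈᵃᵃ) :=
      (DomAddAct.continuous_mk).comp continuous_neg
    exact h1.vadd continuous_const
  have h2 := (hG.tendsto 0)
  have hG0 : G 0 = hF.toLp F := by simp [G]
  rw [hG0] at h2
  have h3 := h2 (Metric.eball_mem_nhds _ (pos_iff_ne_zero.2 hε))
  obtain ⟨δ, hδ, hb⟩ := Metric.mem_nhds_iff.1 h3
  refine ⟨δ, hδ, fun t ht => ?_⟩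
  have h4 : G t ∈ Metric.eball (hF.toLp F) ε := hb (by simpa using ht)
  have h5 : G t = (memLp_translate hF (-t)).toLp _ := by
    simp only [G]
    rw [DomAddAct.mk_vadd_toLp]
    simp only [vadd_eq_add]
    congr 1
    ext1 x; exact congrArg F (add_comm _ _)
  rw [h5, Metric.mem_eball, Lp.edist_toLp_toLp] at h4
  simp only [sub_eq_add_neg] at h4 ⊢
  exact h4.le

/-- Mollification converges in `L²`. -/
theorem mollify_small {F : V → ℝ} (hF : MemLp F 2 μ) (hFm : Measurable F) {ε : ENNReal}
    (hε : ε ≠ 0) :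
    ∃ δ > 0, ∀ ρ : V → ℝ, Continuous ρ → HasCompactSupport ρ → (∀ x, 0 ≤ ρ x) →
      Function.support ρ ⊆ ball 0 δ → ∫ x, ρ x ∂μ = 1 →
      eLpNorm (fun x => (∫ z, ρ (x - z) * F z ∂μ) - F x) 2 μ ≤ ε := by
  obtain ⟨δ, hδ, ht⟩ := translate_small hF hε
  refine ⟨δ, hδ, fun ρ hρc hρs hρ0 hρδ hρ1 => ?_⟩
  have hρi : Integrable ρ μ := hρc.integrable_of_hasCompactSupport hρs
  set P : Measure V := μ.withDensity fun t => ENNReal.ofReal (ρ t) with hP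
  have hmea : Measurable fun t => ENNReal.ofReal (ρ t) := hρc.measurable.ennreal_ofReal
  have : IsProbabilityMeasure P := ⟨by
    rw [hP, withDensity_apply _ MeasurableSet.univ, Measure.restrict_univ,
      ← ofReal_integral_eq_lintegral_ofReal hρi (ae_of_all _ hρ0), hρ1]; simp⟩
  have hintg : ∀ x, (∫ z, ρ (x - z) * F z ∂μ) - F x = ∫ t, (F (x - t) - F x) ∂P := fun x => by
    have e1 : ∫ z, ρ (x - z) * F z ∂μ = ∫ t, ρ t * F (x - t) ∂μ := by
      rw [← integral_sub_left_eq_self (fun t => ρ t * F (x - t)) μ x]; simp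
    have e2 : ∀ f : V → ℝ, ∫ t, f t ∂P = ∫ t, ρ t * f t ∂μ := fun f => by
      rw [hP, integral_withDensity_eq_integral_toReal_smul hmea (by simp)]
      refine integral_congr_ae (ae_of_all _ fun t => ?_)
      simp [ENNReal.toReal_ofReal (hρ0 t)]
    rw [e1, e2]
    have hρ2 : MemLp ρ 2 μ := hρc.memLp_of_hasCompactSupport hρs
    have i1 : Integrable (fun t => ρ t * F (x - t)) μ := by
      have hF' : MemLp (fun t => F (x - t)) 2 μ :=
        hF.comp_measurePreserving (Measure.measurePreserving_sub_left μ x)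
      exact hρ2.integrable_mul hF'
    simp only [mul_sub]
    rw [integral_sub i1 (hρi.mul_const _), integral_mul_const, hρ1, one_mul]
  have hmm : Measurable fun p : V × V => ‖F (p.1 - p.2) - F p.1‖ₑ ^ 2 := by fun_prop
  have key : eLpNorm (fun x => (∫ z, ρ (x - z) * F z ∂μ) - F x) 2 μ ^ 2 ≤ ε ^ 2 := by
    rw [eLpNorm_two_sq]
    calc _ ≤ ∫⁻ x, ∫⁻ t, ‖F (x - t) - F x‖ₑ ^ 2 ∂P ∂μ := by
          refine lintegral_mono fun x => ?_
          simp only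
          rw [hintg, ← eLpNorm_two_sq]
          have h1 : eLpNorm (fun t => F (x - t) - F x) 1 P ≤ eLpNorm (fun t => F (x - t) - F x) 2 P :=
            eLpNorm_le_eLpNorm_of_exponent_le (by norm_num)
              (Measurable.aestronglyMeasurable (by fun_prop))
          rw [eLpNorm_one_eq_lintegral_enorm] at h1
          gcongr
          exact (enorm_integral_le_lintegral_enorm _).trans h1
      _ = ∫⁻ t, ∫⁻ x, ‖F (x - t) - F x‖ₑ ^ 2 ∂μ ∂P :=
          lintegral_lintegral_swap hmm.aemeasurable
      _ ≤ ∫⁻ t, ε ^ 2 ∂P := by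
          refine lintegral_mono_ae ?_
          rw [hP, ae_withDensity_iff hmea]
          refine ae_of_all _ fun t h0 => ?_
          rw [← eLpNorm_two_sq]
          gcongr
          refine ht t ?_
          have : t ∈ ball (0:V) δ := hρδ fun h => h0 (by simp [h])
          simpa using this
      _ = ε ^ 2 := by simp
  exact (ENNReal.pow_le_pow_left_iff (by norm_num)).1 key

end Mollify

section Approx

set_option maxHeartbeats 1000000 in
/-- Local approximation of a `W^{1,2}` function by smooth functions. -/
theorem approx_on_compact {n : ℕ} {Ω : Set (ESp n)} (hΩ : IsOpen Ω) {u : ESp n → ℝ}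
    {g : ESp n → ESp n} (hw : HasWeakGradOn u g Ω)
    (hu : ∀ K ⊆ Ω, IsCompact K → MemLp u 2 (volume.restrict K))
    (hg : ∀ K ⊆ Ω, IsCompact K → ∀ i, MemLp (fun x => g x i) 2 (volume.restrict K))
    {K : Set (ESp n)} (hK : IsCompact K) (hKΩ : K ⊆ Ω) {ε : ENNReal} (hε : ε ≠ 0) :
    ∃ f : ESp n → ℝ, ContDiff ℝ (⊤ : ℕ∞) f ∧
      eLpNorm (fun x => f x - u x) 2 (volume.restrict K) ≤ ε ∧
      ∀ i, eLpNorm (fun x => fderiv ℝ f x (sb n i) - g x i) 2 (volume.restrict K) ≤ ε := by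
  obtain ⟨d, hd, hdΩ⟩ := hK.exists_cthickening_subset_open hΩ hKΩ
  set K' := cthickening d K with hK'
  have hK'c : IsCompact K' := hK.cthickening
  have hK'm : MeasurableSet K' := hK'c.measurableSet
  -- measurable representatives of the truncations
  have rep : ∀ F : ESp n → ℝ, MemLp F 2 (volume.restrict K') →
      ∃ F' : ESp n → ℝ, Measurable F' ∧ MemLp F' 2 volume ∧ F' =ᵐ[volume] K'.indicator F := by
    intro F hF
    have h1 : MemLp (K'.indicator F) 2 volume := (memLp_indicator_iff_restrict hK'm).2 hF
    exact ⟨_, h1.1.measurable_mk, h1.ae_eq h1.1.ae_eq_mk, h1.1.ae_eq_mk.symm⟩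
  obtain ⟨U, hUm, hU2, hUe⟩ := rep u (hu K' hdΩ hK'c)
  choose Gi hGm hG2 hGe using fun i => rep _ (hg K' hdΩ hK'c i)
  obtain ⟨δ0, hδ0, hm0⟩ := mollify_small hU2 hUm hε
  choose δi hδi hmi using fun i => mollify_small (hG2 i) (hGm i) hε
  obtain ⟨δ, hδ, hδd, hδδ0, hδδi⟩ : ∃ δ > 0, δ ≤ d ∧ δ ≤ δ0 ∧ ∀ i, δ ≤ δi i := by
    have h1 : ∀ᶠ δ in 𝓝[>] (0:ℝ), δ < d ∧ δ < δ0 ∧ ∀ i, δ < δi i := by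
      refine nhdsWithin_le_nhds ((eventually_lt_nhds hd).and ((eventually_lt_nhds hδ0).and ?_))
      exact eventually_all.2 fun i => eventually_lt_nhds (hδi i)
    obtain ⟨δ, h, hp⟩ := (h1.and self_mem_nhdsWithin).exists
    exact ⟨δ, hp, h.1.le, h.2.1.le, fun i => (h.2.2 i).le⟩
  let b : ContDiffBump (0 : ESp n) := ⟨δ / 2, δ, by positivity, by linarith⟩
  set ρ : ESp n → ℝ := b.normed volume with hρ
  have hρs : ContDiff ℝ (⊤ : ℕ∞) ρ := b.contDiff_normed
  have hρc : HasCompactSupport ρ := b.hasCompactSupport_normed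
  have hρsup : Function.support ρ = ball 0 δ := b.support_normed_eq
  have hρts : tsupport ρ = closedBall 0 δ := b.tsupport_normed_eq
  have hρ0 : ∀ x, 0 ≤ ρ x := b.nonneg_normed
  have hρ1 : ∫ x, ρ x = 1 := b.integral_normed
  set f : ESp n → ℝ := convolution U ρ (ContinuousLinearMap.mul ℝ ℝ) volume with hf
  have hUl : LocallyIntegrable U volume := hU2.locallyIntegrable (by norm_num)
  have hfx : ∀ x, f x = ∫ z, ρ (x - z) * U z := fun x => by
    rw [hf, convolution_def]
    exact integral_congr_ae (ae_of_all _ fun z => mul_comm _ _)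
  have hfs : ContDiff ℝ (⊤ : ℕ∞) f := hρc.contDiff_convolution_right _ hUl hρs
  have hin : ∀ x ∈ K, ∀ z, z ∉ K' → ‖x - z‖ > δ := fun x hx z hz => by
    by_contra h
    push Not at h
    refine hz (mem_cthickening_of_dist_le z x d K hx ?_)
    rw [dist_comm, dist_eq_norm]; linarith
  have hfd : ∀ x ∈ K, ∀ i, fderiv ℝ f x (sb n i) = ∫ z, ρ (x - z) * Gi i z := by
    intro x hx i
    have h1 := hρc.hasFDerivAt_convolution_right (ContinuousLinearMap.mul ℝ ℝ) (μ := volume) hUl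
      (hρs.of_le (by simp)) x
    have h2 : fderiv ℝ f x (sb n i) = ∫ z, U z * fderiv ℝ ρ (x - z) (sb n i) := by
      rw [h1.fderiv, convolution_precompR_apply _ hUl (hρc.fderiv ℝ)
        ((hρs.continuous_fderiv (by simp)))]
      rfl
    set φ : ESp n → ℝ := fun z => ρ (x - z) with hφ
    have hφs : ContDiff ℝ (⊤ : ℕ∞) φ := hρs.comp (contDiff_const.sub contDiff_id)
    have hφd : ∀ z, fderiv ℝ φ z (sb n i) = - fderiv ℝ ρ (x - z) (sb n i) := fun z => by
      have := ((hρs.differentiable (by simp) (x - z)).hasFDerivAt).comp z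
        ((hasFDerivAt_id z).const_sub x)
      have h3 : fderiv ℝ φ z = _ := this.fderiv
      rw [h3]; simp
    have hφt : tsupport φ ⊆ K' := by
      refine closure_minimal (fun z hz => ?_) hK'c.isClosed
      by_contra hzK
      have h4 : x - z ∈ ball (0 : ESp n) δ := by rw [← hρsup]; exact hz
      have h5 := hin x hx z hzK
      simp only [mem_ball_zero_iff] at h4
      linarith
    have hφc : HasCompactSupport φ := hK'c.of_isClosed_subset (isClosed_tsupport _) hφt
    have h6 := hw.2.2 φ hφs hφc (hφt.trans hdΩ) i
    have h7 : ∀ z, z ∉ K' → fderiv ℝ φ z (sb n i) = 0 := fun z hz => by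
      rw [fderiv_of_notMem_tsupport ℝ (fun h => hz (hφt h))]; simp
    have h8 : ∫ z, U z * fderiv ℝ ρ (x - z) (sb n i) = -∫ z in Ω, u z * fderiv ℝ φ z (sb n i) := by
      rw [setIntegral_eq_integral_of_forall_compl_eq_zero
        (fun z hz => by rw [h7 z (fun h => hz (hdΩ h)), mul_zero]), ← integral_neg]
      refine integral_congr_ae ?_
      filter_upwards [hUe] with z hz
      rw [hz, ← mul_neg, hφd, neg_neg]
      by_cases hzK : z ∈ K'
      · rw [indicator_of_mem hzK]
      · have := h7 z hzK
        rw [hφd, neg_eq_zero] at this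
        rw [this, mul_zero, mul_zero]
    have h9 : ∀ z, z ∉ K' → φ z = 0 := fun z hz => image_eq_zero_of_notMem_tsupport
      (fun h => hz (hφt h))
    have h10 : ∫ z, ρ (x - z) * Gi i z = ∫ z in Ω, φ z * g z i := by
      rw [setIntegral_eq_integral_of_forall_compl_eq_zero
        (fun z hz => by rw [h9 z (fun h => hz (hdΩ h)), zero_mul])]
      refine integral_congr_ae ?_
      filter_upwards [hGe i] with z hz
      rw [hz]
      by_cases hzK : z ∈ K'
      · rw [indicator_of_mem hzK]
      · have := h9 z hzK
        rw [show ρ (x - z) = 0 from this, this, zero_mul, zero_mul]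
    rw [h2, h8, h6, h10, neg_neg]
  have hKK' : K ⊆ K' := self_subset_cthickening K
  have fin : ∀ F F' a : ESp n → ℝ, F' =ᵐ[volume] K'.indicator F →
      (∀ x ∈ K, a x = ∫ z, ρ (x - z) * F' z) →
      eLpNorm (fun x => (∫ z, ρ (x - z) * F' z) - F' x) 2 volume ≤ ε →
      eLpNorm (fun x => a x - F x) 2 (volume.restrict K) ≤ ε := by
    intro F F' a h1 h2 h3
    refine le_trans (le_of_eq (eLpNorm_congr_ae ?_)) ((eLpNorm_mono_measure _
      Measure.restrict_le_self).trans h3)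
    filter_upwards [ae_restrict_mem hK.measurableSet, ae_restrict_of_ae h1] with x hx hx1
    rw [hx1, h2 x hx, indicator_of_mem (hKK' hx)]
  refine ⟨f, hfs, fin u U f hUe (fun x _ => hfx x) (hm0 ρ hρs.continuous hρc hρ0
    (hρsup.subset.trans (ball_subset_ball hδδ0)) hρ1), fun i => fin _ (Gi i) _ (hGe i)
    (fun x hx => hfd x hx i) (hmi i ρ hρs.continuous hρc hρ0
    (hρsup.subset.trans (ball_subset_ball (hδδi i))) hρ1)⟩

end Approx

section Translate

variable {V : Type} [NormedAddCommGroup V] [NormedSpace ℝ V] [FiniteDimensional ℝ V] [ProperSpace V]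
  [MeasurableSpace V] [BorelSpace V] {μ : Measure V} [μ.IsAddHaarMeasure]

/-- Translation differences are controlled by the gradient in `L²`. -/
theorem translate_le_fderiv {f : V → ℝ} (hf : ContDiff ℝ 1 f) (h : V) :
    eLpNorm (fun y => f (y + h) - f y) 2 μ ≤ ‖h‖ₑ * eLpNorm (fderiv ℝ f) 2 μ := by
  have hfc : Continuous (fderiv ℝ f) := hf.continuous_fderiv (by simp)
  set ν : Measure ℝ := volume.restrict (Ioc 0 1) with hν
  have : IsProbabilityMeasure ν := ⟨by simp [hν]⟩
  have hpt : ∀ y, f (y + h) - f y = ∫ s, fderiv ℝ f (y + s • h) h ∂ν := fun y => by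
    have h1 : ∀ s ∈ uIcc (0:ℝ) 1, HasDerivAt (fun s : ℝ => f (y + s • h))
        (fderiv ℝ f (y + s • h) h) s := fun s _ => by
      have hd1 : HasDerivAt (fun s : ℝ => y + s • h) h s := by
        simpa using ((hasDerivAt_id s).smul_const h).const_add y
      exact ((hf.differentiable (by simp) _).hasFDerivAt).comp_hasDerivAt_of_eq _ hd1 rfl
    have h2 := intervalIntegral.integral_eq_sub_of_hasDerivAt h1
      (Continuous.intervalIntegrable (by fun_prop) _ _)
    rw [intervalIntegral.integral_of_le zero_le_one] at h2
    rw [hν, h2]; simp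
  have hmm : Measurable fun p : V × ℝ => (‖fderiv ℝ f (p.1 + p.2 • h)‖ₑ) ^ 2 :=
    (Continuous.measurable (by fun_prop)).pow_const 2
  have key : eLpNorm (fun y => f (y + h) - f y) 2 μ ^ 2 ≤
      (‖h‖ₑ * eLpNorm (fderiv ℝ f) 2 μ) ^ 2 := by
    rw [eLpNorm_two_sq, mul_pow, eLpNorm_two_sq]
    calc _ ≤ ∫⁻ y, ‖h‖ₑ ^ 2 * ∫⁻ s, ‖fderiv ℝ f (y + s • h)‖ₑ ^ 2 ∂ν ∂μ := by
          refine lintegral_mono fun y => ?_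
          simp only
          rw [hpt, ← eLpNorm_two_sq ν (fun s => fderiv ℝ f (y + s • h)), ← mul_pow]
          gcongr
          have h1 : eLpNorm (fun s : ℝ => fderiv ℝ f (y + s • h)) 1 ν ≤
              eLpNorm (fun s : ℝ => fderiv ℝ f (y + s • h)) 2 ν :=
            eLpNorm_le_eLpNorm_of_exponent_le (by norm_num)
              (Continuous.aestronglyMeasurable (by fun_prop))
          refine (enorm_integral_le_lintegral_enorm _).trans ?_
          refine le_trans ?_ (mul_le_mul_right h1 _)
          rw [eLpNorm_one_eq_lintegral_enorm, ← lintegral_const_mul'' _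
            (Continuous.aemeasurable (by fun_prop))]
          refine lintegral_mono fun s => ?_
          rw [mul_comm]
          exact ContinuousLinearMap.le_opENorm _ _
      _ = ‖h‖ₑ ^ 2 * ∫⁻ s, ∫⁻ y, ‖fderiv ℝ f (y + s • h)‖ₑ ^ 2 ∂μ ∂ν := by
          rw [lintegral_const_mul' _ _ (by simp), lintegral_lintegral_swap hmm.aemeasurable]
      _ = _ := by
          congr 1
          have : ∀ s : ℝ, ∫⁻ y, ‖fderiv ℝ f (y + s • h)‖ₑ ^ 2 ∂μ = ∫⁻ y, ‖fderiv ℝ f y‖ₑ ^ 2 ∂μ :=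
            fun s => lintegral_add_right_eq_self (fun y => ‖fderiv ℝ f y‖ₑ ^ 2) (s • h)
          simp [this]
  exact (ENNReal.pow_le_pow_left_iff (by norm_num)).1 key

theorem integral_sq_le_of_eLpNorm {f : V → ℝ} {c : ℝ} (hc : 0 ≤ c)
    (hf : MemLp f 2 μ) (h : eLpNorm f 2 μ ≤ ENNReal.ofReal c) : ∫ y, f y ^ 2 ∂μ ≤ c ^ 2 := by
  have h1 : ENNReal.ofReal (∫ y, f y ^ 2 ∂μ) = eLpNorm f 2 μ ^ 2 := by
    rw [eLpNorm_two_sq, ofReal_integral_eq_lintegral_ofReal hf.integrable_sq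
      (ae_of_all _ fun _ => sq_nonneg _)]
    refine lintegral_congr fun y => ?_
    rw [← ofReal_norm, ← ENNReal.ofReal_pow (norm_nonneg _), Real.norm_eq_abs, sq_abs]
  have h2 : ENNReal.ofReal (∫ y, f y ^ 2 ∂μ) ≤ ENNReal.ofReal (c ^ 2) := by
    rw [h1, ENNReal.ofReal_pow hc]; gcongr
  exact (ENNReal.ofReal_le_ofReal_iff (by positivity)).1 h2

theorem eLpNorm_eq_of_integral_sq {f : V → ℝ} (hf : MemLp f 2 μ) :
    eLpNorm f 2 μ = ENNReal.ofReal (Real.sqrt (∫ y, f y ^ 2 ∂μ)) := by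
  have h1 : ENNReal.ofReal (∫ y, f y ^ 2 ∂μ) = eLpNorm f 2 μ ^ 2 := by
    rw [eLpNorm_two_sq, ofReal_integral_eq_lintegral_ofReal hf.integrable_sq
      (ae_of_all _ fun _ => sq_nonneg _)]
    refine lintegral_congr fun y => ?_
    rw [← ofReal_norm, ← ENNReal.ofReal_pow (norm_nonneg _), Real.norm_eq_abs, sq_abs]
  have h2 : eLpNorm f 2 μ ^ 2 = ENNReal.ofReal (Real.sqrt (∫ y, f y ^ 2 ∂μ)) ^ 2 := by
    rw [← ENNReal.ofReal_pow (Real.sqrt_nonneg _), Real.sq_sqrt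
      (integral_nonneg fun _ => sq_nonneg _), h1]
  exact (ENNReal.pow_right_strictMono (n := 2) (by norm_num)).injective h2

/-- If `w` is approximated by smooth functions in `W^{1,2}` (with gradient `G`), then the
translation differences of `w - a` are small, uniformly with respect to the step. -/
theorem exists_tau {w : V → ℝ} {G : V → V →L[ℝ] ℝ} (hw : MemLp w 2 μ)
    (hG : AEStronglyMeasurable G μ)
    (H : ∀ ε : ENNReal, ε ≠ 0 → ∃ a : V → ℝ, ContDiff ℝ (⊤ : ℕ∞) a ∧ HasCompactSupport a ∧
      eLpNorm (fun y => a y - w y) 2 μ ≤ ε ∧ eLpNorm (fun y => fderiv ℝ a y - G y) 2 μ ≤ ε)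
    {τ : ℝ} (hτ : 0 < τ) :
    ∃ a : V → ℝ, ContDiff ℝ (⊤ : ℕ∞) a ∧ HasCompactSupport a ∧
      ∀ h, ∫ y, ((w (y + h) - a (y + h)) - (w y - a y)) ^ 2 ∂μ ≤ τ ^ 2 * ‖h‖ ^ 2 := by
  obtain ⟨a, has, hac, ha1, ha2⟩ := H (ENNReal.ofReal (τ / 2)) (by simpa using hτ)
  refine ⟨a, has, hac, fun h => ?_⟩
  have ha : MemLp a 2 μ := has.continuous.memLp_of_hasCompactSupport hac
  have hm : MemLp (fun y => (w (y + h) - a (y + h)) - (w y - a y)) 2 μ :=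
    (memLp_translate (hw.sub ha) h).sub (hw.sub ha)
  rw [← mul_pow]
  refine integral_sq_le_of_eLpNorm (by positivity) hm ?_
  refine ENNReal.le_of_forall_pos_le_add fun ε hε _ => ?_
  obtain ⟨b, hbs, hbc, hb1, hb2⟩ := H (min (ENNReal.ofReal (τ / 2)) (ε / 2 : ENNReal))
    (by simp [hτ, hε.ne'])
  have hb : MemLp b 2 μ := hbs.continuous.memLp_of_hasCompactSupport hbc
  have hbw : MemLp (fun y => w y - b y) 2 μ := hw.sub hb
  have hba : MemLp (fun y => b y - a y) 2 μ := hb.sub ha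
  have e1 : (fun y => (w (y + h) - a (y + h)) - (w y - a y)) =
      ((fun y => w (y + h) - b (y + h)) - (fun y => w y - b y)) +
        fun y => (b (y + h) - a (y + h)) - (b y - a y) := by
    ext1 y; simp only [Pi.add_apply, Pi.sub_apply]; ring
  rw [e1]
  have n1 : eLpNorm (fun y => w y - b y) 2 μ ≤ ε / 2 := by
    have := eLpNorm_sub_comm w b 2 μ
    exact (le_of_eq this).trans (hb1.trans (min_le_right _ _))
  have n2 : eLpNorm (fun y => w (y + h) - b (y + h)) 2 μ ≤ ε / 2 := by
    refine le_trans (le_of_eq ?_) n1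
    exact eLpNorm_comp_measurePreserving (g := fun y => w y - b y) hbw.1
      (measurePreserving_add_right μ h)
  have hfb : AEStronglyMeasurable (fderiv ℝ b) μ :=
    (hbs.continuous_fderiv (by simp)).aestronglyMeasurable
  have hfa : AEStronglyMeasurable (fderiv ℝ a) μ :=
    (has.continuous_fderiv (by simp)).aestronglyMeasurable
  have n3 : eLpNorm (fun y => (b (y + h) - a (y + h)) - (b y - a y)) 2 μ ≤
      ENNReal.ofReal (τ * ‖h‖) := by
    have hd : ContDiff ℝ 1 (fun y => b y - a y) := (hbs.sub has).of_le (by simp)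
    refine (translate_le_fderiv hd h).trans ?_
    have e2 : fderiv ℝ (fun y => b y - a y) = (fun y => fderiv ℝ b y - G y) -
        (fun y => fderiv ℝ a y - G y) := by
      ext1 y
      rw [fderiv_fun_sub (hbs.differentiable (by simp) y) (has.differentiable (by simp) y)]
      simp
    rw [e2, mul_comm, ENNReal.ofReal_mul hτ.le, ofReal_norm]
    gcongr
    refine (eLpNorm_sub_le (hfb.sub hG) (hfa.sub hG) (by norm_num)).trans ?_
    refine (add_le_add (hb2.trans (min_le_left _ _)) ha2).trans (le_of_eq ?_)
    rw [← ENNReal.ofReal_add (by positivity) (by positivity)]; simp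
  have n4 : eLpNorm ((fun y => w (y + h) - b (y + h)) - (fun y => w y - b y)) 2 μ ≤ ε :=
    (eLpNorm_sub_le (memLp_translate hbw h).1 hbw.1 (by norm_num)).trans
      ((add_le_add n2 n1).trans (le_of_eq (ENNReal.add_halves _)))
  have n5 := eLpNorm_add_le ((memLp_translate hbw h).sub hbw).1
    ((memLp_translate hba h).sub hba).1 (p := 2) (by norm_num)
  refine n5.trans ?_
  rw [add_comm]
  exact add_le_add n3 n4

/-- Second differences of a smooth compactly supported function. -/
theorem second_difference_bound {a : V → ℝ} (ha : ContDiff ℝ (⊤ : ℕ∞) a)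
    (hac : HasCompactSupport a) :
    ∃ C, 0 ≤ C ∧ ∀ y h, |a (y + h) + a (y + -h) - 2 * a y| ≤ C * ‖h‖ ^ 2 := by
  have h1 : ContDiff ℝ 1 (fderiv ℝ a) := ha.fderiv_right (by norm_cast)
  obtain ⟨C, hC⟩ := h1.lipschitzWith_of_hasCompactSupport (hac.fderiv ℝ) (by simp)
  refine ⟨2 * C, by positivity, fun y h => ?_⟩
  have key : ∀ s ∈ Icc (0:ℝ) 1, |fderiv ℝ a (y + s • h) h - fderiv ℝ a (y + -(s • h)) h| ≤
      2 * C * ‖h‖ ^ 2 := fun s hs => by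
    rw [← sub_apply, ← Real.norm_eq_abs]
    refine (ContinuousLinearMap.le_opNorm _ _).trans ?_
    have := hC.dist_le_mul (y + s • h) (y + -(s • h))
    rw [dist_eq_norm, dist_eq_norm] at this
    have e : y + s • h - (y + -(s • h)) = (2 * s) • h := by module
    rw [e, norm_smul, Real.norm_of_nonneg (by linarith [hs.1])] at this
    have h3 : (C:ℝ) * (2 * s * ‖h‖) ≤ C * (2 * 1 * ‖h‖) := by gcongr; exact hs.2
    calc _ ≤ (C * (2 * 1 * ‖h‖)) * ‖h‖ := by gcongr; exact this.trans h3
      _ = _ := by ring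
  have hd : ∀ s ∈ Icc (0:ℝ) 1, HasDerivWithinAt (fun s : ℝ => a (y + s • h) + a (y + -(s • h)))
      (fderiv ℝ a (y + s • h) h - fderiv ℝ a (y + -(s • h)) h) (Icc 0 1) s := fun s _ => by
    have hd1 : HasDerivAt (fun s : ℝ => y + s • h) h s := by
      simpa using ((hasDerivAt_id s).smul_const h).const_add y
    have hd2 : HasDerivAt (fun s : ℝ => y + -(s • h)) (-h) s := by
      simpa using ((hasDerivAt_id s).smul_const h).neg.const_add y
    have := (((ha.differentiable (by simp) (y + s • h)).hasFDerivAt).comp_hasDerivAt_of_eq _ hd1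
      rfl).add (((ha.differentiable (by simp) (y + -(s • h))).hasFDerivAt).comp_hasDerivAt_of_eq _
      hd2 rfl)
    rw [map_neg, ← sub_eq_add_neg] at this
    exact this.hasDerivWithinAt
  have := (convex_Icc (0:ℝ) 1).norm_image_sub_le_of_norm_hasDerivWithin_le hd
    (fun s hs => by rw [Real.norm_eq_abs]; exact key s hs) (left_mem_Icc.2 zero_le_one)
    (right_mem_Icc.2 zero_le_one)
  simp only [one_smul, zero_smul, neg_zero, add_zero, sub_zero, norm_one, mul_one,
    Real.norm_eq_abs] at this
  rwa [two_mul (a y)]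

end Translate

/-! ### Change of variables in a chart -/

section Chart

variable {V : Type} [NormedAddCommGroup V] [NormedSpace ℝ V] [FiniteDimensional ℝ V] [ProperSpace V]
  [CompleteSpace V] [MeasurableSpace V] [BorelSpace V] {μ : Measure V} [μ.IsAddHaarMeasure]
  {J : V → V →L[ℝ] V} {M : Set V} {p v j : V} {η : ℝ}

theorem contDiff_det : ContDiff ℝ (⊤ : ℕ∞) (fun A : V →L[ℝ] V => A.det) := by
  set b := Module.finBasis ℝ V
  have h : ∀ A : V →L[ℝ] V, A.det = ∑ σ : Equiv.Perm (Fin (Module.finrank ℝ V)),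
      ((Equiv.Perm.sign σ : ℤ) : ℝ) * ∏ i, b.equivFunL (A (b i)) (σ i) := fun A => by
    rw [ContinuousLinearMap.det, ← LinearMap.det_toMatrix b, Matrix.det_apply']
    simp [LinearMap.toMatrix_apply]
  simp only [h]
  refine ContDiff.sum fun σ _ => contDiff_const.mul (contDiff_prod fun i _ => ?_)
  have h1 : ContDiff ℝ (⊤ : ℕ∞) fun A : V →L[ℝ] V => b.equivFunL (A (b i)) :=
    b.equivFunL.toContinuousLinearMap.contDiff.comp (contDiff_id.clm_apply contDiff_const)
  exact (contDiff_pi.1 h1) (σ i)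

namespace HChart

variable (c : HChart J M p v j η)

theorem contOn : ContinuousOn c.Φ c.U := fun y hy => (c.smooth y hy).continuousAt.continuousWithinAt

theorem hasFDerivAt {y : V} (hy : y ∈ c.U) : HasFDerivAt c.Φ (fderiv ℝ c.Φ y) y :=
  ((c.smooth y hy).differentiableAt (by simp)).hasFDerivAt

theorem hasFDerivAt_inv {x : V} (hx : x ∈ c.N) : HasFDerivAt c.inv (fderiv ℝ c.inv x) x :=
  ((c.smooth_inv x hx).differentiableAt (by simp)).hasFDerivAt

theorem injOn : InjOn c.Φ c.U := fun y hy z hz h => by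
  rw [← c.left_inv y hy, h, c.left_inv z hz]

theorem image_U : c.Φ '' c.U = c.N := by
  refine Subset.antisymm (image_subset_iff.2 c.maps) fun x hx => ⟨c.inv x, c.maps_inv x hx,
    c.right_inv x hx⟩

theorem det_ne_zero {y : V} (hy : y ∈ c.U) : (fderiv ℝ c.Φ y).det ≠ 0 := by
  have h1 : HasFDerivAt (c.inv ∘ c.Φ) ((fderiv ℝ c.inv (c.Φ y)).comp (fderiv ℝ c.Φ y)) y :=
    (c.hasFDerivAt_inv (c.maps y hy)).comp y (c.hasFDerivAt hy)
  have h2 : HasFDerivAt (c.inv ∘ c.Φ) (ContinuousLinearMap.id ℝ V) y := by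
    refine (hasFDerivAt_id y).congr_of_eventuallyEq ?_
    filter_upwards [c.hU.mem_nhds hy] with z hz
    exact c.left_inv z hz
  have h3 := h1.unique h2
  intro h0
  have h4 : ((fderiv ℝ c.inv (c.Φ y)).comp (fderiv ℝ c.Φ y)).det = 1 := by
    rw [h3]; simp [ContinuousLinearMap.det]
  have h5 : ((fderiv ℝ c.inv (c.Φ y)).comp (fderiv ℝ c.Φ y)).det =
      (fderiv ℝ c.inv (c.Φ y)).det * (fderiv ℝ c.Φ y).det := by
    simp only [ContinuousLinearMap.det, ContinuousLinearMap.toLinearMap_comp, LinearMap.det_comp]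
  rw [h5, h0, mul_zero] at h4
  exact zero_ne_one h4

theorem smooth_det {y : V} (hy : y ∈ c.U) :
    ContDiffAt ℝ (⊤ : ℕ∞) (fun y => |(fderiv ℝ c.Φ y).det|) y := by
  have h1 : ContDiffAt ℝ (⊤ : ℕ∞) (fun y => (fderiv ℝ c.Φ y).det) y :=
    contDiff_det.contDiffAt.comp y ((c.smooth y hy).fderiv_right (by norm_cast))
  exact h1.abs (c.det_ne_zero hy)

theorem map_le {S : Set V} (hS : IsCompact S) (hSU : S ⊆ c.U) :
    ∃ C : ENNReal, C ≠ ⊤ ∧ (μ.restrict S).map c.Φ ≤ C • μ.restrict (c.Φ '' S) := by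
  have hK : IsCompact (c.Φ '' S) := hS.image_of_continuousOn (c.contOn.mono hSU)
  have hKN : c.Φ '' S ⊆ c.N := image_subset_iff.2 fun y hy => c.maps y (hSU hy)
  have hdc : ContinuousOn (fun x => (fderiv ℝ c.inv x).det) (c.Φ '' S) := fun x hx => by
    have h1 : ContDiffAt ℝ 0 (fderiv ℝ c.inv) x :=
      (c.smooth_inv x (hKN hx)).fderiv_right (by norm_cast)
    have h2 : Continuous fun A : V →L[ℝ] V => A.det := contDiff_det.continuous
    exact (h2.continuousAt.comp h1.continuousAt).continuousWithinAt
  obtain ⟨C, hC⟩ := hK.exists_bound_of_continuousOn hdc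
  refine ⟨ENNReal.ofReal C, ENNReal.ofReal_ne_top, Measure.le_iff.2 fun A hA => ?_⟩
  have hae : AEMeasurable c.Φ (μ.restrict S) :=
    (c.contOn.mono hSU).aemeasurable hS.measurableSet
  rw [Measure.map_apply_of_aemeasurable hae hA, Measure.restrict_apply' hS.measurableSet,
    Measure.smul_apply, Measure.restrict_apply' hK.measurableSet]
  calc _ ≤ μ (c.inv '' (A ∩ c.Φ '' S)) := by
        refine measure_mono fun y hy => ⟨c.Φ y, ⟨hy.1, mem_image_of_mem _ hy.2⟩,
          c.left_inv y (hSU hy.2)⟩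
    _ ≤ ∫⁻ x in A ∩ c.Φ '' S, ENNReal.ofReal |(fderiv ℝ c.inv x).det| ∂μ :=
        addHaar_image_le_lintegral_abs_det_fderiv μ (hA.inter hK.measurableSet) fun x hx =>
          (c.hasFDerivAt_inv (hKN hx.2)).hasFDerivWithinAt
    _ ≤ ∫⁻ x in A ∩ c.Φ '' S, ENNReal.ofReal C ∂μ := by
        refine setLIntegral_mono' (hA.inter hK.measurableSet) fun x hx => ?_
        exact ENNReal.ofReal_le_ofReal (hC x hx.2)
    _ = _ := by rw [setLIntegral_const, smul_eq_mul]

/-- Pulling back by the chart is bounded in `L²` on compact sets. -/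
theorem pullback {S : Set V} (hS : IsCompact S) (hSU : S ⊆ c.U) :
    ∃ C : ENNReal, C ≠ ⊤ ∧ ∀ F : V → ℝ, AEStronglyMeasurable F (μ.restrict (c.Φ '' S)) →
      AEStronglyMeasurable (fun y => F (c.Φ y)) (μ.restrict S) ∧
      eLpNorm (fun y => F (c.Φ y)) 2 (μ.restrict S) ≤ C * eLpNorm F 2 (μ.restrict (c.Φ '' S)) := by
  obtain ⟨C, hC, hle⟩ := c.map_le (μ := μ) hS hSU
  have hae : AEMeasurable c.Φ (μ.restrict S) :=
    (c.contOn.mono hSU).aemeasurable hS.measurableSet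
  refine ⟨C ^ (1 / (2:ENNReal).toReal), by simp [hC], fun F hF => ?_⟩
  have h1 : AEStronglyMeasurable F ((μ.restrict S).map c.Φ) :=
    (hF.smul_measure C).mono_measure hle
  refine ⟨h1.comp_aemeasurable hae, ?_⟩
  have h2 : eLpNorm (F ∘ c.Φ) 2 (μ.restrict S) = _ := (eLpNorm_map_measure h1 hae).symm
  change eLpNorm (F ∘ c.Φ) 2 _ ≤ _
  rw [h2]
  refine (eLpNorm_mono_measure _ hle).trans (le_of_eq ?_)
  rw [eLpNorm_smul_measure_of_ne_top (by norm_num), smul_eq_mul]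
  simp

theorem memLp_pullback {S : Set V} (hS : IsCompact S) (hSU : S ⊆ c.U) {F : V → ℝ}
    (hF : MemLp F 2 (μ.restrict (c.Φ '' S))) : MemLp (fun y => F (c.Φ y)) 2 (μ.restrict S) := by
  obtain ⟨C, hC, h⟩ := c.pullback (μ := μ) hS hSU
  exact ⟨(h F hF.1).1, (h F hF.1).2.trans_lt (ENNReal.mul_lt_top hC.lt_top hF.2)⟩

theorem integral_eq (F : V → ℝ) (hF : ∀ x ∉ c.N, F x = 0) :
    ∫ x, F x ∂μ = ∫ y in c.U, |(fderiv ℝ c.Φ y).det| * F (c.Φ y) ∂μ := by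
  rw [← setIntegral_eq_integral_of_forall_compl_eq_zero (s := c.N) hF, ← c.image_U]
  exact integral_image_eq_integral_abs_det_fderiv_smul μ c.hU.measurableSet
    (fun y hy => (c.hasFDerivAt hy).hasFDerivWithinAt) c.injOn F

end HChart

end Chart

/-! ### Rates of convergence -/

section Rate

/-- A family of functionals, each bounded by a multiple of `q` and eventually bounded by every
positive multiple of `q`, admits bounds `θ j * q` with `θ j → 0`. -/
theorem exists_rate {T : Type} {ℓ : ℕ → T → ℝ} {q : T → ℝ} (hq : ∀ φ, 0 ≤ q φ)
    (h1 : ∀ k, ∃ C, 0 ≤ C ∧ ∀ φ, |ℓ k φ| ≤ C * q φ)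
    (h2 : ∀ ε > 0, ∀ᶠ k in atTop, ∀ φ, |ℓ k φ| ≤ ε * q φ) :
    ∃ θ : ℕ → ℝ, (∀ k, 0 ≤ θ k) ∧ Tendsto θ atTop (𝓝 0) ∧ ∀ k φ, |ℓ k φ| ≤ θ k * q φ := by
  set A : ℕ → Set ℝ := fun k => {C | 0 ≤ C ∧ ∀ φ, |ℓ k φ| ≤ C * q φ} with hA
  have hbd : ∀ k, BddBelow (A k) := fun k => ⟨0, fun C hC => hC.1⟩
  have h0 : ∀ k, 0 ≤ sInf (A k) := fun k => le_csInf (h1 k) fun C hC => hC.1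
  refine ⟨fun k => sInf (A k), h0, ?_, ?_⟩
  · rw [Metric.tendsto_atTop]
    intro ε hε
    obtain ⟨K, hK⟩ := eventually_atTop.1 (h2 (ε / 2) (by positivity))
    refine ⟨K, fun k hk => ?_⟩
    rw [Real.dist_eq, sub_zero, abs_of_nonneg (h0 k)]
    exact (csInf_le (hbd k) ⟨by positivity, hK k hk⟩).trans_lt (by linarith)
  · intro k φ
    rcases (hq φ).eq_or_lt with h | h
    · obtain ⟨C, -, hC⟩ := h1 k
      have := hC φ
      rw [← h] at this ⊢
      simpa using this
    · rw [← div_le_iff₀ h]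
      exact le_csInf (h1 k) fun C hC => (div_le_iff₀ h).2 (hC.2 φ)

theorem measurable_indicator_usc {V : Type} [TopologicalSpace V] [MeasurableSpace V] [BorelSpace V]
    {U : Set V} (hU : IsOpen U) {F : V → ℝ} (hF : UpperSemicontinuousOn F U) :
    Measurable (U.indicator F) := by
  refine measurable_of_Iio fun a => ?_
  have ho : IsOpen {y | y ∈ U ∧ F y < a} := by
    rw [isOpen_iff_mem_nhds]
    rintro y ⟨hy, hya⟩
    have := hF y hy a hya
    rw [hU.nhdsWithin_eq hy] at this
    filter_upwards [hU.mem_nhds hy, this] with z h1 h2 using ⟨h1, h2⟩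
  have e : U.indicator F ⁻¹' Iio a = {y | y ∈ U ∧ F y < a} ∪ (Uᶜ ∩ {_y | (0:ℝ) < a}) := by
    ext y
    by_cases hy : y ∈ U <;> simp [hy]
  rw [e]
  exact ho.measurableSet.union (hU.measurableSet.compl.inter (MeasurableSet.const _))

theorem measurable_cutoff_usc {V : Type} [TopologicalSpace V] [MeasurableSpace V] [BorelSpace V]
    {U : Set V} (hU : IsOpen U) {F χ : V → ℝ} (hF : UpperSemicontinuousOn F U)
    (hχ : Continuous χ) (h0 : ∀ y ∉ U, χ y = 0) : Measurable (fun y => χ y * F y) := by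
  have h2 := measurable_indicator_usc hU hF
  have : (fun y => χ y * F y) = fun y => χ y * U.indicator F y := by
    ext y
    by_cases hy : y ∈ U
    · rw [indicator_of_mem hy]
    · rw [h0 y hy, zero_mul, zero_mul]
  rw [this]
  exact hχ.measurable.mul h2

end Rate

section Submean

variable {n : ℕ} {M : Set (ESp n)}

/-- Plurisubharmonicity in a chart: since `z ↦ Φ (y + z v)` is a holomorphic disc, the pullback
satisfies the sub-mean value inequality on the ellipses `y + r (cos t v + sin t j)`. -/
theorem submean_chart (S : ACStruct n M) {Ω : Set (ESp n)} {f : ESp n → ℝ} (hf : JPsh S Ω f)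
    {p v j : ESp n} {η : ℝ} (c : HChart S.J M p v j η) {y : ESp n} {r : ℝ}
    (h : ∀ z ∈ unitDisc, y + (2 * r) • zv v j z ∈ c.U ∧ c.Φ (y + (2 * r) • zv v j z) ∈ Ω) :
    2 * Real.pi * f (c.Φ y) ≤ ∫ t in (0:ℝ)..(2 * Real.pi), f (c.Φ (y + r • ell v j t)) := by
  set lin : ℂ →L[ℝ] ESp n := (2 * r) • zv v j with hlin
  set lam : ℂ → ESp n := fun z => c.Φ (y + lin z) with hlam
  have hd : ∀ z ∈ unitDisc, HasFDerivAt lam ((fderiv ℝ c.Φ (y + lin z)).comp lin) z :=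
    fun z hz => (c.hasFDerivAt (h z hz).1).comp z (lin.hasFDerivAt.const_add y)
  have hz1 : zv v j 1 = v := by simp [zv]
  have hzI : zv v j Complex.I = j := by simp [zv]
  have hhol : IsJHoloDisc S lam := by
    refine ⟨fun z hz => ?_, fun z hz => c.hNM (c.maps _ (h z hz).1), fun z hz => ?_⟩
    · exact (c.smooth _ (h z hz).1).comp z (contDiffAt_const.add lin.contDiff.contDiffAt)
    · rw [(hd z hz).fderiv]
      simp only [ContinuousLinearMap.comp_apply, hlin, smul_apply, hz1, hzI, map_smul]
      rw [c.CR _ (h z hz).1]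
      rfl
  have hs := (hf.2 lam hhol fun z hz => (h z hz).2).submean 0 (1 / 2) (by norm_num)
    (by rw [unitDisc]; exact closedBall_subset_ball (by norm_num))
  have h0 : lam 0 = c.Φ y := by simp [hlam]
  have hc : ∀ t : ℝ, lam (0 + ((1 / 2 : ℝ) : ℂ) * Complex.exp (t * Complex.I))
      = c.Φ (y + r • ell v j t) := by
    intro t
    simp only [hlam]
    congr 2
    rw [hlin, zero_add, Complex.exp_mul_I, ← Complex.ofReal_cos, ← Complex.ofReal_sin]
    simp only [smul_apply, ell, zv]
    simp [-Complex.ofReal_cos, -Complex.ofReal_sin]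
    rw [smul_smul, smul_smul, smul_smul, smul_smul]
    congr 2 <;> ring
  rw [circAvg] at hs
  simp only [hc] at hs
  rw [h0] at hs
  have hpi := Real.pi_pos
  have := mul_le_mul_of_nonneg_left hs (by positivity : (0:ℝ) ≤ 2 * Real.pi)
  rwa [← mul_assoc, mul_inv_cancel₀ (by positivity), one_mul] at this

end Submean

section Core

variable {V : Type} [NormedAddCommGroup V] [NormedSpace ℝ V] [FiniteDimensional ℝ V] [ProperSpace V]
  [MeasurableSpace V] [BorelSpace V] {μ : Measure V} [μ.IsAddHaarMeasure]

theorem tendsto_integral_sq_of_decreasing {α : Type} [MeasurableSpace α] {ν : Measure α}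
    {W : ℕ → α → ℝ} (hW : ∀ k, MemLp (W k) 2 ν) (hW0 : ∀ k y, 0 ≤ W k y)
    (hdec : ∀ k y, W k y ≤ W 0 y) (hlim : ∀ y, Tendsto (fun k => W k y) atTop (𝓝 0)) :
    Tendsto (fun k => ∫ y, W k y ^ 2 ∂ν) atTop (𝓝 0) := by
  have := tendsto_integral_filter_of_dominated_convergence (μ := ν) (l := atTop)
    (F := fun k y => W k y ^ 2) (f := fun _ => (0:ℝ)) (fun y => W 0 y ^ 2)
    (Eventually.of_forall fun k => (hW k).1.pow 2)
    (Eventually.of_forall fun k => ae_of_all _ fun y => by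
      rw [Real.norm_of_nonneg (sq_nonneg _)]
      exact pow_le_pow_left₀ (hW0 k y) (hdec k y) 2)
    (hW 0).integrable_sq (ae_of_all _ fun y => by simpa using (hlim y).pow 2)
  simpa using this

/-- The bound of `core_bound` for functions `W k` decreasing to zero such that each `w + W k` satisfies
the sub-mean value inequality, with constants `θ k → 0`. Given a precision, first the approximation
`a` of `w` is chosen, which fixes `C`; the remaining terms `∫ (W k) ^ 2` and `C ∫ ψ ^ 2 W k` then tend
to zero as `k → ∞`. -/
theorem core_rate {w ψ : V → ℝ} {W : ℕ → V → ℝ} {r0 : ℝ} (hw : MemLp w 2 μ)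
    (hwm : Measurable w) (hW : ∀ k, MemLp (W k) 2 μ) (hWm : ∀ k, Measurable (W k))
    (hW1 : ∀ k, Integrable (W k) μ) (hW0 : ∀ k y, 0 ≤ W k y) (hdec : ∀ k y, W k y ≤ W 0 y)
    (hlim : ∀ y, Tendsto (fun k => W k y) atTop (𝓝 0))
    (hψ : ContDiff ℝ 1 ψ) (hψc : HasCompactSupport ψ) (h0 : ∀ y, 0 ≤ ψ y) (h1 : ∀ y, ψ y ≤ 1)
    (hτ : ∀ τ > 0, ∃ a : V → ℝ, ContDiff ℝ (⊤ : ℕ∞) a ∧ HasCompactSupport a ∧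
      ∀ h, ∫ y, ((w (y + h) - a (y + h)) - (w y - a y)) ^ 2 ∂μ ≤ τ ^ 2 * ‖h‖ ^ 2)
    (v j : V) (hr0 : 0 < r0)
    (hsm : ∀ k, ∀ r, |r| < r0 → ∀ y, ψ y ≠ 0 → 2 * Real.pi * (w y + W k y) ≤
      ∫ t in (0:ℝ)..(2 * Real.pi), (w (y + r • ell v j t) + W k (y + r • ell v j t))) :
    ∃ θ : ℕ → ℝ, (∀ k, 0 ≤ θ k) ∧ Tendsto θ atTop (𝓝 0) ∧
      ∀ k (φ : V → ℝ), ContDiff ℝ 1 φ → HasCompactSupport φ →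
        |∫ y, ψ y * W k y * fderiv ℝ φ y v ∂μ| ≤ θ k * √(∫ y, φ y ^ 2 ∂μ) := by
  obtain ⟨L, hL⟩ := hψ.lipschitzWith_of_hasCompactSupport hψc (by simp)
  have hL' : ∀ x y, |ψ x - ψ y| ≤ L * ‖x - y‖ := fun x y => by
    rw [← Real.norm_eq_abs]; exact hL.norm_sub_le x y
  have key : ∀ τ > 0, ∃ C, 0 ≤ C ∧ ∀ k (φ : V → ℝ), ContDiff ℝ 1 φ → HasCompactSupport φ →
      (∫ y, ψ y * W k y * fderiv ℝ φ y v ∂μ) ^ 2 ≤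
      4 * (‖v‖ + ‖j‖) ^ 2 * (2 * (L:ℝ) ^ 2 * (∫ y, W k y ^ 2 ∂μ) + τ ^ 2 +
        C * ∫ y, ψ y ^ 2 * W k y ∂μ) * ∫ y, φ y ^ 2 ∂μ := by
    intro τ hτ0
    obtain ⟨a, ha, hac, hah⟩ := hτ τ hτ0
    obtain ⟨C, hC, hC2⟩ := second_difference_bound ha hac
    refine ⟨C, hC, fun k φ hφ hφc => ?_⟩
    have hU : MemLp (fun y => w y + W k y) 2 μ := hw.add (hW k)
    refine core_bound (U := fun y => w y + W k y) hU (hwm.add (hWm k)) (hW k) (hWm k) (hW1 k)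
      (hW0 k) hψ.continuous h0 h1 hL' (ha.continuous.memLp_of_hasCompactSupport hac) hC hC2
      (fun h => ?_) le_rfl le_rfl v j hr0 (hsm k) hφ hφc
    simpa only [add_sub_cancel_right] using hah h
  have t1 := tendsto_integral_sq_of_decreasing hW hW0 hdec hlim
  have t2 : Tendsto (fun k => ∫ y, ψ y ^ 2 * W k y ∂μ) atTop (𝓝 0) := by
    have := tendsto_integral_filter_of_dominated_convergence (μ := μ) (l := atTop)
      (F := fun k y => ψ y ^ 2 * W k y) (f := fun _ => (0:ℝ)) (fun y => W 0 y)
      (Eventually.of_forall fun k =>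
        ((hψ.continuous.pow 2).measurable.mul (hWm k)).aestronglyMeasurable)
      (Eventually.of_forall fun k => ae_of_all _ fun y => by
        rw [Real.norm_of_nonneg (mul_nonneg (sq_nonneg _) (hW0 k y))]
        exact (mul_le_of_le_one_left (hW0 k y) (pow_le_one₀ (h0 y) (h1 y))).trans (hdec k y))
      (hW1 0) (ae_of_all _ fun y => by simpa using (hlim y).const_mul (ψ y ^ 2))
    simpa using this
  set T := {φ : V → ℝ // ContDiff ℝ 1 φ ∧ HasCompactSupport φ}
  have conv : ∀ (x A q ε : ℝ), 0 ≤ ε → 0 ≤ q → x ^ 2 ≤ A * q → A ≤ ε ^ 2 → |x| ≤ ε * √q := by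
    intro x A q ε hε hq hx hA
    apply abs_le_of_sq_le_sq _ (by positivity)
    rw [mul_pow, Real.sq_sqrt hq]
    exact hx.trans (mul_le_mul_of_nonneg_right hA hq)
  obtain ⟨θ, hθ0, hθ, hb⟩ := exists_rate (T := T)
    (ℓ := fun k φ => ∫ y, ψ y * W k y * fderiv ℝ φ.1 y v ∂μ) (q := fun φ => √(∫ y, φ.1 y ^ 2 ∂μ))
    (fun φ => Real.sqrt_nonneg _)
    (fun k => by
      obtain ⟨C, hC, h⟩ := key 1 one_pos
      set A := 4 * (‖v‖ + ‖j‖) ^ 2 * (2 * (L:ℝ) ^ 2 * (∫ y, W k y ^ 2 ∂μ) + 1 ^ 2 +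
        C * ∫ y, ψ y ^ 2 * W k y ∂μ)
      refine ⟨1 + |A|, by positivity, fun φ => conv _ A _ _ (by positivity)
        (integral_nonneg fun _ => sq_nonneg _) (h k φ.1 φ.2.1 φ.2.2) ?_⟩
      nlinarith [abs_nonneg A, le_abs_self A])
    (fun ε hε => by
      set D := 4 * (‖v‖ + ‖j‖) ^ 2
      have hD : 0 ≤ D := by positivity
      obtain ⟨C, hC, h⟩ := key (ε / (1 + D)) (by positivity)
      have t3 : Tendsto (fun k => D * (2 * (L:ℝ) ^ 2 * (∫ y, W k y ^ 2 ∂μ) + (ε / (1 + D)) ^ 2 +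
        C * ∫ y, ψ y ^ 2 * W k y ∂μ)) atTop
        (𝓝 (D * (2 * (L:ℝ) ^ 2 * 0 + (ε / (1 + D)) ^ 2 + C * 0))) :=
        (((t1.const_mul _).add_const _).add (t2.const_mul _)).const_mul _
      have hlt : D * (2 * (L:ℝ) ^ 2 * 0 + (ε / (1 + D)) ^ 2 + C * 0) < ε ^ 2 := by
        rw [mul_zero, mul_zero, zero_add, add_zero, div_pow, mul_div_assoc', div_lt_iff₀ (by positivity)]
        have : 0 < ε ^ 2 := by positivity
        nlinarith [mul_nonneg this.le hD, mul_nonneg this.le (sq_nonneg D)]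
      filter_upwards [t3.eventually (gt_mem_nhds hlt)] with k hk φ
      exact conv _ _ _ _ hε.le (integral_nonneg fun _ => sq_nonneg _) (h k φ.1 φ.2.1 φ.2.2) hk.le)
  exact ⟨θ, hθ0, hθ, fun k φ h1 h2 => hb k ⟨φ, h1, h2⟩⟩

end Core

/-! ### The estimate in a chart -/

section ChartTau

theorem memLp_mul_of_support {V : Type} [TopologicalSpace V] [T2Space V] [MeasurableSpace V]
    [BorelSpace V] {μ : Measure V} {χ F : V → ℝ} {S : Set V} (hS : IsCompact S)
    (hχ : Continuous χ) (hχS : ∀ y ∉ S, χ y = 0) (hF : MemLp F 2 (μ.restrict S)) :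
    MemLp (fun y => χ y * F y) 2 μ := by
  obtain ⟨A, hA⟩ := hS.exists_bound_of_continuousOn hχ.continuousOn
  have e : (fun y => χ y * F y) = S.indicator (fun y => χ y * F y) := by
    ext y
    by_cases hy : y ∈ S
    · rw [indicator_of_mem hy]
    · rw [indicator_of_notMem hy, hχS y hy, zero_mul]
  rw [e, memLp_indicator_iff_restrict hS.measurableSet]
  refine hF.of_le_mul (c := A) (hχ.measurable.aestronglyMeasurable.mul hF.1) ?_
  filter_upwards [ae_restrict_mem hS.measurableSet] with y hy
  rw [norm_mul]
  exact mul_le_mul_of_nonneg_right (hA y hy) (norm_nonneg _)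

variable {n : ℕ} {M : Set (ESp n)} {J : ESp n → ESp n →L[ℝ] ESp n} {p v j : ESp n} {η : ℝ}

theorem clm_eq_sum (L : ESp n →L[ℝ] ℝ) :
    L = ∑ i, L (sb n i) • (EuclideanSpace.proj i : ESp n →L[ℝ] ℝ) := by
  ext x
  have hx : x = ∑ i, x i • sb n i := by
    ext k
    simp [sb, Finset.sum_apply, Pi.single_apply]
  conv_lhs => rw [hx]
  simp [mul_comm]

theorem norm_proj_le (i : Fin (2 * n)) : ‖(EuclideanSpace.proj i : ESp n →L[ℝ] ℝ)‖ ≤ 1 := by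
  refine ContinuousLinearMap.opNorm_le_bound _ zero_le_one fun x => ?_
  rw [one_mul]
  exact PiLp.norm_apply_le x i

set_option maxHeartbeats 1000000 in
/-- In a chart, the cut-off pullback of a `W^{1,2}` function is approximated by test functions
with an error whose translation differences are as small as desired. -/
theorem chart_tau (c : HChart J M p v j η) {Ω : Set (ESp n)} (hΩ : IsOpen Ω)
    {u : ESp n → ℝ} {g : ESp n → ESp n} (hw : HasWeakGradOn u g Ω)
    (hu : ∀ K ⊆ Ω, IsCompact K → MemLp u 2 (volume.restrict K))
    (hg : ∀ K ⊆ Ω, IsCompact K → ∀ i, MemLp (fun x => g x i) 2 (volume.restrict K))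
    {S : Set (ESp n)} (hS : IsCompact S) (hSU : S ⊆ c.U) (hSΩ : c.Φ '' S ⊆ Ω)
    {χ : ESp n → ℝ} (hχ : ContDiff ℝ (⊤ : ℕ∞) χ) (hχS : tsupport χ ⊆ S) {τ : ℝ} (hτ : 0 < τ) :
    ∃ a : ESp n → ℝ, ContDiff ℝ (⊤ : ℕ∞) a ∧ HasCompactSupport a ∧
      ∀ h, ∫ y, ((χ (y + h) * u (c.Φ (y + h)) - a (y + h)) - (χ y * u (c.Φ y) - a y)) ^ 2 ≤
        τ ^ 2 * ‖h‖ ^ 2 := by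
  have hKc : IsCompact (c.Φ '' S) := hS.image_of_continuousOn (c.contOn.mono hSU)
  have hχ0 : ∀ y ∉ S, χ y = 0 := fun y hy => image_eq_zero_of_notMem_tsupport fun h => hy (hχS h)
  have hdχ0 : ∀ y ∉ S, fderiv ℝ χ y = 0 := fun y hy =>
    fderiv_of_notMem_tsupport ℝ fun h => hy (hχS h)
  have hχc : HasCompactSupport χ := hS.of_isClosed_subset (isClosed_tsupport χ) hχS
  have hdχ : Continuous (fderiv ℝ χ) := hχ.continuous_fderiv (by simp)
  have hdΦ : ContinuousOn (fderiv ℝ c.Φ) S := fun y hy =>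
    ((c.smooth y (hSU hy)).continuousAt_fderiv (by simp)).continuousWithinAt
  obtain ⟨A1, hA1⟩ := hS.exists_bound_of_continuousOn hχ.continuous.continuousOn
  obtain ⟨A2, hA2⟩ := hS.exists_bound_of_continuousOn hdχ.continuousOn
  obtain ⟨A3, hA3⟩ := hS.exists_bound_of_continuousOn hdΦ
  set A : ℝ := |A1| + |A2| + |A1| * |A3| with hAdef
  have hA0 : 0 ≤ A := by positivity
  obtain ⟨C, hC, hpull⟩ := c.pullback (μ := volume) hS hSU
  set G : ESp n → ESp n →L[ℝ] ℝ := fun y =>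
    (∑ i, (χ y * g (c.Φ y) i) • (EuclideanSpace.proj i : ESp n →L[ℝ] ℝ).comp (fderiv ℝ c.Φ y)) +
      u (c.Φ y) • fderiv ℝ χ y with hG
  have huS := hu _ hSΩ hKc
  have hgS := hg _ hSΩ hKc
  have hG0 : ∀ y ∉ S, G y = 0 := fun y hy => by
    simp [hG, hχ0 y hy, hdχ0 y hy]
  refine exists_tau (μ := volume) (w := fun y => χ y * u (c.Φ y)) (G := G)
    (memLp_mul_of_support hS hχ.continuous hχ0 (c.memLp_pullback hS hSU huS)) ?_ ?_ hτ
  · have e : G = S.indicator G := by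
      ext1 y
      by_cases hy : y ∈ S
      · rw [indicator_of_mem hy]
      · rw [indicator_of_notMem hy, hG0 y hy]
    rw [e, aestronglyMeasurable_indicator_iff hS.measurableSet]
    refine AEStronglyMeasurable.add ?_ ?_
    · refine Finset.aestronglyMeasurable_fun_sum _ fun i _ => AEStronglyMeasurable.fun_smul ?_ ?_
      · exact hχ.continuous.aestronglyMeasurable.mul (hpull (fun x => g x i) (hgS i).1).1
      · exact (continuousOn_const.clm_comp hdΦ).aestronglyMeasurable hS.measurableSet
    · exact (hpull u huS.1).1.smul hdχ.aestronglyMeasurable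
  · intro ε hε
    set Q : ENNReal := ENNReal.ofReal A * ((2 * n : ℕ) * C + C) with hQ
    have hQt : Q ≠ ⊤ := by
      refine ENNReal.mul_ne_top ENNReal.ofReal_ne_top (ENNReal.add_ne_top.2 ⟨?_, hC⟩)
      exact ENNReal.mul_ne_top (ENNReal.natCast_ne_top _) hC
    obtain ⟨f, hf, hf1, hf2⟩ := approx_on_compact hΩ hw hu hg hKc hSΩ
      (ε := ε / Q) (ENNReal.div_ne_zero.2 ⟨hε, hQt⟩)
    set a : ESp n → ℝ := fun y => χ y * f (c.Φ y) with ha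
    have hatS : tsupport a ⊆ tsupport χ := tsupport_mul_subset_left (f := χ) (g := fun y => f (c.Φ y))
    have hac : ContDiff ℝ (⊤ : ℕ∞) a := contDiff_of_tsupport' fun y hy =>
      hχ.contDiffAt.mul (hf.contDiffAt.comp y (c.smooth y (hSU (hχS (hatS hy)))))
    set H : ESp n → ℝ := fun y =>
      (∑ i, |fderiv ℝ f (c.Φ y) (sb n i) - g (c.Φ y) i|) + |f (c.Φ y) - u (c.Φ y)| with hH
    have hm1 : ∀ i, AEStronglyMeasurable (fun y => fderiv ℝ f (c.Φ y) (sb n i) - g (c.Φ y) i)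
        (volume.restrict S) := fun i => (hpull (fun x => fderiv ℝ f x (sb n i) - g x i)
          (((hf.continuous_fderiv (by simp)).clm_apply
            continuous_const).aestronglyMeasurable.sub (hgS i).1)).1
    have hm2 : AEStronglyMeasurable (fun y => f (c.Φ y) - u (c.Φ y)) (volume.restrict S) :=
      (hpull (fun x => f x - u x) (hf.continuous.aestronglyMeasurable.sub huS.1)).1
    have hHn : ENNReal.ofReal A * eLpNorm H 2 (volume.restrict S) ≤ ε := by
      have b1 : ∀ i, eLpNorm (fun y => |fderiv ℝ f (c.Φ y) (sb n i) - g (c.Φ y) i|) 2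
          (volume.restrict S) ≤ C * (ε / Q) := fun i => by
        have := (hpull (fun x => fderiv ℝ f x (sb n i) - g x i)
          (((hf.continuous_fderiv (by simp)).clm_apply
            continuous_const).aestronglyMeasurable.sub (hgS i).1)).2
        refine (eLpNorm_congr_norm_ae (ae_of_all _ fun y => by simp)).le.trans (this.trans ?_)
        gcongr
        exact hf2 i
      have b2 : eLpNorm (fun y => |f (c.Φ y) - u (c.Φ y)|) 2 (volume.restrict S)
          ≤ C * (ε / Q) := by
        have := (hpull (fun x => f x - u x) (hf.continuous.aestronglyMeasurable.sub huS.1)).2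
        refine (eLpNorm_congr_norm_ae (ae_of_all _ fun y => by simp)).le.trans (this.trans ?_)
        gcongr
      have b3 : eLpNorm H 2 (volume.restrict S) ≤ (2 * n : ℕ) * (C * (ε / Q)) + C * (ε / Q) := by
        refine (eLpNorm_add_le (Finset.aestronglyMeasurable_fun_sum _ fun i _ => (hm1 i).norm)
          hm2.norm (by norm_num)).trans (add_le_add ?_ b2)
        have := eLpNorm_sum_le (s := Finset.univ) (μ := volume.restrict S) (p := 2)
          (f := fun i y => |fderiv ℝ f (c.Φ y) (sb n i) - g (c.Φ y) i|)
          (fun i _ => (hm1 i).norm) (by norm_num)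
        have e : (fun y => ∑ i, |fderiv ℝ f (c.Φ y) (sb n i) - g (c.Φ y) i|) =
          ∑ i, (fun y => |fderiv ℝ f (c.Φ y) (sb n i) - g (c.Φ y) i|) := by
          ext y; rw [Finset.sum_apply]
        change eLpNorm (fun y => ∑ i, |fderiv ℝ f (c.Φ y) (sb n i) - g (c.Φ y) i|) 2 _ ≤ _
        rw [e]
        refine this.trans ((Finset.sum_le_sum fun i _ => b1 i).trans ?_)
        simp
      calc _ ≤ ENNReal.ofReal A * ((2 * n : ℕ) * (C * (ε / Q)) + C * (ε / Q)) := by gcongr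
        _ = Q * (ε / Q) := by rw [hQ]; ring
        _ ≤ ε := ENNReal.mul_div_le
    have hsupp : ∀ {E : Type} [NormedAddCommGroup E] (k : ESp n → E), (∀ y ∉ S, k y = 0) →
        (∀ y ∈ S, ‖k y‖ ≤ A * ‖H y‖) → eLpNorm k 2 volume ≤ ε := by
      intro E _ k hk0 hk
      rw [← eLpNorm_restrict_eq_of_support_subset (s := S)]
      · refine le_trans ?_ hHn
        refine eLpNorm_le_mul_eLpNorm_of_ae_le_mul ?_ 2
        filter_upwards [ae_restrict_mem hS.measurableSet] with y hy using hk y hy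
      · intro y hy
        by_contra h
        exact hy (hk0 y h)
    have hHle : ∀ y, ‖H y‖ = H y := fun y => Real.norm_of_nonneg (by positivity)
    have hH1 : ∀ y, |f (c.Φ y) - u (c.Φ y)| ≤ H y := fun y => le_add_of_nonneg_left (by positivity)
    refine ⟨a, hac, hχc.mul_right, ?_, ?_⟩
    · refine hsupp _ (fun y hy => by simp [ha, hχ0 y hy]) fun y hy => ?_
      rw [hHle, ha]
      have : χ y * f (c.Φ y) - χ y * u (c.Φ y) = χ y * (f (c.Φ y) - u (c.Φ y)) := by ring
      dsimp only
      rw [this, norm_mul]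
      refine mul_le_mul ?_ (hH1 y) (norm_nonneg _) hA0
      have := (hA1 y hy).trans (le_abs_self _)
      rw [hAdef]
      nlinarith [abs_nonneg A2, mul_nonneg (abs_nonneg A1) (abs_nonneg A3)]
    · refine hsupp _ (fun y hy => ?_) fun y hy => ?_
      · rw [hG0 y hy, sub_zero]
        exact fderiv_of_notMem_tsupport ℝ fun h => hy (hχS (hatS h))
      · rw [hHle]
        have hder : fderiv ℝ a y = χ y • (fderiv ℝ f (c.Φ y)).comp (fderiv ℝ c.Φ y) +
            f (c.Φ y) • fderiv ℝ χ y :=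
          ((hχ.differentiable (by simp) y).hasFDerivAt.mul
            (((hf.differentiable (by simp) _).hasFDerivAt).comp y (c.hasFDerivAt (hSU hy)))).fderiv
        have e : fderiv ℝ a y - G y = (∑ i, (χ y * (fderiv ℝ f (c.Φ y) (sb n i) - g (c.Φ y) i)) •
            (EuclideanSpace.proj i : ESp n →L[ℝ] ℝ).comp (fderiv ℝ c.Φ y)) +
            (f (c.Φ y) - u (c.Φ y)) • fderiv ℝ χ y := by
          rw [hder]
          conv_lhs => rw [clm_eq_sum (fderiv ℝ f (c.Φ y))]
          simp only [hG, mul_sub, sub_smul, Finset.sum_sub_distrib]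
          ext x
          simp only [add_apply, sub_apply, smul_apply, ContinuousLinearMap.comp_apply,
            sum_apply, smul_eq_mul, Finset.mul_sum, mul_assoc]
          ring
        rw [e]
        refine (norm_add_le _ _).trans ?_
        have c1 : ‖∑ i, (χ y * (fderiv ℝ f (c.Φ y) (sb n i) - g (c.Φ y) i)) •
            (EuclideanSpace.proj i : ESp n →L[ℝ] ℝ).comp (fderiv ℝ c.Φ y)‖ ≤
            ∑ i, A * |fderiv ℝ f (c.Φ y) (sb n i) - g (c.Φ y) i| := by
          refine (norm_sum_le _ _).trans (Finset.sum_le_sum fun i _ => ?_)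
          rw [norm_smul, norm_mul, mul_right_comm]
          refine mul_le_mul_of_nonneg_right ?_ (norm_nonneg _)
          have d1 := (hA1 y hy).trans (le_abs_self _)
          have d2 : ‖(EuclideanSpace.proj i : ESp n →L[ℝ] ℝ).comp (fderiv ℝ c.Φ y)‖ ≤ |A3| := by
            refine (ContinuousLinearMap.opNorm_comp_le _ _).trans ?_
            have := (hA3 y hy).trans (le_abs_self _)
            exact (mul_le_of_le_one_left (norm_nonneg _) (norm_proj_le i)).trans this
          refine (mul_le_mul d1 d2 (norm_nonneg _) (abs_nonneg _)).trans ?_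
          rw [hAdef]
          linarith [abs_nonneg A1, abs_nonneg A2]
        have c2 : ‖(f (c.Φ y) - u (c.Φ y)) • fderiv ℝ χ y‖ ≤ A * |f (c.Φ y) - u (c.Φ y)| := by
          rw [norm_smul, mul_comm]
          refine mul_le_mul_of_nonneg_right ?_ (norm_nonneg _)
          have := (hA2 y hy).trans (le_abs_self _)
          rw [hAdef]
          nlinarith [abs_nonneg A1, mul_nonneg (abs_nonneg A1) (abs_nonneg A3)]
        refine (add_le_add c1 c2).trans ?_
        rw [← Finset.mul_sum, ← mul_add]

end ChartTau

section ChartY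

variable {n : ℕ} {M : Set (ESp n)}

/-- The data of the problem: plurisubharmonic functions `uj k` decreasing to a function `u` which
has weak gradient `g` on `Ω`, with `u` and the components of `g` locally square integrable. -/
structure DecData (S : ACStruct n M) (Ω : Set (ESp n)) (u : ESp n → ℝ) (g : ESp n → ESp n)
    (uj : ℕ → ESp n → ℝ) : Prop where
  hΩ : IsOpen Ω
  usc : UpperSemicontinuousOn u Ω
  weak : HasWeakGradOn u g Ω
  hu : ∀ K ⊆ Ω, IsCompact K → MemLp u 2 (volume.restrict K)
  hg : ∀ K ⊆ Ω, IsCompact K → ∀ i, MemLp (fun x => g x i) 2 (volume.restrict K)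
  psh : ∀ k, JPsh S Ω (uj k)
  dec : ∀ x ∈ Ω, ∀ k, uj k x ≤ uj 0 x
  ge : ∀ x ∈ Ω, ∀ k, u x ≤ uj k x
  lim : ∀ x ∈ Ω, Tendsto (fun k => uj k x) atTop (𝓝 (u x))

variable {S : ACStruct n M} {Ω : Set (ESp n)} {u : ESp n → ℝ} {g : ESp n → ESp n}
  {uj : ℕ → ESp n → ℝ}

theorem DecData.memLp_uj (D : DecData S Ω u g uj) (k : ℕ) {K : Set (ESp n)} (hK : K ⊆ Ω)
    (hKc : IsCompact K) : MemLp (uj k) 2 (volume.restrict K) := by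
  have hfin : IsFiniteMeasure (volume.restrict K) :=
    isFiniteMeasure_restrict.2 hKc.measure_lt_top.ne
  obtain ⟨C, hC⟩ := ((D.psh 0).1.mono hK).bddAbove_of_isCompact hKc
  have hm : AEStronglyMeasurable (uj k) (volume.restrict K) := by
    have h := (measurable_indicator_usc D.hΩ (D.psh k).1).aestronglyMeasurable
      (μ := volume.restrict K)
    refine h.congr ?_
    filter_upwards [ae_restrict_mem hKc.measurableSet] with x hx
    rw [indicator_of_mem (hK hx)]
  have hb : MemLp (fun x => |u x| + |C|) 2 (volume.restrict K) :=
    (D.hu K hK hKc).norm.add (memLp_const _)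
  refine hb.mono hm ?_
  filter_upwards [ae_restrict_mem hKc.measurableSet] with x hx
  have h1 := D.ge x (hK hx) k
  have h2 := (D.dec x (hK hx) k).trans (hC (mem_image_of_mem _ hx))
  rw [Real.norm_eq_abs, Real.norm_of_nonneg (by positivity)]
  refine abs_le.2 ⟨?_, ?_⟩
  · linarith [neg_abs_le (u x), abs_nonneg C]
  · linarith [le_abs_self C, abs_nonneg (u x)]

/-- The energy estimate for the cut-off differences `W k = χ · (uj k - u) ∘ Φ` in a chart. -/
theorem DecData.chart_y (D : DecData S Ω u g uj) {p v j : ESp n} {η : ℝ}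
    (c : HChart S.J M p v j η) {y0 : ESp n} {R : ℝ} (hR : 0 < R)
    (hball : ∀ y ∈ closedBall y0 (4 * R), y ∈ c.U ∧ c.Φ y ∈ Ω)
    (χ ψ : ContDiffBump y0) (hχi : χ.rIn = 3 * R) (hχo : χ.rOut = 4 * R)
    (hψo : ψ.rOut = 2 * R) :
    (∀ k, MemLp (fun y => χ y * (uj k (c.Φ y) - u (c.Φ y))) 2 volume) ∧
    Tendsto (fun k => ∫ y, (χ y * (uj k (c.Φ y) - u (c.Φ y))) ^ 2) atTop (𝓝 0) ∧
    ∃ θ : ℕ → ℝ, (∀ k, 0 ≤ θ k) ∧ Tendsto θ atTop (𝓝 0) ∧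
      ∀ k (φ : ESp n → ℝ), ContDiff ℝ 1 φ → HasCompactSupport φ →
        |∫ y, ψ y * (χ y * (uj k (c.Φ y) - u (c.Φ y))) * fderiv ℝ φ y v| ≤
          θ k * √(∫ y, φ y ^ 2) := by
  set B := closedBall y0 (4 * R) with hB
  have hBc : IsCompact B := isCompact_closedBall _ _
  have hBU : B ⊆ c.U := fun y hy => (hball y hy).1
  have hBΩ : c.Φ '' B ⊆ Ω := by rintro _ ⟨y, hy, rfl⟩; exact (hball y hy).2
  have hKc : IsCompact (c.Φ '' B) := hBc.image_of_continuousOn (c.contOn.mono hBU)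
  have hχS : tsupport χ ⊆ B := by rw [χ.tsupport_eq, hχo]
  have hχ0 : ∀ y ∉ B, χ y = 0 := fun y hy => image_eq_zero_of_notMem_tsupport fun h => hy (hχS h)
  set U' : Set (ESp n) := {y | y ∈ c.U ∧ c.Φ y ∈ Ω} with hU'
  have hU'o : IsOpen U' := c.contOn.isOpen_inter_preimage c.hU D.hΩ
  have hχ0' : ∀ y ∉ U', χ y = 0 := fun y hy => hχ0 y fun h => hy (hball y h)
  have husc : ∀ f : ESp n → ℝ, UpperSemicontinuousOn f Ω →
      UpperSemicontinuousOn (fun y => f (c.Φ y)) U' := fun f hf y hy a ha => by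
    have h1 := hf (c.Φ y) hy.2 a ha
    rw [D.hΩ.nhdsWithin_eq hy.2] at h1
    exact ((c.smooth y hy.1).continuousAt.eventually h1).filter_mono nhdsWithin_le_nhds
  have hmeas : ∀ f : ESp n → ℝ, UpperSemicontinuousOn f Ω → Measurable (fun y => χ y * f (c.Φ y)) :=
    fun f hf => measurable_cutoff_usc hU'o (husc f hf) χ.continuous hχ0'
  have hL : ∀ f : ESp n → ℝ, MemLp f 2 (volume.restrict (c.Φ '' B)) →
      MemLp (fun y => χ y * f (c.Φ y)) 2 volume := fun f hf =>
    memLp_mul_of_support hBc χ.continuous hχ0 (c.memLp_pullback hBc hBU hf)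
  have hw := hL u (D.hu _ hBΩ hKc)
  have hwm := hmeas u D.usc
  have hUk := fun k => hL (uj k) (D.memLp_uj k hBΩ hKc)
  have hUm := fun k => hmeas (uj k) (D.psh k).1
  set W : ℕ → ESp n → ℝ := fun k y => χ y * (uj k (c.Φ y) - u (c.Φ y)) with hWdef
  have hWe : ∀ k, W k = fun y => χ y * uj k (c.Φ y) - χ y * u (c.Φ y) := fun k => by
    ext y; simp only [hWdef]; ring
  have hW : ∀ k, MemLp (W k) 2 volume := fun k => by rw [hWe]; exact (hUk k).sub hw
  have hWm : ∀ k, Measurable (W k) := fun k => by rw [hWe]; exact (hUm k).sub hwm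
  have hW0' : ∀ k, ∀ y ∉ B, W k y = 0 := fun k y hy => by simp [hWdef, hχ0 y hy]
  have hW0 : ∀ k y, 0 ≤ W k y := fun k y => by
    by_cases hy : y ∈ B
    · exact mul_nonneg χ.nonneg (sub_nonneg.2 (D.ge _ (hball y hy).2 k))
    · rw [hW0' k y hy]
  have hdec : ∀ k y, W k y ≤ W 0 y := fun k y => by
    by_cases hy : y ∈ B
    · exact mul_le_mul_of_nonneg_left (sub_le_sub_right (D.dec _ (hball y hy).2 k) _) χ.nonneg
    · rw [hW0' k y hy, hW0' 0 y hy]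
  have hlim : ∀ y, Tendsto (fun k => W k y) atTop (𝓝 0) := fun y => by
    by_cases hy : y ∈ B
    · have := ((D.lim _ (hball y hy).2).sub_const (u (c.Φ y))).const_mul (χ y)
      simpa [hWdef] using this
    · simp only [hW0' _ y hy]; exact tendsto_const_nhds
  have hW1 : ∀ k, Integrable (W k) volume := fun k => by
    have hfin : IsFiniteMeasure (volume.restrict B) :=
      isFiniteMeasure_restrict.2 hBc.measure_lt_top.ne
    have h1 : IntegrableOn (W k) B volume :=
      ((hW k).restrict B).integrable (by norm_num)
    exact (integrableOn_iff_integrable_of_support_subset fun y hy => by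
      by_contra h; exact hy (hW0' k y h)).1 h1
  refine ⟨hW, tendsto_integral_sq_of_decreasing hW hW0 hdec hlim, ?_⟩
  have hr0 : 0 < R / (‖v‖ + ‖j‖ + 1) := by positivity
  refine core_rate (w := fun y => χ y * u (c.Φ y)) (W := W) hw hwm hW hWm hW1 hW0 hdec hlim
    ψ.contDiff ψ.hasCompactSupport (fun y => ψ.nonneg) (fun y => ψ.le_one) (fun τ hτ => ?_)
    v j hr0 (fun k r hr y hy => ?_)
  · exact chart_tau c D.hΩ D.weak D.hu D.hg hBc hBU hBΩ χ.contDiff hχS hτ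
  · have hyb : y ∈ ball y0 (2 * R) := by
      rw [← hψo, ← ψ.support_eq]; exact hy
    rw [lt_div_iff₀ (by positivity)] at hr
    have hr' : |r| * (‖v‖ + ‖j‖) < R := by nlinarith [abs_nonneg r]
    have hsum : ∀ z, χ z * u (c.Φ z) + W k z = χ z * uj k (c.Φ z) := fun z => by
      simp only [hWdef]; ring
    have hχ1 : ∀ z ∈ ball y0 (3 * R), χ z = 1 := fun z hz => by
      refine χ.one_of_mem_closedBall ?_
      rw [hχi]; exact ball_subset_closedBall hz
    have hstep : ∀ t, y + r • ell v j t ∈ ball y0 (3 * R) := fun t => by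
      rw [mem_ball, dist_eq_norm] at hyb ⊢
      have : ‖r • ell v j t‖ ≤ |r| * (‖v‖ + ‖j‖) := by
        rw [norm_smul, Real.norm_eq_abs]
        exact mul_le_mul_of_nonneg_left (norm_ell_le v j t) (abs_nonneg r)
      have e : y + r • ell v j t - y0 = (y - y0) + r • ell v j t := by abel
      rw [e]
      linarith [norm_add_le (y - y0) (r • ell v j t)]
    simp only [hsum]
    rw [hχ1 y (ball_subset_ball (by linarith) hyb), one_mul]
    have e : ∀ t, χ (y + r • ell v j t) * uj k (c.Φ (y + r • ell v j t)) =
        uj k (c.Φ (y + r • ell v j t)) := fun t => by rw [hχ1 _ (hstep t), one_mul]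
    simp only [e]
    refine submean_chart S (D.psh k) c fun z hz => hball _ ?_
    rw [unitDisc, mem_ball_zero_iff] at hz
    rw [mem_ball, dist_eq_norm] at hyb
    rw [hB, mem_closedBall, dist_eq_norm]
    have : ‖(2 * r) • zv v j z‖ ≤ 2 * (|r| * (‖v‖ + ‖j‖)) := by
      rw [norm_smul, Real.norm_eq_abs, abs_mul, abs_two, mul_assoc]
      refine mul_le_mul_of_nonneg_left (mul_le_mul_of_nonneg_left ?_ (abs_nonneg r)) two_pos.le
      rw [zv_apply]
      refine (norm_add_le _ _).trans (add_le_add ?_ ?_) <;> rw [norm_smul] <;>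
        refine mul_le_of_le_one_left (norm_nonneg _) ?_
      · exact (Complex.abs_re_le_norm z).trans hz.le
      · exact (Complex.abs_im_le_norm z).trans hz.le
    have e : y + (2 * r) • zv v j z - y0 = (y - y0) + (2 * r) • zv v j z := by abel
    rw [e]
    linarith [norm_add_le (y - y0) ((2 * r) • zv v j z)]

end ChartY

section ChartX

variable {n : ℕ} {M : Set (ESp n)}
variable {S : ACStruct n M} {Ω : Set (ESp n)} {u : ESp n → ℝ} {g : ESp n → ESp n}
  {uj : ℕ → ESp n → ℝ}

set_option maxHeartbeats 1000000 in
/-- The energy estimate near the centre of a chart, for the derivative along the vector field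
`cf · X` where `X = Φ_* v`. -/
theorem DecData.chart_x (D : DecData S Ω u g uj) {p v j : ESp n} {η : ℝ}
    (c : HChart S.J M p v j η) {N' : Set (ESp n)} (hN' : IsOpen N') (hp' : p ∈ N') (hN'Ω : N' ⊆ Ω)
    {cf : ESp n → ℝ} (hcf : ∀ x ∈ N', ContDiffAt ℝ (⊤ : ℕ∞) cf x) :
    ∃ r > 0, ∃ θ : ℕ → ℝ, (∀ k, 0 ≤ θ k) ∧ Tendsto θ atTop (𝓝 0) ∧
      ∀ k (φ : ESp n → ℝ), ContDiff ℝ (⊤ : ℕ∞) φ → HasCompactSupport φ → tsupport φ ⊆ ball p r →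
        |∫ x, (uj k x - u x) * (cf x * fderiv ℝ φ x (fderiv ℝ c.Φ (c.inv x) v))| ≤
          θ k * √(∫ x, φ x ^ 2) := by
  set y0 := c.inv p with hy0
  have hy0U : y0 ∈ c.U := c.maps_inv p c.hp
  have hΦy0 : c.Φ y0 = p := c.right_inv p c.hp
  have hopen : IsOpen (c.U ∩ c.Φ ⁻¹' N') := c.contOn.isOpen_inter_preimage c.hU hN'
  obtain ⟨R', hR', hball'⟩ := Metric.isOpen_iff.1 hopen y0
    ⟨hy0U, by rw [mem_preimage, hΦy0]; exact hp'⟩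
  set R := R' / 5 with hRdef
  have hR : 0 < R := by positivity
  have hball : ∀ y ∈ closedBall y0 (4 * R), y ∈ c.U ∧ c.Φ y ∈ N' := fun y hy =>
    hball' (closedBall_subset_ball (by rw [hRdef]; linarith) hy)
  set χ : ContDiffBump y0 := ⟨3 * R, 4 * R, by positivity, by linarith⟩ with hχd
  set ψ : ContDiffBump y0 := ⟨R, 2 * R, hR, by linarith⟩ with hψd
  obtain ⟨hW, hW2, θ, hθ0, hθ, hb⟩ := D.chart_y c hR
    (fun y hy => ⟨(hball y hy).1, hN'Ω (hball y hy).2⟩) χ ψ rfl rfl rfl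
  set B := closedBall y0 (4 * R) with hB
  have hBc : IsCompact B := isCompact_closedBall _ _
  have hBU : B ⊆ c.U := fun y hy => (hball y hy).1
  have hχS : tsupport χ ⊆ B := by rw [χ.tsupport_eq]
  have hχ0 : ∀ y ∉ B, χ y = 0 := fun y hy => image_eq_zero_of_notMem_tsupport fun h => hy (hχS h)
  have hψ0 : ∀ y ∉ c.U, ψ y = 0 := fun y hy => by
    refine image_eq_zero_of_notMem_tsupport fun h => hy (hBU ?_)
    rw [ψ.tsupport_eq] at h
    exact closedBall_subset_closedBall (by change 2 * R ≤ 4 * R; linarith) h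
  -- the coefficient produced by the change of variables
  set κ : ESp n → ℝ := fun y => χ y * (cf (c.Φ y) * |(fderiv ℝ c.Φ y).det|) with hκ
  have hκtS : tsupport κ ⊆ tsupport χ :=
    tsupport_mul_subset_left (f := χ) (g := fun y => cf (c.Φ y) * |(fderiv ℝ c.Φ y).det|)
  have hκc : HasCompactSupport κ := χ.hasCompactSupport.mul_right
  have hκs : ContDiff ℝ (⊤ : ℕ∞) κ := contDiff_of_tsupport' fun y hy => by
    have hyB := hball y (hχS (hκtS hy))
    exact χ.contDiffAt.mul (((hcf _ hyB.2).comp y (c.smooth y hyB.1)).mul (c.smooth_det hyB.1))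
  have hκd : Continuous (fun y => fderiv ℝ κ y v) :=
    (hκs.continuous_fderiv (by simp)).clm_apply continuous_const
  obtain ⟨A1, hA1⟩ := hBc.exists_bound_of_continuousOn hκs.continuous.continuousOn
  obtain ⟨A2, hA2⟩ := hBc.exists_bound_of_continuousOn hκd.continuousOn
  set A := |A1| + |A2| with hA
  have hA0 : 0 ≤ A := by positivity
  obtain ⟨C, hC, hpull⟩ := c.pullback (μ := volume) hBc hBU
  -- the neighbourhood of `p`
  have hop : IsOpen (c.N ∩ c.inv ⁻¹' ball y0 R) :=
    (ContinuousOn.isOpen_inter_preimage (fun x hx =>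
      (c.smooth_inv x hx).continuousAt.continuousWithinAt) c.hN isOpen_ball)
  obtain ⟨r, hr, hrb⟩ := Metric.isOpen_iff.1 hop p ⟨c.hp, by simp [← hy0, hR]⟩
  refine ⟨r, hr, fun k => (θ k + √(∫ y, (χ y * (uj k (c.Φ y) - u (c.Φ y))) ^ 2)) * (A * C.toReal),
    fun k => ?_, ?_, fun k φ hφ hφc hφr => ?_⟩
  · have := hθ0 k
    positivity
  · have h1 : Tendsto (fun k => √(∫ y, (χ y * (uj k (c.Φ y) - u (c.Φ y))) ^ 2)) atTop (𝓝 √0) :=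
      (Real.continuous_sqrt.tendsto 0).comp hW2
    rw [Real.sqrt_zero] at h1
    simpa using (hθ.add h1).mul_const (A * C.toReal)
  set W : ESp n → ℝ := fun y => χ y * (uj k (c.Φ y) - u (c.Φ y)) with hWd
  set q : ESp n → ℝ := fun y => χ y * φ (c.Φ y) with hq
  have hqtS : tsupport q ⊆ tsupport χ :=
    tsupport_mul_subset_left (f := χ) (g := fun y => φ (c.Φ y))
  have hqc : HasCompactSupport q := χ.hasCompactSupport.mul_right
  have hqs : ContDiff ℝ (⊤ : ℕ∞) q := contDiff_of_tsupport' fun y hy =>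
    χ.contDiffAt.mul (hφ.contDiffAt.comp y (c.smooth y (hBU (hχS (hqtS hy)))))
  have hqB : ∀ y ∉ B, q y = 0 := fun y hy => by simp [hq, hχ0 y hy]
  have hd : ∀ {f : ESp n → ℝ}, ContDiff ℝ (⊤ : ℕ∞) f → ∀ y, DifferentiableAt ℝ f y :=
    fun hf y => hf.differentiable (by simp) y
  have hdc : ∀ {f : ESp n → ℝ}, ContDiff ℝ (⊤ : ℕ∞) f → Continuous (fun y => fderiv ℝ f y v) :=
    fun hf => (hf.continuous_fderiv (by simp)).clm_apply continuous_const
  -- change of variables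
  have step1 : ∫ x, (uj k x - u x) * (cf x * fderiv ℝ φ x (fderiv ℝ c.Φ (c.inv x) v)) =
      ∫ y, ψ y * W y * (κ y * fderiv ℝ q y v) := by
    rw [c.integral_eq (μ := volume)]
    · rw [← setIntegral_eq_integral_of_forall_compl_eq_zero (s := c.U)
        (f := fun y => ψ y * W y * (κ y * fderiv ℝ q y v)) (fun y hy => by
          rw [hψ0 y hy, zero_mul, zero_mul])]
      refine setIntegral_congr_fun c.hU.measurableSet fun y hy => ?_
      rw [c.left_inv y hy]
      by_cases hyt : c.Φ y ∈ tsupport φ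
      · have hyR : y ∈ ball y0 R := by
          have := (hrb (hφr hyt)).2
          rwa [mem_preimage, c.left_inv y hy] at this
        have hψ1 : ψ y = 1 := ψ.one_of_mem_closedBall (ball_subset_closedBall hyR)
        have hχ1 : χ =ᶠ[𝓝 y] fun _ => 1 := by
          filter_upwards [isOpen_ball.mem_nhds hyR] with z hz
          exact χ.one_of_mem_closedBall (closedBall_subset_closedBall
            (by change R ≤ 3 * R; linarith) (ball_subset_closedBall hz))
        have hq1 : q =ᶠ[𝓝 y] fun z => φ (c.Φ z) := by
          filter_upwards [hχ1] with z hz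
          rw [hq]; dsimp only; rw [hz, one_mul]
        have hqd : fderiv ℝ q y v = fderiv ℝ φ (c.Φ y) (fderiv ℝ c.Φ y v) := by
          rw [hq1.fderiv_eq]
          have := ((hd hφ (c.Φ y)).hasFDerivAt.comp y (c.hasFDerivAt hy)).fderiv
          change fderiv ℝ (φ ∘ c.Φ) y v = _
          rw [this]; rfl
        have hχy := hχ1.self_of_nhds
        rw [hqd, hψ1]
        simp only [hWd, hκ]
        rw [hχy]
        ring
      · have h0 : fderiv ℝ φ (c.Φ y) = 0 := fderiv_of_notMem_tsupport ℝ hyt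
        have hq1 : q =ᶠ[𝓝 y] fun _ => 0 := by
          have := (c.smooth y hy).continuousAt.eventually
            ((isClosed_tsupport φ).isOpen_compl.mem_nhds hyt)
          filter_upwards [this] with z hz
          rw [hq]; dsimp only; rw [image_eq_zero_of_notMem_tsupport hz, mul_zero]
        rw [h0, hq1.fderiv_eq]
        simp
    · intro x hx
      have : x ∉ tsupport φ := fun h => hx (hrb (hφr h)).1
      rw [fderiv_of_notMem_tsupport ℝ this]
      simp
  -- the Leibniz rule
  have hWψ : MemLp (fun y => ψ y * W y) 2 volume :=
    memLp_cutoff ψ.continuous (fun _ => ψ.nonneg) (fun _ => ψ.le_one) (hW k)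
  have hleib : ∀ y, fderiv ℝ (fun y => κ y * q y) y v = κ y * fderiv ℝ q y v + q y * fderiv ℝ κ y v :=
    fun y => by
      have h := ((hd hκs y).hasFDerivAt.mul (hd hqs y).hasFDerivAt).fderiv
      change fderiv ℝ (κ * q) y v = _
      rw [h]
      rfl
  have hκq : ContDiff ℝ (⊤ : ℕ∞) (fun y => κ y * q y) := hκs.mul hqs
  have hκqc : HasCompactSupport (fun y => κ y * q y) := hκc.mul_right
  have hqκ : MemLp (fun y => q y * fderiv ℝ κ y v) 2 volume :=
    (hqs.continuous.mul hκd).memLp_of_hasCompactSupport hqc.mul_right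
  have hdκq : MemLp (fun y => fderiv ℝ (fun y => κ y * q y) y v) 2 volume :=
    (hdc hκq).memLp_of_hasCompactSupport (hκqc.fderiv_apply (𝕜 := ℝ) v)
  have step2 : ∫ y, ψ y * W y * (κ y * fderiv ℝ q y v) =
      (∫ y, ψ y * W y * fderiv ℝ (fun y => κ y * q y) y v) -
        ∫ y, ψ y * W y * (q y * fderiv ℝ κ y v) := by
    have i1 : Integrable (fun y => ψ y * W y * fderiv ℝ (fun y => κ y * q y) y v) volume :=
      hWψ.integrable_mul hdκq
    have i2 : Integrable (fun y => ψ y * W y * (q y * fderiv ℝ κ y v)) volume :=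
      hWψ.integrable_mul hqκ
    rw [← integral_sub i1 i2]
    refine integral_congr_ae (ae_of_all _ fun y => ?_)
    dsimp only
    rw [hleib]; ring
  have hq2 : √(∫ y, q y ^ 2) ≤ C.toReal * √(∫ x, φ x ^ 2) := by
    have hqL : MemLp q 2 volume := hqs.continuous.memLp_of_hasCompactSupport hqc
    have hφL : MemLp φ 2 volume := hφ.continuous.memLp_of_hasCompactSupport hφc
    have h1 : eLpNorm q 2 volume ≤ C * eLpNorm φ 2 volume := by
      rw [← eLpNorm_restrict_eq_of_support_subset (s := B) (fun y hy => by
        by_contra h; exact hy (hqB y h))]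
      calc eLpNorm q 2 (volume.restrict B)
          ≤ eLpNorm (fun y => φ (c.Φ y)) 2 (volume.restrict B) := by
            refine eLpNorm_mono fun y => ?_
            rw [hq]; dsimp only
            rw [norm_mul, Real.norm_of_nonneg χ.nonneg]
            exact mul_le_of_le_one_left (norm_nonneg _) χ.le_one
        _ ≤ C * eLpNorm φ 2 (volume.restrict (c.Φ '' B)) :=
            (hpull φ hφ.continuous.aestronglyMeasurable).2
        _ ≤ C * eLpNorm φ 2 volume := by gcongr; exact Measure.restrict_le_self
    rw [eLpNorm_eq_of_integral_sq hqL, eLpNorm_eq_of_integral_sq hφL,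
      ← ENNReal.ofReal_toReal hC, ← ENNReal.ofReal_mul ENNReal.toReal_nonneg] at h1
    exact (ENNReal.ofReal_le_ofReal_iff (by positivity)).1 h1
  have hbq : ∀ m : ESp n → ℝ, (∀ y ∈ B, |m y| ≤ A) → Continuous m →
      √(∫ y, (m y * q y) ^ 2) ≤ A * √(∫ y, q y ^ 2) := fun m hm hmc => by
    rw [← Real.sqrt_sq hA0, ← Real.sqrt_mul (sq_nonneg A), ← integral_const_mul]
    refine Real.sqrt_le_sqrt (integral_mono_of_nonneg (ae_of_all _ fun y => sq_nonneg _)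
      (((hqs.continuous.memLp_of_hasCompactSupport hqc).integrable_sq).const_mul _)
      (ae_of_all _ fun y => ?_))
    dsimp only
    rw [mul_pow]
    by_cases hy : y ∈ B
    · refine mul_le_mul_of_nonneg_right ?_ (sq_nonneg _)
      rw [← sq_abs]
      exact pow_le_pow_left₀ (abs_nonneg _) (hm y hy) 2
    · rw [hqB y hy]; simp
  have hb1 : |∫ y, ψ y * W y * fderiv ℝ (fun y => κ y * q y) y v| ≤
      θ k * (A * (C.toReal * √(∫ x, φ x ^ 2))) := by
    refine (hb k _ (hκq.of_le (by simp)) hκqc).trans (mul_le_mul_of_nonneg_left ?_ (hθ0 k))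
    refine (hbq κ (fun y hy => ?_) hκs.continuous).trans (mul_le_mul_of_nonneg_left hq2 hA0)
    have := (hA1 y hy).trans (le_abs_self _)
    rw [Real.norm_eq_abs] at this
    linarith [abs_nonneg A2]
  have hb2 : |∫ y, ψ y * W y * (q y * fderiv ℝ κ y v)| ≤
      √(∫ y, W y ^ 2) * (A * (C.toReal * √(∫ x, φ x ^ 2))) := by
    have h1 := cauchy_schwarz_integral hWψ hqκ
    have h2 : |∫ y, ψ y * W y * (q y * fderiv ℝ κ y v)| ≤
        √(∫ y, (ψ y * W y) ^ 2) * √(∫ y, (q y * fderiv ℝ κ y v) ^ 2) := by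
      rw [← Real.sqrt_mul (integral_nonneg fun _ => sq_nonneg _)]
      exact Real.abs_le_sqrt h1
    refine h2.trans (mul_le_mul ?_ ?_ (Real.sqrt_nonneg _) (Real.sqrt_nonneg _))
    · refine Real.sqrt_le_sqrt (integral_mono_of_nonneg (ae_of_all _ fun y => sq_nonneg _)
        (hW k).integrable_sq (ae_of_all _ fun y => ?_))
      change (ψ y * W y) ^ 2 ≤ W y ^ 2
      rw [mul_pow]
      exact mul_le_of_le_one_left (sq_nonneg _) (pow_le_one₀ ψ.nonneg ψ.le_one)
    · have := hbq (fun y => fderiv ℝ κ y v) (fun y hy => by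
        have := (hA2 y hy).trans (le_abs_self _)
        rw [Real.norm_eq_abs] at this
        linarith [abs_nonneg A1]) hκd
      simp only [mul_comm (q _)]
      exact this.trans (mul_le_mul_of_nonneg_left hq2 hA0)
  rw [step1, step2]
  refine (abs_sub _ _).trans ((add_le_add hb1 hb2).trans (le_of_eq ?_))
  ring

end ChartX

/-! ### Local estimates for coordinate derivatives -/

section LocalEst

variable {n : ℕ} {M : Set (ESp n)}
variable {S : ACStruct n M} {Ω : Set (ESp n)} {u : ESp n → ℝ} {g : ESp n → ESp n}
  {uj : ℕ → ESp n → ℝ}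

theorem norm_sb (i : Fin (2 * n)) : ‖sb n i‖ = 1 := by
  simp [sb]

theorem eq_sum_sb (x : ESp n) : x = ∑ i, x i • sb n i := by
  ext k
  simp [sb, Finset.sum_apply, Pi.single_apply]

set_option maxHeartbeats 1000000 in
/-- Near every point, the distributional derivatives of `uj k - u` are bounded in `L²` by constants
tending to zero: the coordinate vectors are combined from the vector fields `Φ_* e_i` of `2n` charts,
which form a frame because they are close to the standard basis. -/
theorem DecData.local_est (hM : IsOpen M) (hΩM : Ω ⊆ M) (D : DecData S Ω u g uj) {p : ESp n}
    (hp : p ∈ Ω) :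
    ∃ r > 0, ball p r ⊆ Ω ∧ ∃ θ : ℕ → ℝ, (∀ k, 0 ≤ θ k) ∧ Tendsto θ atTop (𝓝 0) ∧
      ∀ k (φ : ESp n → ℝ), ContDiff ℝ (⊤ : ℕ∞) φ → HasCompactSupport φ → tsupport φ ⊆ ball p r →
        ∀ a, |∫ x, (uj k x - u x) * fderiv ℝ φ x (sb n a)| ≤ θ k * √(∫ x, φ x ^ 2) := by
  -- `2 n η < 1` forces the fields `X i`, `η`-close to the standard basis, to be a frame
  set η : ℝ := 1 / (2 * n + 1) with hη
  have hη0 : 0 < η := by positivity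
  have hsb : ∀ i, sb n i ≠ 0 := fun i => by
    rw [← norm_ne_zero_iff, norm_sb]; exact one_ne_zero
  have hch : ∀ i, Nonempty (HChart S.J M p (sb n i) (S.J p (sb n i)) η) := fun i =>
    exists_chart hM S.smooth S.sq (hΩM hp) (hsb i) hη0
  set c := fun i => (hch i).some with hc
  set X : Fin (2 * n) → ESp n → ESp n := fun i x => fderiv ℝ (c i).Φ ((c i).inv x) (sb n i) with hX
  set N' : Set (ESp n) := Ω ∩ ⋂ i, (c i).N with hN'
  have hN'o : IsOpen N' := D.hΩ.inter (isOpen_iInter_of_finite fun i => (c i).hN)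
  have hpN' : p ∈ N' := ⟨hp, mem_iInter.2 fun i => (c i).hp⟩
  have hXs : ∀ i, ∀ x ∈ N', ContDiffAt ℝ (⊤ : ℕ∞) (X i) x := fun i x hx => by
    have hxN : x ∈ (c i).N := mem_iInter.1 hx.2 i
    have h1 : ContDiffAt ℝ (⊤ : ℕ∞) (fderiv ℝ (c i).Φ) ((c i).inv x) :=
      ((c i).smooth _ ((c i).maps_inv x hxN)).fderiv_right (by simp)
    exact (h1.comp x ((c i).smooth_inv x hxN)).clm_apply contDiffAt_const
  -- the endomorphism sending the standard basis to the frame; the coordinate vectors are recovered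
  -- from its inverse
  set A : ESp n → ESp n →L[ℝ] ESp n := fun x =>
    ∑ i, (EuclideanSpace.proj i : ESp n →L[ℝ] ℝ).smulRight (X i x) with hA
  have hAv : ∀ x y, A x y = ∑ i, y i • X i x := fun x y => by
    rw [hA]; simp [sum_apply]
  have hAs : ∀ x ∈ N', ContDiffAt ℝ (⊤ : ℕ∞) A x := fun x hx => by
    refine ContDiffAt.sum fun i _ => ?_
    exact ((ContinuousLinearMap.smulRightL ℝ (ESp n) (ESp n)
      (EuclideanSpace.proj i)).contDiff.contDiffAt).comp x (hXs i x hx)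
  have hA1 : ∀ x ∈ N', IsUnit (A x) := fun x hx => by
    have h1 : ‖1 - A x‖ < 1 := by
      have : ‖1 - A x‖ ≤ (2 * n) * η := by
        refine ContinuousLinearMap.opNorm_le_bound _ (by positivity) fun y => ?_
        have e : (1 - A x) y = ∑ i, y i • (sb n i - X i x) := by
          rw [sub_apply, hAv]
          simp only [smul_sub, Finset.sum_sub_distrib]
          rw [← eq_sum_sb y]; rfl
        rw [e]
        refine (norm_sum_le _ _).trans ((Finset.sum_le_sum (g := fun _ => ‖y‖ * η)
          fun i _ => ?_).trans (le_of_eq ?_))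
        · rw [norm_smul, norm_sub_rev]
          exact mul_le_mul (PiLp.norm_apply_le y i)
            ((c i).close _ ((c i).maps_inv x (mem_iInter.1 hx.2 i))) (norm_nonneg _) (norm_nonneg _)
        · simp; ring
      refine this.trans_lt ?_
      rw [hη, mul_one_div, div_lt_one (by positivity)]
      linarith
    have := isUnit_one_sub_of_norm_lt_one h1
    simpa using this
  have hIs : ∀ x ∈ N', ContDiffAt ℝ (⊤ : ℕ∞) (fun x => Ring.inverse (A x)) x := fun x hx => by
    obtain ⟨U, hU⟩ := hA1 x hx
    have h1 := contDiffAt_ringInverse (n := (⊤ : ℕ∞)) ℝ U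
    rw [hU] at h1
    exact h1.comp x (hAs x hx)
  set cf : Fin (2 * n) → Fin (2 * n) → ESp n → ℝ := fun i a x =>
    (Ring.inverse (A x) (sb n a)) i with hcf
  have hcfs : ∀ i a, ∀ x ∈ N', ContDiffAt ℝ (⊤ : ℕ∞) (cf i a) x := fun i a x hx =>
    (EuclideanSpace.proj i : ESp n →L[ℝ] ℝ).contDiff.contDiffAt.comp x
      ((hIs x hx).clm_apply contDiffAt_const)
  have hframe : ∀ a, ∀ x ∈ N', sb n a = ∑ i, cf i a x • X i x := fun a x hx => by
    rw [← hAv x (Ring.inverse (A x) (sb n a))]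
    have := Ring.mul_inverse_cancel _ (hA1 x hx)
    have h2 := congrArg (fun L : ESp n →L[ℝ] ESp n => L (sb n a)) this
    exact h2.symm
  have key := fun i a => D.chart_x (c i) hN'o hpN' inter_subset_left (hcfs i a)
  choose r hr θ hθ0 hθ hb using key
  obtain ⟨r0, hr0, hr0b⟩ := Metric.isOpen_iff.1 hN'o p hpN'
  obtain ⟨ρ, hρ, hρ0, hρr⟩ : ∃ ρ > 0, ρ ≤ r0 ∧ ∀ i a, ρ ≤ r i a := by
    have h1 : ∀ᶠ ρ in 𝓝[>] (0:ℝ), ∀ i a, ρ ≤ r i a := by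
      refine eventually_all.2 fun i => eventually_all.2 fun a => ?_
      exact (Ioc_mem_nhdsGT (hr i a)) |> fun h => by
        filter_upwards [h] with ρ hρ using hρ.2
    obtain ⟨ρ, h⟩ := ((h1.and (Ioc_mem_nhdsGT hr0)).and self_mem_nhdsWithin).exists
    exact ⟨ρ, h.2, h.1.2.2, h.1.1⟩
  refine ⟨ρ, hρ, fun x hx => (hr0b (ball_subset_ball hρ0 hx)).1, fun k => ∑ i, ∑ a, θ i a k,
    fun k => Finset.sum_nonneg fun i _ => Finset.sum_nonneg fun a _ => hθ0 i a k, ?_,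
    fun k φ hφ hφc hφr a => ?_⟩
  · have := tendsto_finsetSum Finset.univ fun i (_ : i ∈ Finset.univ) =>
      tendsto_finsetSum Finset.univ fun a (_ : a ∈ Finset.univ) => hθ i a
    simpa using this
  have hφN : tsupport φ ⊆ N' := fun x hx => hr0b (ball_subset_ball hρ0 (hφr hx))
  have hφK : IsCompact (tsupport φ) := hφc
  have hintg : ∀ i, Integrable (fun x => (uj k x - u x) * (cf i a x * fderiv ℝ φ x (X i x))) := by
    intro i
    have hfin : IsFiniteMeasure (volume.restrict (tsupport φ)) :=
      isFiniteMeasure_restrict.2 hφK.measure_lt_top.ne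
    have h1 : IntegrableOn (fun x => uj k x - u x) (tsupport φ) :=
      ((D.memLp_uj k (fun x hx => (hφN hx).1) hφK).sub
        (D.hu _ (fun x hx => (hφN hx).1) hφK)).integrable (by norm_num)
    have h2 : ContinuousOn (fun x => cf i a x * fderiv ℝ φ x (X i x)) (tsupport φ) := fun x hx =>
      ((hcfs i a x (hφN hx)).continuousAt.mul
        ((hφ.continuous_fderiv (by simp)).continuousAt.clm_apply
          (hXs i x (hφN hx)).continuousAt)).continuousWithinAt
    refine (integrableOn_iff_integrable_of_support_subset fun x hx => ?_).1
      (h1.mul_continuousOn h2 hφK)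
    by_contra h
    exact hx (by beta_reduce; rw [fderiv_of_notMem_tsupport ℝ h]; simp)
  have e : ∫ x, (uj k x - u x) * fderiv ℝ φ x (sb n a) =
      ∑ i, ∫ x, (uj k x - u x) * (cf i a x * fderiv ℝ φ x (X i x)) := by
    rw [← integral_finsetSum _ fun i _ => hintg i]
    refine integral_congr_ae (ae_of_all _ fun x => ?_)
    dsimp only
    by_cases hx : x ∈ tsupport φ
    · conv_lhs => rw [hframe a x (hφN hx)]
      rw [map_sum, Finset.mul_sum]
      simp only [map_smul, smul_eq_mul]
    · simp [fderiv_of_notMem_tsupport ℝ hx]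
  rw [e, Finset.sum_mul]
  refine (Finset.abs_sum_le_sum_abs _ _).trans (Finset.sum_le_sum fun i _ => ?_)
  refine (hb i a k φ hφ hφc (hφr.trans (ball_subset_ball (hρr i a)))).trans
    (mul_le_mul_of_nonneg_right ?_ (Real.sqrt_nonneg _))
  exact Finset.single_le_sum (f := fun a => θ i a k) (fun a _ => hθ0 i a k) (Finset.mem_univ a)

end LocalEst

/-! ### Riesz representation and partitions of unity -/

section Riesz

/-- A functional `m` with `|m φ| ≤ C ‖e φ‖` is represented by a vector of norm at most `C`. -/
theorem riesz_abstract {T H : Type} [AddCommGroup T] [Module ℝ T] [NormedAddCommGroup H]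
    [InnerProductSpace ℝ H] [CompleteSpace H] (e : T →ₗ[ℝ] H) (m : T →ₗ[ℝ] ℝ) {C : ℝ}
    (hC : 0 ≤ C) (h : ∀ φ, |m φ| ≤ C * ‖e φ‖) :
    ∃ k : H, ‖k‖ ≤ C ∧ ∀ φ, m φ = inner ℝ k (e φ) := by
  have hker : LinearMap.ker e ≤ LinearMap.ker m := fun φ hφ => by
    rw [LinearMap.mem_ker] at hφ ⊢
    have := h φ
    rw [hφ, norm_zero, mul_zero] at this
    exact abs_eq_zero.1 (le_antisymm this (abs_nonneg _))
  set f : LinearMap.range e →ₗ[ℝ] ℝ :=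
    ((LinearMap.ker e).liftQ m hker).comp e.quotKerEquivRange.symm.toLinearMap with hf
  have hfe : ∀ φ, f ⟨e φ, LinearMap.mem_range_self e φ⟩ = m φ := fun φ => by
    have h1 : e.quotKerEquivRange.symm ⟨e φ, LinearMap.mem_range_self e φ⟩ =
        (LinearMap.ker e).mkQ φ := by
      rw [LinearEquiv.symm_apply_eq]
      ext
      simp
    rw [hf, LinearMap.comp_apply, LinearEquiv.coe_coe, h1]
    simp
  have hfb : ∀ x, ‖f x‖ ≤ C * ‖x‖ := by
    rintro ⟨_, φ, rfl⟩
    rw [hfe]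
    exact h φ
  obtain ⟨F, hF, hFn⟩ := exists_extension_norm_eq (LinearMap.range e) (f.mkContinuous C hfb)
  refine ⟨(InnerProductSpace.toDual ℝ H).symm F, ?_, fun φ => ?_⟩
  · rw [LinearIsometryEquiv.norm_map, hFn]
    exact f.mkContinuous_norm_le hC hfb
  · rw [InnerProductSpace.toDual_symm_apply, ← hfe φ]
    exact (hF ⟨e φ, LinearMap.mem_range_self e φ⟩).symm

variable {V : Type} [NormedAddCommGroup V] [NormedSpace ℝ V] [FiniteDimensional ℝ V] [ProperSpace V]
  [MeasurableSpace V] [BorelSpace V] {μ : Measure V} [μ.IsAddHaarMeasure]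

/-- The space of test functions. -/
def testFns (V : Type) [NormedAddCommGroup V] [NormedSpace ℝ V] : Submodule ℝ (V → ℝ) where
  carrier := {φ | ContDiff ℝ (⊤ : ℕ∞) φ ∧ HasCompactSupport φ}
  add_mem' := fun h1 h2 => ⟨h1.1.add h2.1, h1.2.add h2.2⟩
  zero_mem' := ⟨contDiff_const, HasCompactSupport.zero⟩
  smul_mem' := fun a _φ h => ⟨contDiff_const.smul h.1, h.2.smul_left (f := fun _ => a)⟩

theorem integrable_mul_of_support {f k : V → ℝ} {K : Set V} (hK : IsCompact K)
    (hf : IntegrableOn f K μ) (hk : Continuous k) (h0 : ∀ x ∉ K, k x = 0) :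
    Integrable (fun x => f x * k x) μ := by
  refine (integrableOn_iff_integrable_of_support_subset fun x hx => ?_).1
    (hf.mul_continuousOn hk.continuousOn hK)
  by_contra h
  exact hx (by beta_reduce; rw [h0 x h, mul_zero])

theorem tsupport_mul_left (ρ φ : V → ℝ) : tsupport (fun x => ρ x * φ x) ⊆ tsupport ρ :=
  tsupport_mul_subset_left (f := ρ) (g := φ)

/-- The distribution `φ ↦ ∫ w ∂_e (ρ φ)` is represented by `ρ h` with `h` square integrable, if it
is bounded by the `L²` norm of `ρ φ`. -/
theorem riesz_test {w ρ : V → ℝ} {e : V} {C : ℝ} (hC : 0 ≤ C) (hρ : ContDiff ℝ (⊤ : ℕ∞) ρ)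
    (hρc : HasCompactSupport ρ) (hw : IntegrableOn w (tsupport ρ) μ)
    (hb : ∀ φ : V → ℝ, ContDiff ℝ (⊤ : ℕ∞) φ → HasCompactSupport φ →
      |∫ x, w x * fderiv ℝ (fun x => ρ x * φ x) x e ∂μ| ≤ C * √(∫ x, (ρ x * φ x) ^ 2 ∂μ)) :
    ∃ h : V → ℝ, MemLp h 2 μ ∧ ∫ x, h x ^ 2 ∂μ ≤ C ^ 2 ∧
      ∀ φ : V → ℝ, ContDiff ℝ (⊤ : ℕ∞) φ → HasCompactSupport φ →
        ∫ x, w x * fderiv ℝ (fun x => ρ x * φ x) x e ∂μ = ∫ x, h x * (ρ x * φ x) ∂μ := by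
  have hL : ∀ φ : testFns V, MemLp (fun x => ρ x * φ.1 x) 2 μ := fun φ =>
    (hρ.continuous.mul φ.2.1.continuous).memLp_of_hasCompactSupport hρc.mul_right
  have hintg : ∀ φ : testFns V, Integrable (fun x => w x * fderiv ℝ (fun x => ρ x * φ.1 x) x e) μ :=
    fun φ => integrable_mul_of_support hρc hw
      (((hρ.mul φ.2.1).continuous_fderiv (by simp)).clm_apply continuous_const) fun x hx => by
        rw [fderiv_of_notMem_tsupport ℝ fun h => hx (tsupport_mul_left ρ φ.1 h)]; rfl
  have hdiff : ∀ φ : testFns V, ∀ x, DifferentiableAt ℝ (fun x => ρ x * φ.1 x) x := fun φ x =>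
    (hρ.mul φ.2.1).differentiable (by simp) x
  set E : testFns V →ₗ[ℝ] Lp ℝ 2 μ :=
    { toFun := fun φ => (hL φ).toLp _
      map_add' := fun φ ψ => by
        rw [← MemLp.toLp_add]
        refine MemLp.toLp_congr _ _ (ae_of_all _ fun x => ?_)
        simp [mul_add]
      map_smul' := fun a φ => by
        rw [RingHom.id_apply, ← MemLp.toLp_const_smul]
        refine MemLp.toLp_congr _ _ (ae_of_all _ fun x => ?_)
        simp [mul_left_comm] } with hE
  set m : testFns V →ₗ[ℝ] ℝ :=
    { toFun := fun φ => ∫ x, w x * fderiv ℝ (fun x => ρ x * φ.1 x) x e ∂μ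
      map_add' := fun φ ψ => by
        rw [← integral_add (hintg φ) (hintg ψ)]
        refine integral_congr_ae (ae_of_all _ fun x => ?_)
        have e1 : (fun x => ρ x * (φ + ψ).1 x) =
            (fun x => ρ x * φ.1 x) + fun x => ρ x * ψ.1 x := by
          ext x; simp [mul_add]
        dsimp only
        rw [e1, fderiv_add (hdiff φ x) (hdiff ψ x), add_apply, mul_add]
      map_smul' := fun a φ => by
        rw [RingHom.id_apply, smul_eq_mul, ← integral_const_mul]
        refine integral_congr_ae (ae_of_all _ fun x => ?_)
        have e1 : (fun x => ρ x * (a • φ).1 x) = a • (fun x => ρ x * φ.1 x) := by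
          ext x; simp [mul_left_comm]
        dsimp only
        rw [e1, fderiv_const_smul (hdiff φ x), smul_apply, smul_eq_mul]
        ring } with hm
  obtain ⟨k, hk, hkm⟩ := riesz_abstract E m hC fun φ => by
    have : ‖E φ‖ = √(∫ x, (ρ x * φ.1 x) ^ 2 ∂μ) := by
      change ‖(hL φ).toLp _‖ = _
      rw [Lp.norm_toLp, eLpNorm_eq_of_integral_sq (hL φ), ENNReal.toReal_ofReal (Real.sqrt_nonneg _)]
    rw [this]
    exact hb φ.1 φ.2.1 φ.2.2
  refine ⟨k, Lp.memLp k, ?_, fun φ h1 h2 => ?_⟩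
  · refine integral_sq_le_of_eLpNorm hC (Lp.memLp k) ?_
    rw [Lp.norm_def] at hk
    exact (ENNReal.le_ofReal_iff_toReal_le (Lp.memLp k).2.ne hC).2 hk
  · refine (hkm ⟨φ, h1, h2⟩).trans ?_
    rw [L2.inner_def]
    refine integral_congr_ae ?_
    have := MemLp.coeFn_toLp (hL ⟨φ, h1, h2⟩)
    filter_upwards [this] with x hx
    change inner ℝ (k x) (((hL ⟨φ, h1, h2⟩).toLp _) x) = _
    rw [hx]
    simp [mul_comm]

end Riesz

section Partition

/-- The partition of unity built from the bump functions `β i`. -/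
def pou {V : Type} (β : ℕ → V → ℝ) (i : ℕ) (x : V) : ℝ :=
  β i x * ∏ k ∈ Finset.range i, (1 - β k x)

variable {V : Type} {β : ℕ → V → ℝ}

theorem pou_sum (N : ℕ) (x : V) :
    ∑ i ∈ Finset.range N, pou β i x = 1 - ∏ k ∈ Finset.range N, (1 - β k x) := by
  induction N with
  | zero => simp
  | succ N ih => rw [Finset.sum_range_succ, ih, Finset.prod_range_succ, pou]; ring

theorem pou_sum_eq_one {N k : ℕ} {x : V} (hk : k < N) (hx : β k x = 1) :
    ∑ i ∈ Finset.range N, pou β i x = 1 := by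
  rw [pou_sum, Finset.prod_eq_zero (Finset.mem_range.2 hk) (by rw [hx, sub_self]), sub_zero]

theorem pou_eq_zero {i k : ℕ} {x : V} (hk : k < i) (hx : β k x = 1) : pou β i x = 0 := by
  rw [pou, Finset.prod_eq_zero (Finset.mem_range.2 hk) (by rw [hx, sub_self]), mul_zero]

theorem pou_nonneg (h0 : ∀ i x, 0 ≤ β i x) (h1 : ∀ i x, β i x ≤ 1) (i : ℕ) (x : V) :
    0 ≤ pou β i x :=
  mul_nonneg (h0 i x) (Finset.prod_nonneg fun k _ => sub_nonneg.2 (h1 k x))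

theorem pou_le_one (h0 : ∀ i x, 0 ≤ β i x) (h1 : ∀ i x, β i x ≤ 1) (i : ℕ) (x : V) :
    pou β i x ≤ 1 :=
  mul_le_one₀ (h1 i x) (Finset.prod_nonneg fun k _ => sub_nonneg.2 (h1 k x))
    (Finset.prod_le_one (fun k _ => sub_nonneg.2 (h1 k x)) fun k _ => by linarith [h0 k x])

theorem pou_contDiff [NormedAddCommGroup V] [NormedSpace ℝ V]
    (h : ∀ i, ContDiff ℝ (⊤ : ℕ∞) (β i)) (i : ℕ) : ContDiff ℝ (⊤ : ℕ∞) (pou β i) :=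
  (h i).mul (contDiff_prod fun k _ => contDiff_const.sub (h k))

end Partition

/-! ### Gluing -/

section Glue

variable {V : Type} [NormedAddCommGroup V] [NormedSpace ℝ V] [FiniteDimensional ℝ V] [ProperSpace V]
  [MeasurableSpace V] [BorelSpace V] {μ : Measure V} [μ.IsAddHaarMeasure]

theorem tsupport_pou (β : ℕ → V → ℝ) (i : ℕ) : tsupport (pou β i) ⊆ tsupport (β i) :=
  tsupport_mul_left (β i) _

/-- Local bounds for the distributional derivative `∂_e w` on the supports of the `β i` glue, by
the partition of unity `pou β`, to a locally square integrable representative of `∂_e w`. -/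
theorem glue {β : ℕ → V → ℝ} {Ω : Set V} (h0 : ∀ i x, 0 ≤ β i x) (h1 : ∀ i x, β i x ≤ 1)
    (hβ : ∀ i, ContDiff ℝ (⊤ : ℕ∞) (β i)) (hβc : ∀ i, HasCompactSupport (β i))
    (hβΩ : ∀ i, tsupport (β i) ⊆ Ω)
    (hcov : ∀ K ⊆ Ω, IsCompact K → ∃ N, ∀ x ∈ K, ∃ k < N, β k x = 1)
    {w : V → ℝ} {e : V} (hw : ∀ K ⊆ Ω, IsCompact K → IntegrableOn w K μ)
    {C : ℕ → ℝ} (hC : ∀ i, 0 ≤ C i)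
    (hb : ∀ i, ∀ φ : V → ℝ, ContDiff ℝ (⊤ : ℕ∞) φ → HasCompactSupport φ →
      tsupport φ ⊆ tsupport (β i) →
      |∫ x, w x * fderiv ℝ φ x e ∂μ| ≤ C i * √(∫ x, φ x ^ 2 ∂μ)) :
    ∃ h : V → ℝ,
      (∀ K N, IsCompact K → (∀ x ∈ K, ∃ k < N, β k x = 1) →
        MemLp h 2 (μ.restrict K) ∧
        ∫ x in K, h x ^ 2 ∂μ ≤ N * ∑ i ∈ Finset.range N, C i ^ 2) ∧
      ∀ φ : V → ℝ, ContDiff ℝ (⊤ : ℕ∞) φ → HasCompactSupport φ → tsupport φ ⊆ Ω →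
        ∫ x, w x * fderiv ℝ φ x e ∂μ = -∫ x, φ x * h x ∂μ := by
  have hs := pou_contDiff hβ
  have hpc : ∀ i, HasCompactSupport (pou β i) := fun i =>
    (hβc i).of_isClosed_subset (isClosed_tsupport _) (tsupport_pou β i)
  choose ht hL hI hE using fun i => riesz_test (μ := μ) (w := w) (e := e) (hC i) (hs i) (hpc i)
    ((hw _ (hβΩ i) (hβc i)).mono_set (tsupport_pou β i)) fun φ hφ hφc =>
      hb i _ ((hs i).mul hφ) hφc.mul_left
        ((tsupport_mul_left _ _).trans (tsupport_pou β i))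
  have hL' : ∀ i, MemLp (fun x => pou β i x * ht i x) 2 μ := fun i =>
    (hL i).mono ((hs i).continuous.aestronglyMeasurable.mul (hL i).1) (ae_of_all _ fun x => by
      rw [norm_mul, Real.norm_of_nonneg (pou_nonneg h0 h1 i x)]
      exact mul_le_of_le_one_left (norm_nonneg _) (pou_le_one h0 h1 i x))
  have hsum : ∀ N x, (∃ k < N, β k x = 1) →
      ∑' i, pou β i x * ht i x = ∑ i ∈ Finset.range N, pou β i x * ht i x := by
    rintro N x ⟨k, hk, hx⟩
    refine tsum_eq_sum fun i hi => ?_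
    rw [pou_eq_zero (lt_of_lt_of_le hk (not_lt.1 fun h => hi (Finset.mem_range.2 h))) hx, zero_mul]
  refine ⟨fun x => -∑' i, pou β i x * ht i x, fun K N hK hN => ?_, fun φ hφ hφc hφΩ => ?_⟩
  · have hae : (fun x => -∑ i ∈ Finset.range N, pou β i x * ht i x) =ᵐ[μ.restrict K]
        fun x => -∑' i, pou β i x * ht i x := by
      filter_upwards [ae_restrict_mem hK.measurableSet] with x hx
      rw [hsum N x (hN x hx)]
    have hm : MemLp (fun x => -∑ i ∈ Finset.range N, pou β i x * ht i x) 2 μ :=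
      (memLp_finsetSum _ fun i _ => hL' i).neg
    have hm' := (memLp_congr_ae hae).1 (hm.restrict K)
    refine ⟨hm', ?_⟩
    have hq : Integrable (fun x => (N : ℝ) * ∑ i ∈ Finset.range N, ht i x ^ 2) μ :=
      (integrable_finsetSum _ fun i _ => (hL i).integrable_sq).const_mul _
    calc ∫ x in K, (-∑' i, pou β i x * ht i x) ^ 2 ∂μ
        ≤ ∫ x in K, (N : ℝ) * ∑ i ∈ Finset.range N, ht i x ^ 2 ∂μ := by
          refine integral_mono_ae hm'.integrable_sq hq.integrableOn ?_
          filter_upwards [ae_restrict_mem hK.measurableSet] with x hx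
          rw [hsum N x (hN x hx), neg_sq]
          refine sq_sum_le_card_mul_sum_sq.trans ?_
          rw [Finset.card_range]
          refine mul_le_mul_of_nonneg_left (Finset.sum_le_sum fun i _ => ?_) (Nat.cast_nonneg _)
          rw [mul_pow]
          exact mul_le_of_le_one_left (sq_nonneg _)
            (pow_le_one₀ (pou_nonneg h0 h1 i x) (pou_le_one h0 h1 i x))
      _ ≤ ∫ x, (N : ℝ) * ∑ i ∈ Finset.range N, ht i x ^ 2 ∂μ :=
          setIntegral_le_integral hq (ae_of_all _ fun x => by positivity)
      _ = N * ∑ i ∈ Finset.range N, ∫ x, ht i x ^ 2 ∂μ := by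
          rw [integral_const_mul, integral_finsetSum _ fun i _ => (hL i).integrable_sq]
      _ ≤ _ := mul_le_mul_of_nonneg_left (Finset.sum_le_sum fun i _ => hI i) (Nat.cast_nonneg _)
  · obtain ⟨N, hN⟩ := hcov _ hφΩ hφc
    have hφs : φ = fun x => ∑ i ∈ Finset.range N, pou β i x * φ x := by
      ext x
      by_cases hx : x ∈ tsupport φ
      · obtain ⟨k, hk, hk1⟩ := hN x hx
        rw [← Finset.sum_mul, pou_sum_eq_one hk hk1, one_mul]
      · simp [image_eq_zero_of_notMem_tsupport hx]
    have hd : ∀ x, fderiv ℝ φ x e =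
        ∑ i ∈ Finset.range N, fderiv ℝ (fun x => pou β i x * φ x) x e := fun x => by
      conv_lhs => rw [hφs]
      rw [fderiv_fun_sum fun i _ => ((hs i).mul hφ).differentiable (by simp) x, sum_apply]
    have hintg : ∀ i, Integrable (fun x => w x * fderiv ℝ (fun x => pou β i x * φ x) x e) μ :=
      fun i => integrable_mul_of_support hφc (hw _ hφΩ hφc)
        ((((hs i).mul hφ).continuous_fderiv (by simp)).clm_apply continuous_const) fun x hx => by
          rw [fderiv_of_notMem_tsupport ℝ fun h => hx
            (tsupport_mul_subset_right (f := pou β i) (g := φ) h)]; rfl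
    have hφL : MemLp φ 2 μ := hφ.continuous.memLp_of_hasCompactSupport hφc
    have hint2 : ∀ i, Integrable (fun x => ht i x * (pou β i x * φ x)) μ := fun i => by
      have h : Integrable (fun x => (pou β i x * ht i x) * φ x) μ := (hL' i).integrable_mul hφL
      refine h.congr (ae_of_all _ fun x => ?_)
      ring
    calc ∫ x, w x * fderiv ℝ φ x e ∂μ
        = ∑ i ∈ Finset.range N, ∫ x, w x * fderiv ℝ (fun x => pou β i x * φ x) x e ∂μ := by
          rw [← integral_finsetSum _ fun i _ => hintg i]
          refine integral_congr_ae (ae_of_all _ fun x => ?_)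
          beta_reduce
          rw [hd, Finset.mul_sum]
      _ = ∑ i ∈ Finset.range N, ∫ x, ht i x * (pou β i x * φ x) ∂μ :=
          Finset.sum_congr rfl fun i _ => hE i φ hφ hφc
      _ = -∫ x, φ x * -∑' i, pou β i x * ht i x ∂μ := by
          rw [← integral_finsetSum _ fun i _ => hint2 i, ← integral_neg]
          refine integral_congr_ae (ae_of_all _ fun x => ?_)
          beta_reduce
          by_cases hx : x ∈ tsupport φ
          · rw [hsum N x (hN x hx), mul_neg, neg_neg, Finset.mul_sum]
            exact Finset.sum_congr rfl fun i _ => by ring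
          · simp [image_eq_zero_of_notMem_tsupport hx]

end Glue

section Cover

/-- An open set is covered by the plateaus of a sequence of bump functions whose supports lie in
prescribed balls. -/
theorem exists_bumps {V : Type} [NormedAddCommGroup V] [InnerProductSpace ℝ V]
    [FiniteDimensional ℝ V] {Ω : Set V} (hne : Ω.Nonempty) {r : V → ℝ}
    (hr : ∀ p ∈ Ω, 0 < r p) :
    ∃ (q : ℕ → V) (β : ℕ → V → ℝ), (∀ i, q i ∈ Ω) ∧ (∀ i x, 0 ≤ β i x) ∧ (∀ i x, β i x ≤ 1) ∧
      (∀ i, ContDiff ℝ (⊤ : ℕ∞) (β i)) ∧ (∀ i, HasCompactSupport (β i)) ∧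
      (∀ i, tsupport (β i) ⊆ ball (q i) (r (q i))) ∧
      ∀ K ⊆ Ω, IsCompact K → ∃ N, ∀ x ∈ K, ∃ k < N, β k x = 1 := by
  obtain ⟨t, htΩ, htc, ht⟩ := TopologicalSpace.countable_cover_nhdsWithin
    (f := fun p => ball p (r p / 3)) (s := Ω) fun p hp =>
      mem_nhdsWithin_of_mem_nhds (ball_mem_nhds p (by linarith [hr p hp]))
  have htne : t.Nonempty := by
    obtain ⟨x, hx⟩ := hne
    obtain ⟨p, hp, -⟩ := mem_iUnion₂.1 (ht hx)
    exact ⟨p, hp⟩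
  obtain ⟨q, rfl⟩ := htc.exists_eq_range htne
  have hq : ∀ i, q i ∈ Ω := fun i => htΩ (mem_range_self i)
  have hq' : ∀ i, 0 < r (q i) := fun i => hr _ (hq i)
  let b : ∀ i, ContDiffBump (q i) := fun i =>
    ⟨r (q i) / 3, r (q i) / 2, by linarith [hq' i], by linarith [hq' i]⟩
  refine ⟨q, fun i => b i, hq, fun i x => (b i).nonneg, fun i x => (b i).le_one,
    fun i => (b i).contDiff, fun i => (b i).hasCompactSupport, fun i => ?_, fun K hK hKc => ?_⟩
  · rw [(b i).tsupport_eq]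
    exact closedBall_subset_ball (by change r (q i) / 2 < _; linarith [hq' i])
  · obtain ⟨s, hs⟩ := hKc.elim_finite_subcover (fun i => ball (q i) (r (q i) / 3))
      (fun i => isOpen_ball) fun x hx => by
        obtain ⟨_, ⟨i, rfl⟩, hi⟩ := mem_iUnion₂.1 (ht (hK hx))
        exact mem_iUnion.2 ⟨i, hi⟩
    obtain ⟨N, hN⟩ := s.exists_nat_subset_range
    refine ⟨N, fun x hx => ?_⟩
    obtain ⟨i, hi, hxi⟩ := mem_iUnion₂.1 (hs hx)
    exact ⟨i, Finset.mem_range.1 (hN hi), (b i).one_of_mem_closedBall (ball_subset_closedBall hxi)⟩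

end Cover

/-! ### Convergence -/

section Final

variable {n : ℕ} {M : Set (ESp n)}

/-- The hypotheses of the convergence theorem provide the data `DecData`. Of the plurisubharmonicity
of `u` only upper semicontinuity is retained. -/
theorem decData_of_memW12loc {S : ACStruct n M} {Ω : Set (ESp n)} (hΩ : IsOpen Ω)
    {u : ESp n → ℝ} (hu : JPsh S Ω u) {g : ESp n → ESp n} (hg : HasWeakGradOn u g Ω)
    (hK : ∀ K : Set (ESp n), K ⊆ Ω → IsCompact K →
      IntegrableOn (fun x => (u x) ^ 2 + ‖g x‖ ^ 2) K volume)
    {uj : ℕ → ESp n → ℝ} (hj : ∀ j, JPsh S Ω (uj j))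
    (hdec : ∀ x ∈ Ω, ∀ j k : ℕ, j ≤ k → uj k x ≤ uj j x)
    (hlim : ∀ x ∈ Ω, Tendsto (fun j => uj j x) atTop (𝓝 (u x))) :
    DecData S Ω u g uj where
  hΩ := hΩ
  usc := hu.1
  weak := hg
  hu := fun K hKΩ hKc => by
    have hm : AEStronglyMeasurable u (volume.restrict K) :=
      (hg.1.integrableOn_compact_subset hKΩ hKc).1
    refine (memLp_two_iff_integrable_sq hm).2 ((hK K hKΩ hKc).mono' (hm.pow 2)
      (ae_of_all _ fun x => ?_))
    rw [Real.norm_of_nonneg (sq_nonneg _)]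
    exact le_add_of_nonneg_right (sq_nonneg _)
  hg := fun K hKΩ hKc i => by
    have hm : AEStronglyMeasurable (fun x => g x i) (volume.restrict K) :=
      (EuclideanSpace.proj (𝕜 := ℝ) i).continuous.comp_aestronglyMeasurable
        (hg.2.1.integrableOn_compact_subset hKΩ hKc).1
    refine (memLp_two_iff_integrable_sq hm).2 ((hK K hKΩ hKc).mono' (hm.pow 2)
      (ae_of_all _ fun x => ?_))
    rw [Real.norm_of_nonneg (sq_nonneg _), ← sq_abs, ← Real.norm_eq_abs]
    exact le_add_of_nonneg_of_le (sq_nonneg _)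
      (pow_le_pow_left₀ (norm_nonneg _) (PiLp.norm_apply_le (g x) i) 2)
  psh := hj
  dec := fun x hx k => hdec x hx 0 k (Nat.zero_le k)
  ge := fun x hx k => le_of_tendsto' (f := fun j => uj (j + k) x) (x := atTop)
    ((tendsto_add_atTop_iff_nat k).2 (hlim x hx)) fun j => by
      exact hdec x hx k (j + k) (Nat.le_add_left k j)
  lim := hlim

variable {S : ACStruct n M} {Ω : Set (ESp n)} {u : ESp n → ℝ} {g : ESp n → ESp n}
  {uj : ℕ → ESp n → ℝ}

theorem DecData.memLp_sub (D : DecData S Ω u g uj) (k : ℕ) {K : Set (ESp n)} (hK : K ⊆ Ω)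
    (hKc : IsCompact K) : MemLp (fun x => uj k x - u x) 2 (volume.restrict K) :=
  (D.memLp_uj k hK hKc).sub (D.hu K hK hKc)

/-- The convergence `uj k → u` in `L²` on compact sets. -/
theorem DecData.tendsto_sq (D : DecData S Ω u g uj) {K : Set (ESp n)} (hK : K ⊆ Ω)
    (hKc : IsCompact K) : Tendsto (fun k => ∫ x in K, (uj k x - u x) ^ 2) atTop (𝓝 0) := by
  have hL : ∀ k, MemLp (K.indicator fun x => uj k x - u x) 2 volume := fun k =>
    (memLp_indicator_iff_restrict hKc.measurableSet).2 (D.memLp_sub k hK hKc)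
  have h := tendsto_integral_sq_of_decreasing (ν := volume)
    (W := fun k => K.indicator fun x => uj k x - u x) hL
    (fun k y => indicator_nonneg (fun x hx => sub_nonneg.2 (D.ge x (hK hx) k)) y)
    (fun k y => indicator_le_indicator' fun hy => by linarith [D.dec y (hK hy) k])
    (fun y => by
      by_cases hy : y ∈ K
      · simp only [indicator_of_mem hy]
        simpa using (D.lim y (hK hy)).sub_const (u y)
      · simp only [indicator_of_notMem hy]
        exact tendsto_const_nhds)
  refine h.congr fun k => ?_
  rw [← integral_indicator hKc.measurableSet]
  refine integral_congr_ae (ae_of_all _ fun x => ?_)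
  by_cases hx : x ∈ K <;> simp [hx]

/-- The differences `uj k - u` have weak partial derivatives `h k a`, which tend to `0` in `L²` on
compact sets. -/
theorem DecData.exists_deriv (hM : IsOpen M) (hΩM : Ω ⊆ M) (D : DecData S Ω u g uj) :
    ∃ h : ℕ → Fin (2 * n) → ESp n → ℝ,
      (∀ K ⊆ Ω, IsCompact K → ∀ k a, MemLp (h k a) 2 (volume.restrict K)) ∧
      (∀ K ⊆ Ω, IsCompact K → ∀ a, Tendsto (fun k => ∫ x in K, h k a x ^ 2) atTop (𝓝 0)) ∧
      ∀ k a, ∀ φ : ESp n → ℝ, ContDiff ℝ (⊤ : ℕ∞) φ → HasCompactSupport φ → tsupport φ ⊆ Ω →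
        ∫ x, (uj k x - u x) * fderiv ℝ φ x (sb n a) = -∫ x, φ x * h k a x := by
  rcases Ω.eq_empty_or_nonempty with rfl | hne
  · refine ⟨fun _ _ _ => 0, fun K hK _ k a => ?_, fun K hK _ a => by simp,
      fun k a φ _ _ hφ => ?_⟩
    · exact MemLp.zero
    · have hφ0 : φ = fun _ => 0 := by
        ext x
        exact image_eq_zero_of_notMem_tsupport fun hx => hφ hx
      simp [hφ0]
  have hloc : ∀ p : ESp n, ∃ (r : ℝ) (θ : ℕ → ℝ), p ∈ Ω → 0 < r ∧ ball p r ⊆ Ω ∧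
      (∀ k, 0 ≤ θ k) ∧ Tendsto θ atTop (𝓝 0) ∧ ∀ k φ, ContDiff ℝ (⊤ : ℕ∞) φ →
        HasCompactSupport φ → tsupport φ ⊆ ball p r → ∀ a,
        |∫ x, (uj k x - u x) * fderiv ℝ φ x (sb n a)| ≤ θ k * √(∫ x, φ x ^ 2) := fun p => by
    by_cases hp : p ∈ Ω
    · obtain ⟨r, hr, hb, θ, h1, h2, h3⟩ := D.local_est hM hΩM hp
      exact ⟨r, θ, fun _ => ⟨hr, hb, h1, h2, h3⟩⟩
    · exact ⟨0, 0, fun h => absurd h hp⟩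
  choose r θ H using hloc
  obtain ⟨q, β, hq, h0, h1, hβ, hβc, hβb, hcov⟩ := exists_bumps hne fun p hp => (H p hp).1
  choose h hh1 hh2 using fun k a => glue (μ := volume) (Ω := Ω) (e := sb n a)
    (w := fun x => uj k x - u x) (C := fun i => θ (q i) k) h0 h1 hβ hβc
    (fun i => (hβb i).trans (H _ (hq i)).2.1) hcov
    (fun K hK hKc => by
      have hfin : IsFiniteMeasure (volume.restrict K) :=
        isFiniteMeasure_restrict.2 hKc.measure_lt_top.ne
      exact (D.memLp_sub k hK hKc).integrable (by norm_num))
    (fun i => (H _ (hq i)).2.2.1 k)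
    (fun i φ hφ hφc hφs => (H _ (hq i)).2.2.2.2 k φ hφ hφc (hφs.trans (hβb i)) a)
  refine ⟨h, fun K hK hKc k a => ?_, fun K hK hKc a => ?_, hh2⟩
  · obtain ⟨N, hN⟩ := hcov K hK hKc
    exact (hh1 k a K N hKc hN).1
  · obtain ⟨N, hN⟩ := hcov K hK hKc
    have hlim : Tendsto (fun k => (N : ℝ) * ∑ i ∈ Finset.range N, θ (q i) k ^ 2) atTop (𝓝 0) := by
      have := (tendsto_finsetSum (Finset.range N) fun i _ =>
        ((H _ (hq i)).2.2.2.1).pow 2).const_mul (N : ℝ)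
      simpa using this
    exact squeeze_zero (fun k => integral_nonneg fun x => sq_nonneg _)
      (fun k => (hh1 k a K N hKc hN).2) hlim

end Final

/-- **Proposition (ii).** If `u ∈ PSH ∩ W^{1,2}_loc(Ω)` and a sequence `u_j` of
`J`-plurisubharmonic functions decreases pointwise to `u` on `Ω`, then `u_j → u`
in `W^{1,2}_loc(Ω)`. -/
theorem psh_decreasing_w12loc_convergence
    {n : ℕ} {M : Set (ESp n)} (hM : IsOpen M) (S : ACStruct n M)
    (Ω : Set (ESp n)) (hΩ : IsOpen Ω) (hΩM : Ω ⊆ M)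
    (u : ESp n → ℝ) (hu : JPsh S Ω u) (huW : MemW12loc u Ω)
    (uj : ℕ → ESp n → ℝ) (hj : ∀ j, JPsh S Ω (uj j))
    (hdec : ∀ x ∈ Ω, ∀ j k : ℕ, j ≤ k → uj k x ≤ uj j x)
    (hlim : ∀ x ∈ Ω, Filter.Tendsto (fun j => uj j x) Filter.atTop (nhds (u x))) :
    ∃ g : ESp n → ESp n, HasWeakGradOn u g Ω ∧
      ∃ G : ℕ → ESp n → ESp n, (∀ j, HasWeakGradOn (uj j) (G j) Ω) ∧
        ∀ K : Set (ESp n), K ⊆ Ω → IsCompact K →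
          Filter.Tendsto
            (fun j => ∫ x in K, ((uj j x - u x) ^ 2 + ‖G j x - g x‖ ^ 2))
            Filter.atTop (nhds 0) := by
  obtain ⟨g, hg, hgK⟩ := huW
  have D := decData_of_memW12loc hΩ hu hg hgK hj hdec hlim
  obtain ⟨h, hh1, hh2, hh3⟩ := D.exists_deriv hM hΩM
  have hfin : ∀ K : Set (ESp n), IsCompact K → IsFiniteMeasure (volume.restrict K) := fun K hK =>
    isFiniteMeasure_restrict.2 hK.measure_lt_top.ne
  refine ⟨g, hg, fun k x => g x + ∑ a, h k a x • sb n a, fun k => ⟨?_, ?_, ?_⟩, fun K hK hKc => ?_⟩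
  · refine (locallyIntegrableOn_iff hΩ.isLocallyClosed).2 fun K hK hKc => ?_
    have := hfin K hKc
    exact (D.memLp_uj k hK hKc).integrable (by norm_num)
  · refine (locallyIntegrableOn_iff hΩ.isLocallyClosed).2 fun K hK hKc => ?_
    have := hfin K hKc
    exact (hg.2.1.integrableOn_compact_subset hK hKc).add (integrable_finsetSum _ fun a _ =>
      ((hh1 K hK hKc k a).integrable (by norm_num)).smul_const (sb n a))
  · intro φ hφ hφc hφΩ i
    have hφ0 : ∀ x ∉ tsupport φ, φ x = 0 := fun x hx => image_eq_zero_of_notMem_tsupport hx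
    have hdφ0 : ∀ x ∉ tsupport φ, fderiv ℝ φ x (sb n i) = 0 := fun x hx => by
      rw [fderiv_of_notMem_tsupport ℝ hx]; rfl
    have hdc : Continuous fun x => fderiv ℝ φ x (sb n i) :=
      (hφ.continuous_fderiv (by simp)).clm_apply continuous_const
    have := hfin _ hφc
    have i1 : Integrable (fun x => u x * fderiv ℝ φ x (sb n i)) := integrable_mul_of_support hφc
      ((D.hu _ hφΩ hφc).integrable (by norm_num)) hdc hdφ0
    have i2 : Integrable (fun x => (uj k x - u x) * fderiv ℝ φ x (sb n i)) :=
      integrable_mul_of_support hφc ((D.memLp_sub k hφΩ hφc).integrable (by norm_num)) hdc hdφ0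
    have i3 : Integrable (fun x => g x i * φ x) := integrable_mul_of_support hφc
      ((D.hg _ hφΩ hφc i).integrable (by norm_num)) hφ.continuous hφ0
    have i4 : Integrable (fun x => h k i x * φ x) := integrable_mul_of_support hφc
      ((hh1 _ hφΩ hφc k i).integrable (by norm_num)) hφ.continuous hφ0
    have e1 := hg.2.2 φ hφ hφc hφΩ i
    have e2 := hh3 k i φ hφ hφc hφΩ
    have s1 : ∀ F : ESp n → ℝ, ∫ x in Ω, F x * fderiv ℝ φ x (sb n i) =
        ∫ x, F x * fderiv ℝ φ x (sb n i) := fun F =>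
      setIntegral_eq_integral_of_forall_compl_eq_zero fun x hx => by
        rw [hdφ0 x fun h' => hx (hφΩ h'), mul_zero]
    have s2 : ∀ F : ESp n → ℝ, ∫ x in Ω, φ x * F x = ∫ x, φ x * F x := fun F =>
      setIntegral_eq_integral_of_forall_compl_eq_zero fun x hx => by
        rw [hφ0 x fun h' => hx (hφΩ h'), zero_mul]
    have hc : ∀ x, (g x + ∑ a, h k a x • sb n a) i = g x i + h k i x := fun x => by
      simp [sb, Pi.single_apply]
    rw [s1, s2] at e1
    simp only [hc]
    rw [s1, s2 (fun x => g x i + h k i x)]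
    have e3 : ∫ x, uj k x * fderiv ℝ φ x (sb n i) = (∫ x, u x * fderiv ℝ φ x (sb n i)) +
        ∫ x, (uj k x - u x) * fderiv ℝ φ x (sb n i) := by
      rw [← integral_add i1 i2]
      refine integral_congr_ae (ae_of_all _ fun x => ?_)
      ring
    have e4 : ∫ x, φ x * (g x i + h k i x) = (∫ x, φ x * g x i) + ∫ x, φ x * h k i x := by
      simp only [mul_comm (φ _)]
      rw [← integral_add i3 i4]
      refine integral_congr_ae (ae_of_all _ fun x => ?_)
      ring
    rw [e3, e4, e1, e2]
    ring
  · have hn : ∀ k x, ‖g x + ∑ a, h k a x • sb n a - g x‖ ^ 2 = ∑ a, h k a x ^ 2 := fun k x => by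
      rw [add_sub_cancel_left, EuclideanSpace.norm_sq_eq]
      refine Finset.sum_congr rfl fun i _ => ?_
      simp [sb, Pi.single_apply]
    have ht := (D.tendsto_sq hK hKc).add (tendsto_finsetSum Finset.univ fun a _ => hh2 K hK hKc a)
    rw [Finset.sum_const_zero, add_zero] at ht
    refine ht.congr fun k => ?_
    simp only [hn]
    rw [integral_add (D.memLp_sub k hK hKc).integrable_sq
      (integrable_finsetSum _ fun a _ => (hh1 K hK hKc k a).integrable_sq),
      integral_finsetSum _ fun a _ => (hh1 K hK hKc k a).integrable_sq]
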